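/- Let 𝔹^n ⊂ ℂ^n (n ≥ 2) be the open unit ball and let f be a function on the unit sphere ∂𝔹^n that is the restriction of a function real-analytic on a neighborhood of ∂𝔹^n. Let z₀ and w₀ be two distinct points of 𝔹^n. Suppose that for every complex affine line L passing through z₀, and for every complex affine line L passing through w₀, f extends holomorphically along L: there exists g continuous on the closure of L ∩ 𝔹^n, holomorphic on L ∩ 𝔹^n, with g = f on L ∩ ∂𝔹^n. Then f extends holomorphically to 𝔹^n: there exists F continuous on the closed unit ball, holomorphic on 𝔹^n, with F = f on ∂𝔹^n. -/

import Mathlib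

/-! An automorphism of the ball exchanging `z₀` and `0` maps complex lines to complex lines, so it may be
assumed that the two points are `0` and `b e` with `‖e‖ = 1` and `0 < b < 1` (`extLine_aut`,
`ball_extension_general`).

Extension along the lines through `0` says exactly that the Fourier coefficients of
`θ ↦ f (e^{iθ} v)` with negative index vanish (`fc_neg_of_ext`). It remains to see that the `j`-th
coefficient, as a function of `v` in the sphere, is the restriction of a holomorphic polynomial
homogeneous of degree `j`. In a plane spanned by `e` and a unit vector `u ⊥ e`, the sphere is
parametrised by `e^{iθ} (1, ξ) / √(1 + |ξ|²)`. Let `wc J (Om h m) x` be the `J`-th Fourier coefficient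
in `θ`, and the `m`-th one in the argument of `ξ`, at `|ξ| = x`, multiplied by `(1 + x²)^{J/2}`. The claim
in this plane is that it equals `γ x^m`, with `γ = 0` unless `0 ≤ m ≤ J` (`isMon`).

The proof is by strong induction on `J`. The line through `b e` with direction `e + η u`, `|η| = r`, meets
the sphere over the circle `|z|² + r²|z - b|² = 1`, and extension along it means that the integrals of
`h (z, η (z - b)) z^k` over this circle vanish. Averaging over `arg η` isolates the index `m` and gives
`∑_j ∮ z^{k+j} U^m wc j (Om h m) (X) dz = 0` with `U X = r (z - b) / z`. Since `conj z` is a rational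
function of `z` on the circle, replacing `wc j (Om h m)` by its Taylor monomial of degree `α + β`,
`α - β = m`, turns each integral into that of a function holomorphic except for a pole at `0` which is
present only if `α > k + j` (`cint_moment_zero`, `cint_moment`). For `k = α - 1 - J` with `J < α`, the terms with
`j < J` vanish by induction and those with `j > J` up to order `r^{α+β+1}`, so letting `r → 0` shows that
the Taylor coefficient of order `α + β` of `wc J (Om h m)` is zero (`taylor_coeff_zero`). Hence
`wc J (Om h m)` is a polynomial. By smoothness it vanishes to order `|m|` at `0`, and
exchanging the two coordinates bounds its growth at infinity by `x^m`; so it is a monomial.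

Consequently the component of degree `m` of the `j`-th weighted coefficient on the whole orthogonal
complement of `e` satisfies `c (λ y) = λ^m c y` (`cm_homog`), and a smooth function with this property is
holomorphic (`differentiable_of_homog`, an instance of Forelli's theorem). Multiplying by powers of
`⟨e, z⟩` produces holomorphic functions `QQ f e j`, homogeneous of degree `j`, equal to the Fourier
coefficients on the sphere (`QQ_sphere`). Two derivatives in `θ` bound these by `C / (1 + j²)`, so
`F = ∑ QQ f e j` converges uniformly on the closed ball (`ball_extension_centred`).
-/

open Complex Metric Set

/-- `f`, defined on the unit sphere of `ℂⁿ`, extends holomorphically along the complex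
affine line `L = {q + ζ v : ζ ∈ ℂ}`: there is `g` continuous on the closure of the
parameter disc `{ζ : q + ζ v ∈ 𝔹ⁿ}`, holomorphic in its interior, agreeing with
`f(q + ζ v)` at parameters on the sphere. -/
def ExtendsAlongLine {n : ℕ} (f : EuclideanSpace ℂ (Fin n) → ℂ)
    (q v : EuclideanSpace ℂ (Fin n)) : Prop :=
  ∃ g : ℂ → ℂ,
    ContinuousOn g (closure {ζ : ℂ | q + ζ • v ∈ ball (0 : EuclideanSpace ℂ (Fin n)) 1}) ∧
    DifferentiableOn ℂ g {ζ : ℂ | q + ζ • v ∈ ball (0 : EuclideanSpace ℂ (Fin n)) 1} ∧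
    ∀ ζ : ℂ, q + ζ • v ∈ sphere (0 : EuclideanSpace ℂ (Fin n)) 1 → g ζ = f (q + ζ • v)

open scoped ENNReal NNReal Real ContDiff

/-! ### Parametric integrals of real-analytic functions -/

/-- The linear map `(s, y) ↦ (t s, y)`, contracting the first coordinate only. -/
noncomputable def segMap {X : Type*} [NormedAddCommGroup X] [NormedSpace ℝ X] (t : ℝ) :
    ℝ × X →L[ℝ] ℝ × X :=
  (t • ContinuousLinearMap.fst ℝ ℝ X).prod (ContinuousLinearMap.snd ℝ ℝ X)

lemma segMap_norm_le {X : Type*} [NormedAddCommGroup X] [NormedSpace ℝ X] {t : ℝ}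
    (h0 : 0 ≤ t) (h1 : t ≤ 1) : ‖segMap (X := X) t‖ ≤ 1 := by
  refine ContinuousLinearMap.opNorm_le_bound _ zero_le_one fun p => ?_
  rw [one_mul]
  simp only [segMap, ContinuousLinearMap.prod_apply, Prod.norm_def]
  refine max_le_max ?_ le_rfl
  simp [abs_of_nonneg h0]
  exact mul_le_of_le_one_left (abs_nonneg _) h1

lemma segMap_continuous {X : Type*} [NormedAddCommGroup X] [NormedSpace ℝ X] :
    Continuous (fun t : ℝ => segMap (X := X) t) := by
  unfold segMap
  have : (fun t : ℝ => (t • ContinuousLinearMap.fst ℝ ℝ X).prod (ContinuousLinearMap.snd ℝ ℝ X))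
    = fun t : ℝ => t • ((ContinuousLinearMap.fst ℝ ℝ X).prod (0 : ℝ × X →L[ℝ] X)) +
      (0 : ℝ × X →L[ℝ] ℝ).prod (ContinuousLinearMap.snd ℝ ℝ X) := by
    funext t; ext <;> simp
  rw [this]
  fun_prop

/-- Termwise integration of a series dominated by a summable sequence of constants. -/
lemma hasSum_intervalIntegral_of_bound {ι : Type*} [Countable ι] {F : ι → ℝ → ℂ} {f : ℝ → ℂ}
    {u : ι → ℝ} {a b : ℝ} (hu : Summable u) (hF : ∀ n, Continuous (F n))
    (hb : ∀ n, ∀ t ∈ uIoc a b, ‖F n t‖ ≤ u n)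
    (hs : ∀ t ∈ uIoc a b, HasSum (fun n => F n t) (f t)) :
    HasSum (fun n => ∫ t in a..b, F n t) (∫ t in a..b, f t) :=
  intervalIntegral.hasSum_integral_of_dominated_convergence (fun n _ => u n)
    (fun n => (hF n).aestronglyMeasurable) (fun n => .of_forall (hb n))
    (.of_forall fun _ _ => hu) intervalIntegrable_const (.of_forall hs)

/-- Averages of a real-analytic function over the segments `t ↦ (t₀ + t s, x)` are real-analytic in
`(t₀ + s, x)`, by termwise integration of the power series. -/
lemma analyticAt_segInt {X : Type*} [NormedAddCommGroup X] [NormedSpace ℝ X] {G : ℝ × X → ℂ}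
    {p₀ : ℝ × X} (h : AnalyticAt ℝ G p₀) :
    AnalyticAt ℝ (fun q : ℝ × X => ∫ t in (0:ℝ)..1, G (p₀ + segMap t (q - p₀))) p₀ := by
  obtain ⟨p, r, hp⟩ := h
  have hC : ∀ n, Continuous (fun t : ℝ => (p n).compContinuousLinearMap
      (fun _ => segMap (X := X) t)) := fun n =>
    (ContinuousMultilinearMap.compContinuousLinearMapContinuousMultilinear ℝ
      (fun _ : Fin n => ℝ × X) (fun _ : Fin n => ℝ × X) ℂ).cont.clm_apply continuous_const
        |>.comp (continuous_pi fun _ => segMap_continuous)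
  let q : FormalMultilinearSeries ℝ (ℝ × X) ℂ := fun n => ∫ t in (0:ℝ)..1,
    (p n).compContinuousLinearMap (fun _ => segMap (X := X) t)
  have hn1 : ∀ n, ∀ t ∈ uIoc (0:ℝ) 1,
      ‖(p n).compContinuousLinearMap (fun _ => segMap (X := X) t)‖ ≤ ‖p n‖ := by
    intro n t ht
    rw [uIoc_of_le zero_le_one] at ht
    refine ((p n).norm_compContinuousLinearMap_le _).trans ?_
    refine mul_le_of_le_one_right (norm_nonneg _) ?_
    exact Finset.prod_le_one (fun _ _ => norm_nonneg _) fun _ _ => segMap_norm_le ht.1.le ht.2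
  have hqn : ∀ n, ‖q n‖ ≤ ‖p n‖ := by
    intro n
    refine (intervalIntegral.norm_integral_le_of_norm_le_const (hn1 n)).trans (by simp)
  have hqa : ∀ n (m : Fin n → ℝ × X), q n m = ∫ t in (0:ℝ)..1,
      p n (fun i => segMap t (m i)) := by
    intro n m
    simp only [q]
    rw [intervalIntegral.integral_of_le zero_le_one, intervalIntegral.integral_of_le zero_le_one,
      ContinuousMultilinearMap.integral_apply]
    · rfl
    · exact ((hC n).intervalIntegrable 0 1).1
  refine ⟨q, r, ?_, hp.r_pos, ?_⟩
  · refine hp.r_le.trans ?_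
    refine ENNReal.le_of_forall_nnreal_lt fun s hs => ?_
    obtain ⟨C, -, h⟩ := p.norm_mul_pow_le_of_lt_radius hs
    exact q.le_radius_of_bound C fun n =>
      (mul_le_mul_of_nonneg_right (hqn n) (by positivity)).trans (h n)
  · intro y hy
    have hsum : Summable fun n => ‖p n‖ * ‖y‖ ^ n := by
      have : (‖y‖₊ : ℝ≥0∞) < p.radius := by
        have := lt_of_lt_of_le (mem_eball_zero_iff.1 hy) hp.r_le
        simpa [enorm] using this
      simpa using p.summable_norm_mul_pow this
    have hle : ∀ t ∈ uIoc (0:ℝ) 1, ‖segMap t y‖ ≤ ‖y‖ := by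
      intro t ht
      rw [uIoc_of_le zero_le_one] at ht
      exact (ContinuousLinearMap.le_of_opNorm_le _ (segMap_norm_le ht.1.le ht.2) y).trans
        (one_mul _).le
    simp only [add_sub_cancel_left, hqa]
    refine hasSum_intervalIntegral_of_bound hsum (fun n => ?_) (fun n t ht => ?_)
      (fun t ht => ?_)
    · refine (p n).cont.comp (continuous_pi fun _ => ?_)
      exact segMap_continuous.clm_apply continuous_const
    · refine ((p n).le_opNorm _).trans ?_
      gcongr
      simpa using pow_le_pow_left₀ (norm_nonneg _) (hle t ht) n
    · apply hp.hasSum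
      rw [mem_eball_zero_iff] at hy ⊢
      refine lt_of_le_of_lt ?_ hy
      simpa [enorm, ← NNReal.coe_le_coe] using hle t ht

/-- Parametric integrals of jointly real-analytic functions are real-analytic. -/
lemma analyticAt_intervalIntegral {X : Type*} [NormedAddCommGroup X] [NormedSpace ℝ X]
    {G : ℝ × X → ℂ} (hG : ∀ p, AnalyticAt ℝ G p) (a b : ℝ) (x₀ : X) :
    AnalyticAt ℝ (fun x => ∫ t in a..b, G (t, x)) x₀ := by
  have hcont : Continuous G := continuous_iff_continuousAt.2 fun p => (hG p).continuousAt
  have hii : ∀ x c d, IntervalIntegrable (fun t => G (t, x)) MeasureTheory.volume c d :=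
    fun x c d => (hcont.comp (by fun_prop)).intervalIntegrable c d
  -- analyticity of short integrals
  have hloc : ∀ θ : ℝ, ∀ᶠ s in nhds θ, AnalyticAt ℝ (fun x => ∫ t in θ..s, G (t, x)) x₀ := by
    intro θ
    have h1 : AnalyticAt ℝ (fun q : ℝ × X => (((q.1 - θ : ℝ) : ℂ)) *
        ∫ t in (0:ℝ)..1, G ((θ, x₀) + segMap t (q - (θ, x₀)))) (θ, x₀) := by
      refine AnalyticAt.mul ?_ (analyticAt_segInt (hG (θ, x₀)))
      exact (ofRealCLM.analyticAt _).comp (analyticAt_fst.sub analyticAt_const)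
    have h2 : (fun q : ℝ × X => (((q.1 - θ : ℝ) : ℂ)) *
        ∫ t in (0:ℝ)..1, G ((θ, x₀) + segMap t (q - (θ, x₀))))
        = fun q : ℝ × X => ∫ t in θ..q.1, G (t, q.2) := by
      funext q
      have := intervalIntegral.smul_integral_comp_add_mul (a := 0) (b := 1)
        (fun t => G (t, q.2)) (q.1 - θ) θ
      simp only [mul_zero, add_zero, mul_one, add_sub_cancel] at this
      rw [← this]
      simp [segMap, mul_comm]
    rw [h2] at h1
    have h3 := h1.eventually_analyticAt
    have h4 : Filter.Tendsto (fun s : ℝ => (s, x₀)) (nhds θ) (nhds (θ, x₀)) :=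
      (Continuous.tendsto (by fun_prop) _)
    filter_upwards [h4.eventually h3] with s hs
    exact hs.comp₂ analyticAt_const analyticAt_id
  have hclopen : IsClopen {s : ℝ | AnalyticAt ℝ (fun x => ∫ t in a..s, G (t, x)) x₀} := by
    constructor
    · rw [← isOpen_compl_iff, isOpen_iff_mem_nhds]
      intro θ hθ
      filter_upwards [hloc θ] with s hs hs'
      apply hθ
      have := hs'.sub hs
      refine this.congr (.of_forall fun x => ?_)
      simp only [Pi.sub_apply]
      rw [sub_eq_iff_eq_add, intervalIntegral.integral_add_adjacent_intervals (hii _ _ _) (hii _ _ _)]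
    · rw [isOpen_iff_mem_nhds]
      intro θ hθ
      filter_upwards [hloc θ] with s hs
      have := AnalyticAt.add hθ hs
      refine this.congr (.of_forall fun x => ?_)
      simp only [Pi.add_apply]
      rw [intervalIntegral.integral_add_adjacent_intervals (hii _ _ _) (hii _ _ _)]
  have := hclopen.eq_univ ⟨a, by simpa using analyticAt_const⟩
  exact this.ge (mem_univ b)

/-! ### Characters and Fourier coefficients -/

/-- The character `θ ↦ e^{ijθ}`. -/
noncomputable def chr (j : ℤ) (θ : ℝ) : ℂ := cexp (j * θ * I)

@[simp] lemma norm_chr (j : ℤ) (θ : ℝ) : ‖chr j θ‖ = 1 := by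
  have : (j * θ * I : ℂ) = ((j * θ : ℝ) : ℂ) * I := by push_cast; ring
  rw [chr, this, norm_exp_ofReal_mul_I]

lemma chr_ne_zero (j : ℤ) (θ : ℝ) : chr j θ ≠ 0 := Complex.exp_ne_zero _

@[simp] lemma chr_zero_left (θ : ℝ) : chr 0 θ = 1 := by simp [chr]
@[simp] lemma chr_zero_right (j : ℤ) : chr j 0 = 1 := by simp [chr]

lemma chr_add_left (j k : ℤ) (θ : ℝ) : chr (j + k) θ = chr j θ * chr k θ := by
  rw [chr, chr, chr, ← Complex.exp_add]; congr 1; push_cast; ring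

lemma chr_add_right (j : ℤ) (θ φ : ℝ) : chr j (θ + φ) = chr j θ * chr j φ := by
  rw [chr, chr, chr, ← Complex.exp_add]; congr 1; push_cast; ring

lemma chr_neg_mul (j : ℤ) (θ : ℝ) : chr (-j) θ * chr j θ = 1 := by
  rw [← chr_add_left]; simp

lemma chr_mul_neg (j : ℤ) (θ : ℝ) : chr j θ * chr (-j) θ = 1 := by
  rw [← chr_add_left]; simp

lemma chr_neg_left (j : ℤ) (θ : ℝ) : chr (-j) θ = (chr j θ)⁻¹ :=
  eq_inv_of_mul_eq_one_left (chr_neg_mul j θ)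

lemma chr_neg_right (j : ℤ) (θ : ℝ) : chr j (-θ) = chr (-j) θ := by
  rw [chr, chr]; congr 1; push_cast; ring

lemma chr_eq_zpow (j : ℤ) (θ : ℝ) : chr j θ = chr 1 θ ^ j := by
  rw [chr, chr, ← Complex.exp_int_mul]; congr 1; push_cast; ring

lemma chr_natCast (j : ℕ) (θ : ℝ) : chr j θ = chr 1 θ ^ j := by
  rw [chr_eq_zpow, zpow_natCast]

lemma chr_one (θ : ℝ) : chr 1 θ = cexp (θ * I) := by simp [chr]

lemma star_chr (j : ℤ) (θ : ℝ) : (starRingEnd ℂ) (chr j θ) = chr (-j) θ := by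
  rw [chr, ← Complex.exp_conj, chr]; congr 1; simp

@[simp] lemma chr_two_pi (j : ℤ) : chr j (2 * π) = 1 := by
  rw [chr, Complex.exp_eq_one_iff]; exact ⟨j, by push_cast; ring⟩

lemma chr_periodic (j : ℤ) : Function.Periodic (chr j) (2 * π) := fun θ => by
  rw [chr_add_right, chr_two_pi, mul_one]

lemma hasDerivAt_chr (j : ℤ) (θ : ℝ) : HasDerivAt (chr j) (j * I * chr j θ) θ := by
  have h : HasDerivAt (fun x : ℝ => ((x : ℂ))) 1 θ := ofRealCLM.hasDerivAt
  have := ((h.const_mul (j : ℂ)).mul_const I).cexp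
  convert! this using 1
  simp only [chr]; ring

@[fun_prop] lemma continuous_chr (j : ℤ) : Continuous (chr j) :=
  continuous_iff_continuousAt.2 fun θ => (hasDerivAt_chr j θ).continuousAt

@[fun_prop] lemma analyticAt_chr (j : ℤ) (θ : ℝ) : AnalyticAt ℝ (chr j) θ := by
  unfold chr
  have h : AnalyticAt ℝ (fun x : ℝ => (x : ℂ)) θ := ofRealCLM.analyticAt θ
  have h2 : AnalyticAt ℝ (fun x : ℝ => (j * x * I : ℂ)) θ :=
    (analyticAt_const.mul h).mul analyticAt_const
  exact (analyticAt_cexp.restrictScalars (𝕜 := ℝ)).comp h2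

/-- The `j`-th Fourier coefficient over `[0, 2π]`. -/
noncomputable def fc (j : ℤ) (g : ℝ → ℂ) : ℂ :=
  (2 * π : ℂ)⁻¹ * ∫ θ in (0:ℝ)..(2 * π), g θ * chr (-j) θ

lemma fc_norm_le {g : ℝ → ℂ} {C : ℝ} (j : ℤ) (h : ∀ θ, ‖g θ‖ ≤ C) : ‖fc j g‖ ≤ C := by
  rw [fc, norm_mul]
  have := intervalIntegral.norm_integral_le_of_norm_le_const (a := 0) (b := 2 * π)
    (f := fun θ => g θ * chr (-j) θ) (C := C) (fun θ _ => by simpa using h θ)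
  rw [sub_zero, abs_of_pos Real.two_pi_pos] at this
  have hn : ‖(2 * π : ℂ)⁻¹‖ = (2 * π)⁻¹ := by
    rw [norm_inv]; congr 1; simp [abs_of_pos Real.pi_pos]
  rw [hn, inv_mul_le_iff₀ Real.two_pi_pos, mul_comm _ C]
  exact this

lemma fc_const_mul (j : ℤ) (c : ℂ) (g : ℝ → ℂ) : fc j (fun θ => c * g θ) = c * fc j g := by
  simp only [fc, mul_assoc, intervalIntegral.integral_const_mul]; ring

lemma fc_mul_const (j : ℤ) (c : ℂ) (g : ℝ → ℂ) : fc j (fun θ => g θ * c) = fc j g * c := by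
  simp_rw [mul_comm _ c]; exact fc_const_mul j c g

lemma fc_add (j : ℤ) {g h : ℝ → ℂ} (hg : Continuous g) (hh : Continuous h) :
    fc j (fun θ => g θ + h θ) = fc j g + fc j h := by
  simp only [fc, add_mul]
  rw [intervalIntegral.integral_add, mul_add] <;>
  exact Continuous.intervalIntegrable (by fun_prop) _ _

lemma fc_chr_mul (j k : ℤ) (g : ℝ → ℂ) : fc j (fun θ => chr k θ * g θ) = fc (j - k) g := by
  simp only [fc]
  congr 2; funext θ
  rw [show -(j - k) = k + -j by ring, chr_add_left]; ring

@[simp] lemma fc_zero_fun (j : ℤ) : fc j (fun _ => 0) = 0 := by simp [fc]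

lemma fc_chr (j k : ℤ) : fc j (chr k) = if j = k then 1 else 0 := by
  have h2 : (2 * π : ℂ) ≠ 0 := by exact_mod_cast Real.two_pi_pos.ne'
  simp only [fc, ← chr_add_left]
  split_ifs with h
  · subst h; simp; field_simp
  · have hne : ((k + -j : ℤ) : ℂ) * I ≠ 0 := by
      refine mul_ne_zero ?_ I_ne_zero
      exact_mod_cast (by omega : k + -j ≠ 0)
    have hd : ∀ θ : ℝ, HasDerivAt (fun θ => (((k + -j : ℤ) : ℂ) * I)⁻¹ * chr (k + -j) θ)
        (chr (k + -j) θ) θ := fun θ => by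
      have := (hasDerivAt_chr (k + -j) θ).const_mul (((k + -j : ℤ) : ℂ) * I)⁻¹
      rwa [inv_mul_cancel_left₀ hne] at this
    rw [intervalIntegral.integral_eq_sub_of_hasDerivAt (fun θ _ => hd θ)
      ((continuous_chr _).intervalIntegrable _ _)]
    simp

lemma fc_shift {g : ℝ → ℂ} (hg : Function.Periodic g (2 * π)) (j : ℤ) (a : ℝ) :
    fc j (fun θ => g (θ + a)) = chr j a * fc j g := by
  have h1 : ∀ θ, g (θ + a) * chr (-j) θ = chr j a * (g (θ + a) * chr (-j) (θ + a)) := by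
    intro θ
    rw [chr_add_right]
    linear_combination (-g (θ + a) * chr (-j) θ) * chr_mul_neg j a
  simp only [fc, h1, intervalIntegral.integral_const_mul]
  rw [intervalIntegral.integral_comp_add_right (fun θ => g θ * chr (-j) θ)]
  have hp : Function.Periodic (fun θ => g θ * chr (-j) θ) (2 * π) := hg.mul (chr_periodic _)
  have := hp.intervalIntegral_add_eq a 0
  rw [zero_add] at this
  rw [zero_add, add_comm (2 * π) a, this]; ring

lemma fc_neg_comp {g : ℝ → ℂ} (hg : Function.Periodic g (2 * π)) (j : ℤ) :
    fc j (fun θ => g (-θ)) = fc (-j) g := by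
  have h1 : ∀ θ : ℝ, g (-θ) * chr (-j) θ = (fun θ => g θ * chr (- -j) θ) (-θ) := by
    intro θ; simp [chr_neg_right]
  simp only [fc, h1]
  rw [intervalIntegral.integral_comp_neg (fun θ => g θ * chr (- -j) θ)]
  have hp : Function.Periodic (fun θ => g θ * chr (- -j) θ) (2 * π) := hg.mul (chr_periodic _)
  have := hp.intervalIntegral_add_eq (-(2 * π)) 0
  rw [zero_add, neg_add_cancel] at this
  rw [neg_zero, this]

lemma fc_deriv {g g' : ℝ → ℂ} (hg : Function.Periodic g (2 * π))
    (hd : ∀ θ, HasDerivAt g (g' θ) θ) (hc : Continuous g') (j : ℤ) :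
    fc j g' = j * I * fc j g := by
  have hgc : Continuous g := continuous_iff_continuousAt.2 fun θ => (hd θ).continuousAt
  have h := intervalIntegral.integral_eq_sub_of_hasDerivAt (a := 0) (b := 2 * π)
    (fun θ _ => (hd θ).mul (hasDerivAt_chr (-j) θ))
    (Continuous.intervalIntegrable (by fun_prop) _ _)
  have h0 := hg 0
  rw [zero_add] at h0
  simp only [Pi.mul_apply, chr_two_pi, chr_zero_right, h0, sub_self] at h
  rw [intervalIntegral.integral_add (Continuous.intervalIntegrable (by fun_prop) _ _)
    (Continuous.intervalIntegrable (by fun_prop) _ _)] at h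
  have h3 : ∀ θ, g θ * (((-j : ℤ) : ℂ) * I * chr (-j) θ) = -(j * I) * (g θ * chr (-j) θ) := by
    intro θ; push_cast; ring
  simp only [h3, intervalIntegral.integral_const_mul] at h
  simp only [fc]
  linear_combination (2 * π : ℂ)⁻¹ * h

/-- Pointwise convergence of the Fourier series of a continuous function with summable coefficients. -/
lemma hasSum_fc {g : ℝ → ℂ} (hg : Function.Periodic g (2 * π)) (hc : Continuous g)
    (hs : Summable fun j : ℤ => fc j g) (θ : ℝ) :
    HasSum (fun j : ℤ => fc j g * chr j θ) (g θ) := by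
  have : Fact (0 < 2 * π) := ⟨Real.two_pi_pos⟩
  have hπ : (π : ℂ) ≠ 0 := by exact_mod_cast Real.pi_ne_zero
  have hlc : Continuous (hg.lift) := by
    exact (QuotientAddGroup.isQuotientMap_mk (AddSubgroup.zmultiples (2 * π))).continuous_iff.2 hc
  have hfour : ∀ (j : ℤ) (x : ℝ), fourier j (x : AddCircle (2 * π)) = chr j x := by
    intro j x
    rw [fourier_coe_apply, chr]
    congr 1; push_cast; field_simp
  let F : C(AddCircle (2 * π), ℂ) := ⟨hg.lift, hlc⟩
  have hco : ∀ j, fourierCoeff F j = fc j g := by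
    intro j
    rw [fourierCoeff_eq_intervalIntegral F j 0, fc, zero_add]
    simp only [hfour, F, ContinuousMap.coe_mk, Function.Periodic.lift_coe, smul_eq_mul]
    rw [Complex.real_smul]
    congr 1
    · push_cast; field_simp
    · congr 1; funext θ; ring
  have := has_pointwise_sum_fourier_series_of_summable (f := F)
    (by rwa [show fourierCoeff F = fun j => fc j g from funext hco]) θ
  simp only [hco, hfour, smul_eq_mul] at this
  exact this

lemma fc_swap {H : ℝ → ℝ → ℂ} (hH : Continuous (Function.uncurry H)) (j m : ℤ) :
    fc j (fun θ => fc m (fun φ => H θ φ)) = fc m (fun φ => fc j (fun θ => H θ φ)) := by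
  simp only [fc]
  have h1 : ∀ θ, (2 * π : ℂ)⁻¹ * (∫ φ in (0:ℝ)..2 * π, H θ φ * chr (-m) φ) * chr (-j) θ
      = (2 * π : ℂ)⁻¹ * ∫ φ in (0:ℝ)..2 * π, H θ φ * chr (-m) φ * chr (-j) θ := fun θ => by
    rw [intervalIntegral.integral_mul_const]; ring
  have h2 : ∀ φ, (2 * π : ℂ)⁻¹ * (∫ θ in (0:ℝ)..2 * π, H θ φ * chr (-j) θ) * chr (-m) φ
      = (2 * π : ℂ)⁻¹ * ∫ θ in (0:ℝ)..2 * π, H θ φ * chr (-m) φ * chr (-j) θ := fun φ => by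
    rw [mul_assoc, ← intervalIntegral.integral_mul_const]
    congr 2; funext θ; ring
  simp only [h1, h2, intervalIntegral.integral_const_mul]
  rw [MeasureTheory.intervalIntegral_intervalIntegral_swap]
  have hc : Continuous (Function.uncurry fun θ φ => H θ φ * chr (-m) φ * chr (-j) θ) :=
    (hH.mul ((continuous_chr _).comp continuous_snd)).mul ((continuous_chr _).comp continuous_fst)
  exact (hc.continuousOn.integrableOn_compact (isCompact_uIcc.prod isCompact_uIcc)).mono_set
    (prod_mono uIoc_subset_uIcc uIoc_subset_uIcc)

lemma analyticAt_fc {X : Type*} [NormedAddCommGroup X] [NormedSpace ℝ X]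
    {G : ℝ × X → ℂ} (hG : ∀ p, AnalyticAt ℝ G p) (j : ℤ) (x₀ : X) :
    AnalyticAt ℝ (fun x => fc j (fun t => G (t, x))) x₀ := by
  refine analyticAt_const.mul (analyticAt_intervalIntegral (G := fun p => G p * chr (-j) p.1)
    (fun p => (hG p).mul ?_) _ _ _)
  exact (analyticAt_chr _ _).comp analyticAt_fst

@[fun_prop] lemma continuous_fc {X : Type*} [TopologicalSpace X] [FirstCountableTopology X]
    {G : X → ℝ → ℂ} (hG : Continuous (Function.uncurry G)) (j : ℤ) :
    Continuous (fun x => fc j (G x)) := by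
  unfold fc
  refine continuous_const.mul ?_
  apply intervalIntegral.continuous_parametric_intervalIntegral_of_continuous'
  exact hG.mul ((continuous_chr _).comp continuous_snd)

lemma hasDerivAt_fc {G G' : ℝ → ℝ → ℂ} (hG : Continuous (Function.uncurry G))
    (hG' : Continuous (Function.uncurry G'))
    (hd : ∀ x θ, HasDerivAt (fun x => G x θ) (G' x θ) x) (j : ℤ) (x₀ : ℝ) :
    HasDerivAt (fun x => fc j (G x)) (fc j (G' x₀)) x₀ := by
  unfold fc
  obtain ⟨C, hC⟩ := ((isCompact_Icc (a := x₀ - 1) (b := x₀ + 1)).prod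
    (isCompact_uIcc (a := (0:ℝ)) (b := 2 * π))).exists_bound_of_continuousOn
    (f := Function.uncurry G') hG'.continuousOn
  have hcG : ∀ x, Continuous (G x) := fun x => hG.comp (Continuous.prodMk_right x)
  have hcG' : ∀ x, Continuous (G' x) := fun x => hG'.comp (Continuous.prodMk_right x)
  refine HasDerivAt.const_mul (2 * π : ℂ)⁻¹
    (intervalIntegral.hasDerivAt_integral_of_dominated_loc_of_deriv_le
    (μ := MeasureTheory.volume)
    (F := fun x θ => G x θ * chr (-j) θ) (F' := fun x θ => G' x θ * chr (-j) θ)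
    (s := Icc (x₀ - 1) (x₀ + 1)) (bound := fun _ => C)
    (Icc_mem_nhds (by linarith) (by linarith)) (.of_forall fun x => ?_) ?_ ?_ ?_ ?_ ?_).2
  · have := hcG x
    exact Continuous.aestronglyMeasurable (by fun_prop)
  · have := hcG x₀
    exact Continuous.intervalIntegrable (by fun_prop) _ _
  · have := hcG' x₀
    exact Continuous.aestronglyMeasurable (by fun_prop)
  · refine .of_forall fun t ht x hx => ?_
    simpa using hC (x, t) ⟨hx, uIoc_subset_uIcc ht⟩
  · exact intervalIntegrable_const
  · exact .of_forall fun t ht x hx => (hd x t).mul_const _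

/-! ### Taylor expansions and vanishing order of angular Fourier coefficients -/

lemma le_mul_pow_succ_of_deriv {F F' : ℝ → ℂ} (hd : ∀ x, HasDerivAt F (F' x) x) (h0 : F 0 = 0)
    {X C : ℝ} {n : ℕ} (hC : 0 ≤ C) (hb : ∀ x ∈ Icc 0 X, ‖F' x‖ ≤ C * x ^ n) :
    ∀ x ∈ Icc 0 X, ‖F x‖ ≤ C * x ^ (n + 1) := by
  intro x hx
  have := norm_image_sub_le_of_norm_deriv_le_segment' (f := F) (f' := F') (a := 0) (b := x)
    (C := C * x ^ n) (fun t _ => (hd t).hasDerivWithinAt)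
    (fun t ht => (hb t ⟨ht.1, ht.2.le.trans hx.2⟩).trans
      (by gcongr; exacts [ht.1, ht.2.le])) x ⟨hx.1, le_rfl⟩
  rw [h0, sub_zero, sub_zero] at this
  rw [pow_succ, ← mul_assoc]; exact this

/-- Taylor's formula with remainder bound, for a chain of successive derivatives. -/
lemma taylor_chain (n : ℕ) {X C : ℝ} (hC : 0 ≤ C) (F : ℕ → ℝ → ℂ)
    (hF : ∀ d x, HasDerivAt (F d) (F (d + 1) x) x) (hb : ∀ x ∈ Icc 0 X, ‖F n x‖ ≤ C) :
    ∀ x ∈ Icc 0 X,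
      ‖F 0 x - ∑ d ∈ Finset.range n, F d 0 / (d.factorial : ℂ) * (x : ℂ) ^ d‖ ≤ C * x ^ n := by
  induction n generalizing F with
  | zero => intro x hx; simpa using hb x hx
  | succ n ih =>
    refine le_mul_pow_succ_of_deriv
      (F := fun x => F 0 x - ∑ d ∈ Finset.range (n + 1), F d 0 / (d.factorial : ℂ) * (x : ℂ) ^ d)
      (F' := fun x => F 1 x - ∑ d ∈ Finset.range n, F (d + 1) 0 / (d.factorial : ℂ) * (x : ℂ) ^ d)
      (fun x => ?_) ?_ hC (ih (fun d => F (d + 1)) (fun d => hF (d + 1)) hb)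
    · refine (hF 0 x).sub ?_
      simp only [Finset.sum_range_succ' _ n]
      have hx : HasDerivAt (fun x : ℝ => (x : ℂ)) 1 x := ofRealCLM.hasDerivAt
      have h2 : ∀ d ∈ Finset.range n, HasDerivAt
          (fun x : ℝ => F (d + 1) 0 / ((d + 1).factorial : ℂ) * (x : ℂ) ^ (d + 1))
          (F (d + 1) 0 / (d.factorial : ℂ) * (x : ℂ) ^ d) x := by
        intro d _
        have := (hx.fun_pow (d + 1)).const_mul (F (d + 1) 0 / ((d + 1).factorial : ℂ))
        convert! this using 1
        have h3 : (d.factorial : ℂ) ≠ 0 := by exact_mod_cast d.factorial_ne_zero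
        have h4 : ((d : ℂ) + 1) ≠ 0 := by exact_mod_cast d.succ_ne_zero
        rw [Nat.factorial_succ]; push_cast; field_simp
      have := (HasDerivAt.fun_sum h2).fun_add
        (hasDerivAt_const x (F 0 0 / ((0:ℕ).factorial : ℂ) * (x : ℂ) ^ 0))
      simpa using this
    · simp [Finset.sum_range_succ']

lemma le_zero_of_le_mul {a C δ : ℝ} (hδ : 0 < δ) (h : ∀ r ∈ Ioc 0 δ, a ≤ C * r) : a ≤ 0 := by
  have h1 : Filter.Tendsto (fun r : ℝ => C * r) (nhdsWithin 0 (Ioi 0)) (nhds (C * 0)) :=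
    (Continuous.tendsto (by fun_prop) _).mono_left nhdsWithin_le_nhds
  rw [mul_zero] at h1
  refine ge_of_tendsto h1 ?_
  filter_upwards [Ioc_mem_nhdsGT hδ] with r hr using h r hr

lemma exists_bound_Icc {F : ℝ → ℂ} (hF : Continuous F) (a b : ℝ) :
    ∃ C, 0 ≤ C ∧ ∀ x ∈ Icc a b, ‖F x‖ ≤ C := by
  obtain ⟨C, hC⟩ := (isCompact_Icc (a := a) (b := b)).exists_bound_of_continuousOn hF.continuousOn
  exact ⟨max C 0, le_max_right _ _, fun x hx => (hC x hx).trans (le_max_left _ _)⟩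

/-- A chain of derivatives whose first function is `O(xⁿ)` vanishes at `0` up to order `n`. -/
lemma chain_vanish {F : ℕ → ℝ → ℂ} (hF : ∀ d x, HasDerivAt (F d) (F (d + 1) x) x) {n : ℕ} {C : ℝ}
    (hb : ∀ x ∈ Ioc (0:ℝ) 1, ‖F 0 x‖ ≤ C * x ^ n) : ∀ d < n, F d 0 = 0 := by
  intro d
  induction d using Nat.strong_induction_on with
  | _ d ih =>
    intro hd
    obtain ⟨C', hC', hb'⟩ := exists_bound_Icc
      (continuous_iff_continuousAt.2 fun x => (hF (d + 1) x).continuousAt) 0 1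
    have hT := taylor_chain (d + 1) hC' F hF hb'
    have h0 : ‖F d 0‖ / d.factorial ≤ 0 := by
      refine le_zero_of_le_mul (C := |C| + C') one_pos fun r hr => ?_
      have h1 := hT r ⟨hr.1.le, hr.2⟩
      rw [Finset.sum_range_succ, Finset.sum_eq_zero, zero_add] at h1
      swap
      · intro i hi
        rw [ih i (Finset.mem_range.1 hi) ((Finset.mem_range.1 hi).trans hd)]; simp
      have h2 := hb r hr
      have h3 : ‖F d 0 / (d.factorial : ℂ) * (r : ℂ) ^ d‖ = ‖F d 0‖ / d.factorial * r ^ d := by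
        simp [abs_of_pos hr.1]
      have h4 : C * r ^ n ≤ |C| * r ^ (d + 1) :=
        mul_le_mul (le_abs_self C) (pow_le_pow_of_le_one hr.1.le hr.2 hd)
          (pow_nonneg hr.1.le _) (abs_nonneg _)
      have h5 : ‖F d 0‖ / d.factorial * r ^ d ≤ (|C| + C') * r * r ^ d := by
        rw [← h3]
        calc _ = ‖F 0 r - (F 0 r - F d 0 / (d.factorial : ℂ) * (r : ℂ) ^ d)‖ := by
              congr 1; ring
          _ ≤ _ := (norm_sub_le _ _).trans (add_le_add (h2.trans h4) h1)
          _ = _ := by ring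
      exact le_of_mul_le_mul_right h5 (pow_pos hr.1 _)
    have hf : (0:ℝ) < d.factorial := by exact_mod_cast d.factorial_pos
    have : ‖F d 0‖ ≤ 0 := by
      rw [div_le_iff₀ hf, zero_mul] at h0; exact h0
    exact norm_le_zero_iff.1 this

/-- Successive derivatives of a function of parity `ε` have parity `ε (-1)ᵈ`. -/
lemma chain_parity {F : ℕ → ℝ → ℂ} (hF : ∀ d x, HasDerivAt (F d) (F (d + 1) x) x) {ε : ℂ}
    (h : ∀ x, F 0 (-x) = ε * F 0 x) (d : ℕ) : ∀ x, F d (-x) = ε * (-1) ^ d * F d x := by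
  induction d with
  | zero => simpa using h
  | succ d ih =>
    intro x
    have h1 : HasDerivAt (fun x => F d (-x)) (-F (d + 1) (-x)) x := by
      have := (hF d (-x)).scomp x (hasDerivAt_neg x)
      rwa [neg_one_smul] at this
    have h2 : HasDerivAt (fun x => F d (-x)) (ε * (-1) ^ d * F (d + 1) x) x := by
      rw [show (fun x => F d (-x)) = fun x => ε * (-1) ^ d * F d x from funext ih]
      exact (hF d x).const_mul _
    have := h1.unique h2
    rw [pow_succ]; linear_combination -this

/-- A real-analytic function on the line that is flat at `0` from the right vanishes. -/
lemma analytic_flat_eq_zero {h : ℝ → ℂ} (ha : ∀ x, AnalyticAt ℝ h x)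
    (hb : ∀ N : ℕ, ∃ C, ∀ x ∈ Icc (0:ℝ) 1, ‖h x‖ ≤ C * x ^ N) : ∀ x, h x = 0 := by
  have h0 : ∀ᶠ x in nhds (0:ℝ), h x = 0 := by
    by_contra hne
    obtain ⟨n, g, hg, hg0, he⟩ := ((ha 0).exists_eventuallyEq_pow_smul_nonzero_iff).2 hne
    obtain ⟨C, hC⟩ := hb (n + 1)
    apply hg0
    have hev : ∀ᶠ x in nhdsWithin (0:ℝ) (Ioi 0), ‖g x‖ ≤ C * x := by
      filter_upwards [Ioc_mem_nhdsGT one_pos, nhdsWithin_le_nhds he] with x hx hx2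
      have h1 := hC x ⟨hx.1.le, hx.2⟩
      rw [hx2, sub_zero, norm_smul, norm_pow, Real.norm_of_nonneg hx.1.le, pow_succ, mul_comm,
        ← mul_assoc, mul_right_comm] at h1
      exact le_of_mul_le_mul_right h1 (pow_pos hx.1 _)
    have t1 : Filter.Tendsto (fun x => ‖g x‖) (nhdsWithin (0:ℝ) (Ioi 0)) (nhds ‖g 0‖) :=
      hg.continuousAt.norm.tendsto.mono_left nhdsWithin_le_nhds
    have t2 : Filter.Tendsto (fun x : ℝ => C * x) (nhdsWithin 0 (Ioi 0)) (nhds (C * 0)) :=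
      (Continuous.tendsto (by fun_prop) _).mono_left nhdsWithin_le_nhds
    have := le_of_tendsto_of_tendsto t1 t2 hev
    rw [mul_zero] at this
    exact norm_le_zero_iff.1 this
  have := AnalyticOnNhd.eq_of_eventuallyEq (𝕜 := ℝ) (f := h) (g := fun _ => 0) (z₀ := 0)
    (fun x _ => ha x) (fun x _ => analyticAt_const) h0
  exact fun x => congrFun this x

/-- The `m`-th angular Fourier coefficient of a smooth function on `ℂ` is `O(xᵏ)` on circles of
radius `x`, for `k ≤ |m|`. The proof differentiates in `x`: this replaces `g` by its Wirtinger
derivatives and shifts `m` by one. -/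
lemma fc_circle_le (k : ℕ) : ∀ (m : ℤ), (k : ℤ) ≤ |m| → ∀ {g : ℂ → ℂ}, ContDiff ℝ (⊤ : ℕ∞) g →
    ∃ C, 0 ≤ C ∧ ∀ x ∈ Icc (0:ℝ) 1, ‖fc m (fun φ => g (x * chr 1 φ))‖ ≤ C * x ^ k := by
  induction k with
  | zero =>
    intro m _ g hg
    have hg := hg.continuous
    obtain ⟨C, hC, hb⟩ := exists_bound_Icc (F := fun x => fc m (fun φ => g (x * chr 1 φ)))
      (continuous_fc (by
        unfold Function.uncurry
        have := continuous_chr 1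
        fun_prop) m) 0 1
    exact ⟨C, hC, fun x hx => by simpa using hb x hx⟩
  | succ k ih =>
    intro m hm g hg
    let g₁ : ℂ → ℂ := fun w => (fderiv ℝ g w 1 - I * fderiv ℝ g w I) / 2
    let g₂ : ℂ → ℂ := fun w => (fderiv ℝ g w 1 + I * fderiv ℝ g w I) / 2
    have hfd : ContDiff ℝ (⊤ : ℕ∞) (fderiv ℝ g) := hg.fderiv_right (by simp)
    have hg₁ : ContDiff ℝ (⊤ : ℕ∞) g₁ := by
      refine ContDiff.div_const (ContDiff.sub ?_ (contDiff_const.mul ?_)) _ <;>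
      exact hfd.clm_apply contDiff_const
    have hg₂ : ContDiff ℝ (⊤ : ℕ∞) g₂ := by
      refine ContDiff.div_const (ContDiff.add ?_ (contDiff_const.mul ?_)) _ <;>
      exact hfd.clm_apply contDiff_const
    obtain ⟨C₁, h₁, hb₁⟩ := ih (m - 1) (by grind) hg₁
    obtain ⟨C₂, h₂, hb₂⟩ := ih (m + 1) (by grind) hg₂
    have hcg := hg.continuous
    have hcg₁ := hg₁.continuous
    have hcg₂ := hg₂.continuous
    have hc1 := continuous_chr 1
    have hc2 := continuous_chr (-1)
    have hW : ∀ w v : ℂ, fderiv ℝ g w v = v * g₁ w + (starRingEnd ℂ) v * g₂ w := by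
      intro w v
      have hv : v = v.re • (1:ℂ) + v.im • I := by simp [Complex.re_add_im]
      have h1 : fderiv ℝ g w v = v.re * fderiv ℝ g w 1 + v.im * fderiv ℝ g w I := by
        conv_lhs => rw [hv]
        rw [map_add, map_smul, map_smul, real_smul, real_smul]
      have h2 : (starRingEnd ℂ) v = v.re - v.im * I := by
        apply Complex.ext <;> simp
      rw [h1, h2]
      conv_rhs => enter [1, 1]; rw [← Complex.re_add_im v]
      simp only [g₁, g₂]
      linear_combination (v.im * fderiv ℝ g w I) * I_sq
    refine ⟨C₁ + C₂, by positivity, ?_⟩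
    refine le_mul_pow_succ_of_deriv (F := fun x : ℝ => fc m (fun φ => g (x * chr 1 φ)))
      (F' := fun x : ℝ => fc m (fun φ => chr 1 φ * g₁ (x * chr 1 φ) + chr (-1) φ * g₂ (x * chr 1 φ)))
      (fun x => ?_) ?_ (by positivity) fun x hx => ?_
    · refine hasDerivAt_fc (G := fun x φ => g (x * chr 1 φ))
        (G' := fun x φ => chr 1 φ * g₁ (x * chr 1 φ) + chr (-1) φ * g₂ (x * chr 1 φ))
        (by unfold Function.uncurry; fun_prop) (by unfold Function.uncurry; fun_prop)
        (fun x φ => ?_) m x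
      have hl : HasDerivAt (fun x : ℝ => (x : ℂ) * chr 1 φ) (chr 1 φ) x := by
        simpa using (ofRealCLM.hasDerivAt (x := x)).mul_const (chr 1 φ)
      have := ((hg.differentiable (by simp)) (x * chr 1 φ)).hasFDerivAt.comp_hasDerivAt x hl
      rw [hW, star_chr] at this
      exact this
    · have hm0 : m ≠ 0 := by rintro rfl; simp at hm; omega
      have := fc_const_mul m (g 0) (chr 0)
      rw [fc_chr, if_neg hm0] at this
      simpa using this
    · rw [fc_add _ (by fun_prop) (by fun_prop), fc_chr_mul, fc_chr_mul, add_mul]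
      refine (norm_add_le _ _).trans (add_le_add (hb₁ x hx) ?_)
      simpa using hb₂ x hx

/-! ### Weighted Fourier coefficients and their decay -/

lemma fc_norm_le_Icc {g : ℝ → ℂ} {C : ℝ} (j : ℤ) (h : ∀ θ ∈ Icc 0 (2 * π), ‖g θ‖ ≤ C) :
    ‖fc j g‖ ≤ C := by
  rw [fc, norm_mul]
  have := intervalIntegral.norm_integral_le_of_norm_le_const (a := 0) (b := 2 * π)
    (f := fun θ => g θ * chr (-j) θ) (C := C) (fun θ hθ => by
      rw [uIoc_of_le Real.two_pi_pos.le] at hθ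
      simpa using h θ ⟨hθ.1.le, hθ.2⟩)
  rw [sub_zero, abs_of_pos Real.two_pi_pos] at this
  have hn : ‖(2 * π : ℂ)⁻¹‖ = (2 * π)⁻¹ := by
    rw [norm_inv]; congr 1; simp [abs_of_pos Real.pi_pos]
  rw [hn, inv_mul_le_iff₀ Real.two_pi_pos, mul_comm _ C]
  exact this

/-- Quadratic decay of Fourier coefficients of a twice differentiable periodic function. -/
lemma fc_decay {g g₁ g₂ : ℝ → ℂ} (hg : Function.Periodic g (2 * π))
    (hg₁ : Function.Periodic g₁ (2 * π)) (hd : ∀ θ, HasDerivAt g (g₁ θ) θ)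
    (hd₁ : ∀ θ, HasDerivAt g₁ (g₂ θ) θ) (hc : Continuous g₂) {C D : ℝ}
    (hC : ∀ θ ∈ Icc 0 (2 * π), ‖g θ‖ ≤ C) (hD : ∀ θ ∈ Icc 0 (2 * π), ‖g₂ θ‖ ≤ D) (j : ℤ) :
    ‖fc j g‖ ≤ (C + D) / (1 + (j : ℝ) ^ 2) := by
  have hc₁ : Continuous g₁ := continuous_iff_continuousAt.2 fun θ => (hd₁ θ).continuousAt
  have h2 : fc j g₂ = -((j : ℂ) ^ 2 * fc j g) := by
    rw [fc_deriv hg₁ hd₁ hc, fc_deriv hg hd hc₁]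
    linear_combination (j : ℂ) ^ 2 * fc j g * I_sq
  have h3 : ‖fc j g₂‖ = (j : ℝ) ^ 2 * ‖fc j g‖ := by
    rw [h2, norm_neg, norm_mul, norm_pow, norm_intCast, sq_abs]
  rw [le_div_iff₀ (by positivity)]
  have := fc_norm_le_Icc j hC
  have := fc_norm_le_Icc j hD
  nlinarith

/-- The weight `√(1 + x²)`. -/
noncomputable def wgt (x : ℝ) : ℝ := √(1 + x ^ 2)

lemma wgt_pos (x : ℝ) : 0 < wgt x := Real.sqrt_pos.2 (by positivity)
lemma wgt_sq (x : ℝ) : wgt x ^ 2 = 1 + x ^ 2 := Real.sq_sqrt (by positivity)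
@[simp] lemma wgt_zero : wgt 0 = 1 := by simp [wgt]
@[simp] lemma wgt_neg (x : ℝ) : wgt (-x) = wgt x := by simp [wgt]
lemma wgt_ne (x : ℝ) : (wgt x : ℂ) ≠ 0 := by exact_mod_cast (wgt_pos x).ne'
lemma wgt_sq' (x : ℝ) : (wgt x : ℂ) ^ 2 = 1 + (x : ℂ) ^ 2 := by exact_mod_cast wgt_sq x
lemma wgt_mono {x y : ℝ} (h0 : 0 ≤ x) (h : x ≤ y) : wgt x ≤ wgt y :=
  Real.sqrt_le_sqrt (by gcongr)

lemma hasDerivAt_wgt (x : ℝ) : HasDerivAt wgt (x / wgt x) x := by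
  have h := ((hasDerivAt_pow 2 x).const_add 1).sqrt (by positivity)
  convert! h using 1
  simp [wgt]
  field_simp

lemma hasDerivAt_wgt_pow (j : ℕ) (x : ℝ) :
    HasDerivAt (fun x => (wgt x : ℂ) ^ j) (wgt x ^ j * (j * x / (1 + x ^ 2))) x := by
  have h := ((hasDerivAt_wgt x).ofReal_comp).fun_pow j
  convert! h using 1
  have h1 := wgt_ne x
  rw [← wgt_sq']
  rcases j with _ | j
  · simp
  · simp; field_simp; ring

lemma analyticAt_sqrt {x : ℝ} (hx : x ≠ 0) : AnalyticAt ℝ Real.sqrt x :=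
  (Real.contDiffAt_sqrt (n := ω) hx).analyticAt

lemma analyticAt_wgt (x : ℝ) : AnalyticAt ℝ wgt x := by
  unfold wgt
  exact (analyticAt_sqrt (by positivity)).comp (analyticAt_const.add (analyticAt_id.pow 2))

/-- The derivation conjugate to `d/dx` under multiplication of the `j`-th Fourier coefficient by
`(1 + x²)^{j/2}`, see `hasDerivAt_wc`. -/
noncomputable def nab (G : ℝ × ℝ → ℂ) : ℝ × ℝ → ℂ := fun p =>
  fderiv ℝ G p (0, 1) - I * ((p.2 : ℂ) / (1 + (p.2 : ℂ) ^ 2)) * fderiv ℝ G p (1, 0)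

lemma nab_contDiff {G : ℝ × ℝ → ℂ} (hG : ContDiff ℝ (⊤ : ℕ∞) G) :
    ContDiff ℝ (⊤ : ℕ∞) (nab G) := by
  have hfd : ContDiff ℝ (⊤ : ℕ∞) (fderiv ℝ G) := hG.fderiv_right (by simp)
  have h2 : ContDiff ℝ (⊤ : ℕ∞) (fun p : ℝ × ℝ => (p.2 : ℂ)) := ofRealCLM.contDiff.comp contDiff_snd
  refine (hfd.clm_apply contDiff_const).sub ((contDiff_const.mul (h2.mul (ContDiff.inv ?_ ?_))).mul
    (hfd.clm_apply contDiff_const))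
  · exact contDiff_const.add (h2.pow 2)
  · intro p; rw [← wgt_sq']; exact pow_ne_zero _ (wgt_ne _)

lemma nab_periodic {G : ℝ × ℝ → ℂ} (hG : ∀ θ x, G (θ + 2 * π, x) = G (θ, x)) (θ x : ℝ) :
    nab G (θ + 2 * π, x) = nab G (θ, x) := by
  have h1 : (fun p : ℝ × ℝ => G (p + (2 * π, 0))) = G := by
    funext ⟨θ, x⟩; simpa using hG θ x
  have h2 : fderiv ℝ G (θ + 2 * π, x) = fderiv ℝ G (θ, x) := by
    have := fderiv_comp_add_right (𝕜 := ℝ) (f := G) (x := ((θ, x) : ℝ × ℝ)) (2 * π, 0)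
    rw [h1] at this
    simpa using this.symm
  simp only [nab, h2]

lemma iter_nab {G : ℝ × ℝ → ℂ} (hG : ContDiff ℝ (⊤ : ℕ∞) G)
    (hp : ∀ θ x, G (θ + 2 * π, x) = G (θ, x)) (d : ℕ) :
    ContDiff ℝ (⊤ : ℕ∞) (nab^[d] G) ∧
      ∀ θ x, (nab^[d] G) (θ + 2 * π, x) = (nab^[d] G) (θ, x) := by
  induction d with
  | zero => exact ⟨hG, hp⟩
  | succ d ih =>
    rw [Function.iterate_succ_apply']
    exact ⟨nab_contDiff ih.1, nab_periodic ih.2⟩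

lemma hasDerivAt_theta {G : ℝ × ℝ → ℂ} (hG : ContDiff ℝ (⊤ : ℕ∞) G) (θ x : ℝ) :
    HasDerivAt (fun θ => G (θ, x)) (fderiv ℝ G (θ, x) (1, 0)) θ := by
  have hl : HasDerivAt (fun θ : ℝ => (θ, x)) ((1, 0) : ℝ × ℝ) θ :=
    (hasDerivAt_id θ).prodMk (hasDerivAt_const θ x)
  exact ((hG.differentiable (by simp)) (θ, x)).hasFDerivAt.comp_hasDerivAt θ hl

lemma hasDerivAt_x {G : ℝ × ℝ → ℂ} (hG : ContDiff ℝ (⊤ : ℕ∞) G) (θ x : ℝ) :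
    HasDerivAt (fun x => G (θ, x)) (fderiv ℝ G (θ, x) (0, 1)) x := by
  have hl : HasDerivAt (fun x : ℝ => (θ, x)) ((0, 1) : ℝ × ℝ) x :=
    (hasDerivAt_const x θ).prodMk (hasDerivAt_id x)
  exact ((hG.differentiable (by simp)) (θ, x)).hasFDerivAt.comp_hasDerivAt x hl

/-- The weighted Fourier coefficient `(1 + x²)^{j/2} · fc j (G(·, x))`. -/
noncomputable def wc (j : ℕ) (G : ℝ × ℝ → ℂ) (x : ℝ) : ℂ :=
  (wgt x : ℂ) ^ j * fc j (fun θ => G (θ, x))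

/-- `nab` realises differentiation of the weighted coefficient inside the Fourier integral; unlike
the derivative of `wc j G` itself, it does not depend on `j`. -/
lemma hasDerivAt_wc {G : ℝ × ℝ → ℂ} (hG : ContDiff ℝ (⊤ : ℕ∞) G)
    (hp : ∀ θ x, G (θ + 2 * π, x) = G (θ, x)) (j : ℕ) (x : ℝ) :
    HasDerivAt (wc j G) (wc j (nab G) x) x := by
  have hfd : Continuous (fderiv ℝ G) := hG.continuous_fderiv (by simp)
  have hc := hG.continuous
  have h1 := hasDerivAt_fc (G := fun x θ => G (θ, x)) (G' := fun x θ => fderiv ℝ G (θ, x) (0, 1))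
    (by unfold Function.uncurry; fun_prop) (by unfold Function.uncurry; fun_prop)
    (fun x θ => hasDerivAt_x hG θ x) j x
  have h2 := (hasDerivAt_wgt_pow j x).mul h1
  convert! h2 using 1
  have h3 := fc_deriv (g := fun θ => G (θ, x)) (g' := fun θ => fderiv ℝ G (θ, x) (1, 0))
    (fun θ => hp θ x) (fun θ => hasDerivAt_theta hG θ x) (by fun_prop) j
  have h4 : fc j (fun θ => nab G (θ, x)) = fc j (fun θ => fderiv ℝ G (θ, x) (0, 1)) +
      -(I * ((x : ℂ) / (1 + (x : ℂ) ^ 2))) * fc j (fun θ => fderiv ℝ G (θ, x) (1, 0)) := by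
    rw [← fc_const_mul, ← fc_add _ (by fun_prop) (by fun_prop)]
    congr 1; funext θ; simp only [nab]; ring
  rw [wc, h4, h3]
  push_cast
  linear_combination (-(wgt x : ℂ) ^ j * ((x : ℂ) / (1 + (x : ℂ) ^ 2)) * j *
    fc j (fun θ => G (θ, x))) * I_sq

lemma hasDerivAt_wc_iter {G : ℝ × ℝ → ℂ} (hG : ContDiff ℝ (⊤ : ℕ∞) G)
    (hp : ∀ θ x, G (θ + 2 * π, x) = G (θ, x)) (j d : ℕ) (x : ℝ) :
    HasDerivAt (wc j (nab^[d] G)) (wc j (nab^[d + 1] G) x) x := by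
  rw [Function.iterate_succ_apply']
  exact hasDerivAt_wc (iter_nab hG hp d).1 (iter_nab hG hp d).2 j x

/-- The decay is uniform for `x ∈ [0, 1]`. -/
lemma fc_decay_Icc {G : ℝ × ℝ → ℂ} (hG : ContDiff ℝ (⊤ : ℕ∞) G)
    (hp : ∀ θ x, G (θ + 2 * π, x) = G (θ, x)) :
    ∃ C, 0 ≤ C ∧ ∀ (j : ℤ), ∀ x ∈ Icc (0:ℝ) 1,
      ‖fc j (fun θ => G (θ, x))‖ ≤ C / (1 + (j : ℝ) ^ 2) := by
  let G₁ : ℝ × ℝ → ℂ := fun p => fderiv ℝ G p (1, 0)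
  let G₂ : ℝ × ℝ → ℂ := fun p => fderiv ℝ G₁ p (1, 0)
  have hG₁ : ContDiff ℝ (⊤ : ℕ∞) G₁ :=
    (hG.fderiv_right (m := (⊤ : ℕ∞)) (by simp)).clm_apply contDiff_const
  have hG₂ : ContDiff ℝ (⊤ : ℕ∞) G₂ :=
    (hG₁.fderiv_right (m := (⊤ : ℕ∞)) (by simp)).clm_apply contDiff_const
  have hp₁ : ∀ θ x, G₁ (θ + 2 * π, x) = G₁ (θ, x) := fun θ x => by
    have h1 := (hasDerivAt_theta hG (θ + 2 * π) x).comp_add_const θ (2 * π)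
    simp only [hp] at h1
    exact h1.unique (hasDerivAt_theta hG θ x)
  have hK : IsCompact (Icc 0 (2 * π) ×ˢ Icc (0:ℝ) 1) := isCompact_Icc.prod isCompact_Icc
  obtain ⟨C, hC⟩ := hK.exists_bound_of_continuousOn hG.continuous.continuousOn
  obtain ⟨D, hD⟩ := hK.exists_bound_of_continuousOn hG₂.continuous.continuousOn
  have hm : ((0:ℝ), (0:ℝ)) ∈ Icc 0 (2 * π) ×ˢ Icc (0:ℝ) 1 :=
    ⟨⟨le_rfl, Real.two_pi_pos.le⟩, ⟨le_rfl, zero_le_one⟩⟩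
  refine ⟨C + D, add_nonneg ((norm_nonneg _).trans (hC _ hm)) ((norm_nonneg _).trans (hD _ hm)),
    fun j x hx => ?_⟩
  have hc₂ : Continuous fun θ => G₂ (θ, x) := hG₂.continuous.comp (by fun_prop)
  exact fc_decay (fun θ => hp θ x) (fun θ => hp₁ θ x) (fun θ => hasDerivAt_theta hG θ x)
    (fun θ => hasDerivAt_theta hG₁ θ x) hc₂ (fun θ hθ => hC (θ, x) ⟨hθ, hx⟩)
    (fun θ hθ => hD (θ, x) ⟨hθ, hx⟩) j

/-! ### Coordinates on the sphere of `ℂ²` -/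

/-- `h`, defined on `ℂ²`, is real-analytic at every point of the unit sphere. -/
def SphAn (h : ℂ × ℂ → ℂ) : Prop :=
  ∀ p : ℂ × ℂ, ‖p.1‖ ^ 2 + ‖p.2‖ ^ 2 = 1 → AnalyticAt ℝ h p

/-- `h` in the coordinates `(θ, ξ) ↦ e^{iθ} (1, ξ) / √(1 + |ξ|²)` of the sphere. -/
noncomputable def GG (h : ℂ × ℂ → ℂ) (p : ℝ × ℂ) : ℂ :=
  h (chr 1 p.1 / wgt ‖p.2‖, chr 1 p.1 * p.2 / wgt ‖p.2‖)

/-- The `m`-th Fourier coefficient of `GG h (θ, x e^{iφ})` in `φ`, as a function of `(θ, x)`. -/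
noncomputable def Om (h : ℂ × ℂ → ℂ) (m : ℤ) (p : ℝ × ℝ) : ℂ :=
  fc m (fun φ => GG h (p.1, p.2 * chr 1 φ))

lemma wgt_abs (x : ℝ) : wgt |x| = wgt x := by simp [wgt]

lemma sphere_coord (θ : ℝ) (ξ : ℂ) :
    ‖chr 1 θ / wgt ‖ξ‖‖ ^ 2 + ‖chr 1 θ * ξ / wgt ‖ξ‖‖ ^ 2 = 1 := by
  have h := wgt_pos ‖ξ‖
  have h2 := wgt_sq ‖ξ‖
  simp only [norm_div, norm_mul, norm_chr, norm_real, Real.norm_of_nonneg h.le]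
  field_simp
  linarith

lemma analyticAt_GG {h : ℂ × ℂ → ℂ} (hh : SphAn h) (p : ℝ × ℂ) : AnalyticAt ℝ (GG h) p := by
  have hw : AnalyticAt ℝ (fun p : ℝ × ℂ => ((wgt ‖p.2‖ : ℝ) : ℂ)) p := by
    have h1 : ContDiff ℝ ω (fun p : ℝ × ℂ => 1 + ‖p.2‖ ^ 2) :=
      contDiff_const.add ((contDiff_norm_sq ℝ).comp contDiff_snd)
    have h2 : AnalyticAt ℝ (fun p : ℝ × ℂ => √(1 + ‖p.2‖ ^ 2)) p :=
      (analyticAt_sqrt (by positivity)).comp_of_eq h1.contDiffAt.analyticAt rfl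
    exact (ofRealCLM.analyticAt _).comp h2
  have hc : AnalyticAt ℝ (fun p : ℝ × ℂ => chr 1 p.1) p :=
    (analyticAt_chr 1 p.1).comp analyticAt_fst
  exact (hh _ (sphere_coord p.1 p.2)).comp_of_eq
    ((hc.div hw (wgt_ne _)).prod ((hc.mul analyticAt_snd).div hw (wgt_ne _))) rfl

lemma continuous_GG {h : ℂ × ℂ → ℂ} (hh : SphAn h) : Continuous (GG h) :=
  continuous_iff_continuousAt.2 fun p => (analyticAt_GG hh p).continuousAt

lemma GG_periodic (h : ℂ × ℂ → ℂ) (θ : ℝ) (ξ : ℂ) : GG h (θ + 2 * π, ξ) = GG h (θ, ξ) := by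
  have := chr_periodic 1 θ
  simp only [GG, this]

lemma analyticAt_Om {h : ℂ × ℂ → ℂ} (hh : SphAn h) (m : ℤ) (p : ℝ × ℝ) :
    AnalyticAt ℝ (Om h m) p := by
  refine analyticAt_fc (G := fun q : ℝ × (ℝ × ℝ) => GG h (q.2.1, q.2.2 * chr 1 q.1)) (fun q => ?_)
    m p
  have h1 : AnalyticAt ℝ (fun q : ℝ × (ℝ × ℝ) => (q.2.2 : ℂ)) q :=
    (ofRealCLM.analyticAt _).comp (analyticAt_snd.comp analyticAt_snd)
  have h2 : AnalyticAt ℝ (fun q : ℝ × (ℝ × ℝ) => chr 1 q.1) q :=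
    (analyticAt_chr 1 q.1).comp analyticAt_fst
  have h3 : AnalyticAt ℝ (fun q : ℝ × (ℝ × ℝ) => q.2.1) q :=
    analyticAt_fst.comp analyticAt_snd
  exact (analyticAt_GG hh _).comp_of_eq (h3.prod (h1.mul h2)) rfl

lemma contDiff_Om {h : ℂ × ℂ → ℂ} (hh : SphAn h) (m : ℤ) : ContDiff ℝ (⊤ : ℕ∞) (Om h m) :=
  contDiff_iff_contDiffAt.2 fun p => (analyticAt_Om hh m p).contDiffAt

lemma Om_periodic (h : ℂ × ℂ → ℂ) (m : ℤ) (θ x : ℝ) : Om h m (θ + 2 * π, x) = Om h m (θ, x) := by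
  simp only [Om, GG_periodic]

lemma chr_pi (m : ℤ) : chr m π = (-1) ^ m := by
  rw [chr_eq_zpow, chr_one, exp_pi_mul_I]

lemma Om_neg (h : ℂ × ℂ → ℂ) (m : ℤ) (θ x : ℝ) : Om h m (θ, -x) = (-1) ^ m * Om h m (θ, x) := by
  have hp : Function.Periodic (fun φ => GG h (θ, x * chr 1 φ)) (2 * π) := fun φ => by
    simp only [chr_periodic 1 φ]
  have := fc_shift hp m π
  rw [chr_pi] at this
  rw [Om, Om, ← this]
  congr 1; funext φ
  rw [chr_add_right, chr_pi]; simp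

lemma wc_Om_neg (h : ℂ × ℂ → ℂ) (m : ℤ) (j : ℕ) (x : ℝ) :
    wc j (Om h m) (-x) = (-1) ^ m * wc j (Om h m) x := by
  simp only [wc, Om_neg, fc_const_mul, wgt_neg]; ring

/-- Angular Fourier coefficient in `θ` for fixed `ξ`. -/
lemma contDiff_fc_GG {h : ℂ × ℂ → ℂ} (hh : SphAn h) (j : ℤ) :
    ContDiff ℝ (⊤ : ℕ∞) (fun ξ : ℂ => fc j (fun θ => GG h (θ, ξ))) :=
  contDiff_iff_contDiffAt.2 fun p => (analyticAt_fc (analyticAt_GG hh) j p).contDiffAt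

lemma fc_Om_eq {h : ℂ × ℂ → ℂ} (hh : SphAn h) (j m : ℤ) (x : ℝ) :
    fc j (fun θ => Om h m (θ, x)) = fc m (fun φ => fc j (fun θ => GG h (θ, x * chr 1 φ))) := by
  have := continuous_GG hh
  exact fc_swap (H := fun θ φ => GG h (θ, x * chr 1 φ)) (by
    unfold Function.uncurry; have := continuous_chr 1; fun_prop) j m

/-- The order of vanishing at `x = 0`, from smoothness in `ξ`. -/
lemma fc_Om_le {h : ℂ × ℂ → ℂ} (hh : SphAn h) (j m : ℤ) :
    ∃ C, 0 ≤ C ∧ ∀ x ∈ Icc (0:ℝ) 1, ‖fc j (fun θ => Om h m (θ, x))‖ ≤ C * x ^ m.natAbs := by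
  obtain ⟨C, hC, hb⟩ := fc_circle_le m.natAbs m (by simp) (contDiff_fc_GG hh j)
  exact ⟨C, hC, fun x hx => by rw [fc_Om_eq hh]; exact hb x hx⟩

lemma wgt_inv {x : ℝ} (hx : 0 < x) : wgt x⁻¹ = wgt x / x := by
  rw [wgt, wgt, eq_div_iff hx.ne', ← Real.sqrt_sq hx.le, ← Real.sqrt_mul (by positivity),
    Real.sqrt_sq hx.le]
  congr 1; field_simp; ring

lemma SphAn.swap {h : ℂ × ℂ → ℂ} (hh : SphAn h) : SphAn (fun p => h p.swap) := fun p hp =>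
  (hh p.swap (by simpa [add_comm] using hp)).comp_of_eq
    (analyticAt_snd.prod analyticAt_fst) rfl

/-- Exchanging the two coordinates corresponds to `x ↦ 1/x`. -/
lemma fc_Om_swap {h : ℂ × ℂ → ℂ} (hh : SphAn h) (j m : ℤ) {x : ℝ} (hx : 0 < x) :
    fc j (fun θ => Om h m (θ, x)) = fc j (fun θ => Om (fun p => h p.swap) (j - m) (θ, x⁻¹)) := by
  rw [fc_Om_eq hh, fc_Om_eq hh.swap]
  have hper : Function.Periodic
      (fun φ => fc j (fun θ => GG (fun p => h p.swap) (θ, (x⁻¹ : ℝ) * chr 1 φ))) (2 * π) := fun φ => by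
    simp only [chr_periodic 1 φ]
  have h1 := fc_neg_comp hper (m - j)
  rw [neg_sub] at h1
  rw [← h1, ← fc_chr_mul]
  congr 1; funext φ
  have hp : Function.Periodic (fun θ => GG (fun p => h p.swap) (θ, (x⁻¹ : ℝ) * chr 1 (-φ))) (2 * π) :=
    fun θ => GG_periodic _ _ _
  have h2 := fc_shift hp j φ
  rw [← h2]
  congr 1; funext θ
  have hw : ((wgt x : ℝ) : ℂ) ≠ 0 := wgt_ne x
  have hx' : (x : ℂ) ≠ 0 := by exact_mod_cast hx.ne'
  simp only [GG, norm_mul, norm_chr, norm_real, mul_one, norm_inv, Real.norm_of_nonneg hx.le,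
    wgt_inv hx, Prod.swap_prod_mk, chr_add_right, ofReal_inv, ofReal_div, chr_neg_right]
  have h3 := chr_mul_neg 1 φ
  congr 2
  · field_simp
    linear_combination (-chr 1 θ) * h3
  · field_simp

/-! ### The circles cut out by the lines through `(b, 0)` -/

/-- Centre of the circle `{z : |z|² + r²|z - b|² = 1}`. -/
noncomputable def cc (b r : ℝ) : ℝ := r ^ 2 * b / (1 + r ^ 2)

/-- Radius of the circle `{z : |z|² + r²|z - b|² = 1}`. -/
noncomputable def RR (b r : ℝ) : ℝ := √((1 - r ^ 2 * b ^ 2) / (1 + r ^ 2) + cc b r ^ 2)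

/-- Modulus `|r (z - b) / z|`. -/
noncomputable def Xq (b r : ℝ) (z : ℂ) : ℝ := r * ‖z - b‖ / ‖z‖

/-- Phase of `(z - b) / z`. -/
noncomputable def Uq (b : ℝ) (z : ℂ) : ℂ := (z - b) / z * (‖z‖ / ‖z - b‖ : ℝ)

/-- The holomorphic function which on the circle equals the conjugate of `r (z - b) / z`. -/
noncomputable def xib (b r : ℝ) (z : ℂ) : ℂ := r * (1 - b * z) / (1 + r ^ 2 * b * (z - b))

section
variable {b r : ℝ}

lemma norm_sq_re_im (z : ℂ) : ‖z‖ ^ 2 = z.re ^ 2 + z.im ^ 2 := by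
  rw [← Complex.normSq_eq_norm_sq, Complex.normSq_apply]; ring

lemma quad_eq (b r : ℝ) (z : ℂ) : ‖z‖ ^ 2 + r ^ 2 * ‖z - b‖ ^ 2 - 1 =
    (1 + r ^ 2) * (‖z - cc b r‖ ^ 2 - ((1 - r ^ 2 * b ^ 2) / (1 + r ^ 2) + cc b r ^ 2)) := by
  have : (1 + r ^ 2) ≠ 0 := by positivity
  simp only [norm_sq_re_im, sub_re, sub_im, ofReal_re, ofReal_im]
  rw [cc]
  field_simp
  ring

lemma RR_sq (hb0 : 0 < b) (hb1 : b < 1) (hr0 : 0 < r) (hr1 : r ≤ 1 / 4) :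
    RR b r ^ 2 = (1 - r ^ 2 * b ^ 2) / (1 + r ^ 2) + cc b r ^ 2 := by
  refine Real.sq_sqrt ?_
  have : r ^ 2 * b ^ 2 ≤ 1 := by
    have : r * b ≤ 1 := by nlinarith
    rw [← mul_pow]; exact pow_le_one₀ (by positivity) this
  have : 0 ≤ (1 - r ^ 2 * b ^ 2) / (1 + r ^ 2) := div_nonneg (by linarith) (by positivity)
  positivity

lemma RR_nonneg (b r : ℝ) : 0 ≤ RR b r := Real.sqrt_nonneg _

lemma RR_pos (hb0 : 0 < b) (hb1 : b < 1) (hr0 : 0 < r) (hr1 : r ≤ 1 / 4) : 0 < RR b r := by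
  have h := RR_sq hb0 hb1 hr0 hr1
  have : r ^ 2 * b ^ 2 < 1 := by
    have : r * b < 1 := by nlinarith
    rw [← mul_pow]; exact pow_lt_one₀ (by positivity) this (by norm_num)
  have : 0 < (1 - r ^ 2 * b ^ 2) / (1 + r ^ 2) := div_pos (by linarith) (by positivity)
  have : 0 < RR b r ^ 2 := by rw [h]; positivity
  exact (RR_nonneg b r).lt_of_ne fun h => by rw [← h] at this; simp at this

lemma RR_le_one (hb0 : 0 < b) (hb1 : b < 1) (hr0 : 0 < r) (hr1 : r ≤ 1 / 4) : RR b r ≤ 1 := by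
  have h := RR_sq hb0 hb1 hr0 hr1
  have : RR b r ^ 2 ≤ 1 := by
    have e : RR b r ^ 2 = (1 + r ^ 2 - r ^ 2 * b ^ 2) / (1 + r ^ 2) ^ 2 := by
      rw [h, cc]; field_simp; ring
    rw [e, div_le_one (by positivity)]
    nlinarith [sq_nonneg (r * b), sq_nonneg r, sq_nonneg (r ^ 2)]
  nlinarith [RR_nonneg b r]

lemma quad_sphere (hb0 : 0 < b) (hb1 : b < 1) (hr0 : 0 < r) (hr1 : r ≤ 1 / 4) {z : ℂ}
    (hz : z ∈ sphere (cc b r : ℂ) (RR b r)) : ‖z‖ ^ 2 + r ^ 2 * ‖z - b‖ ^ 2 = 1 := by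
  rw [mem_sphere, dist_eq] at hz
  have h := quad_eq b r z
  rw [hz, RR_sq hb0 hb1 hr0 hr1] at h
  linarith

lemma quad_ball (hb0 : 0 < b) (hb1 : b < 1) (hr0 : 0 < r) (hr1 : r ≤ 1 / 4) {z : ℂ} :
    ‖z‖ ^ 2 + r ^ 2 * ‖z - b‖ ^ 2 < 1 ↔ z ∈ ball (cc b r : ℂ) (RR b r) := by
  rw [mem_ball, dist_eq]
  have h := quad_eq b r z
  rw [← RR_sq hb0 hb1 hr0 hr1] at h
  have hp : 0 < 1 + r ^ 2 := by positivity
  rw [← pow_lt_pow_iff_left₀ (norm_nonneg _) (RR_nonneg b r) two_ne_zero]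
  constructor
  · intro h1
    by_contra h2
    have : 0 ≤ (1 + r ^ 2) * (‖z - cc b r‖ ^ 2 - RR b r ^ 2) := mul_nonneg hp.le (by linarith)
    linarith
  · intro h1
    have : (1 + r ^ 2) * (‖z - cc b r‖ ^ 2 - RR b r ^ 2) < 0 :=
      mul_neg_of_pos_of_neg hp (by linarith)
    linarith

lemma quad_closedBall (hb0 : 0 < b) (hb1 : b < 1) (hr0 : 0 < r) (hr1 : r ≤ 1 / 4) {z : ℂ}
    (hz : z ∈ closedBall (cc b r : ℂ) (RR b r)) : ‖z‖ ^ 2 + r ^ 2 * ‖z - b‖ ^ 2 ≤ 1 := by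
  rw [← ball_union_sphere] at hz
  rcases hz with hz | hz
  · exact ((quad_ball hb0 hb1 hr0 hr1).2 hz).le
  · exact (quad_sphere hb0 hb1 hr0 hr1 hz).le

lemma norm_le_of_closedBall (hb0 : 0 < b) (hb1 : b < 1) (hr0 : 0 < r) (hr1 : r ≤ 1 / 4) {z : ℂ}
    (hz : z ∈ closedBall (cc b r : ℂ) (RR b r)) : ‖z‖ ≤ 1 := by
  have := quad_closedBall hb0 hb1 hr0 hr1 hz
  have h2 : 0 ≤ r ^ 2 * ‖z - b‖ ^ 2 := by positivity
  nlinarith [norm_nonneg z]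

lemma zero_mem_ball (hb0 : 0 < b) (hb1 : b < 1) (hr0 : 0 < r) (hr1 : r ≤ 1 / 4) :
    (0 : ℂ) ∈ ball (cc b r : ℂ) (RR b r) := by
  rw [← quad_ball hb0 hb1 hr0 hr1]
  simp only [norm_zero, zero_sub, norm_neg, norm_real, Real.norm_eq_abs, sq_abs]
  have : r * b < 1 := by nlinarith
  have : (r * b) ^ 2 < 1 := pow_lt_one₀ (by positivity) this (by norm_num)
  linarith [mul_pow r b 2]

lemma norm_sub_le_two (hb0 : 0 < b) (hb1 : b < 1) {z : ℂ} (hz : ‖z‖ ≤ 1) : ‖z - b‖ ≤ 2 := by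
  have h := norm_sub_le z b
  rw [norm_real, Real.norm_of_nonneg hb0.le] at h
  linarith

lemma half_le_norm (hb0 : 0 < b) (hb1 : b < 1) (hr0 : 0 < r) (hr1 : r ≤ 1 / 4) {z : ℂ}
    (hz : z ∈ sphere (cc b r : ℂ) (RR b r)) : 1 / 2 ≤ ‖z‖ := by
  have h1 := quad_sphere hb0 hb1 hr0 hr1 hz
  have h2 := norm_sub_le_two hb0 hb1
    (norm_le_of_closedBall hb0 hb1 hr0 hr1 (sphere_subset_closedBall hz))
  have h3 : r ^ 2 ≤ (1 / 4) ^ 2 := by gcongr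
  have h4 : ‖z - b‖ ^ 2 ≤ 2 ^ 2 := by gcongr
  have h5 : r ^ 2 * ‖z - b‖ ^ 2 ≤ (1 / 4) ^ 2 * 2 ^ 2 := by gcongr
  nlinarith [norm_nonneg z]

lemma ne_b_of_sphere (hb0 : 0 < b) (hb1 : b < 1) (hr0 : 0 < r) (hr1 : r ≤ 1 / 4) {z : ℂ}
    (hz : z ∈ sphere (cc b r : ℂ) (RR b r)) : z - b ≠ 0 := by
  intro h
  have h1 := quad_sphere hb0 hb1 hr0 hr1 hz
  rw [h, norm_zero, sub_eq_zero.1 h, norm_real, Real.norm_of_nonneg hb0.le] at h1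
  nlinarith

lemma ne_zero_of_sphere (hb0 : 0 < b) (hb1 : b < 1) (hr0 : 0 < r) (hr1 : r ≤ 1 / 4) {z : ℂ}
    (hz : z ∈ sphere (cc b r : ℂ) (RR b r)) : z ≠ 0 := by
  rw [← norm_pos_iff]; linarith [half_le_norm hb0 hb1 hr0 hr1 hz]

lemma Xq_nonneg (hr0 : 0 < r) (z : ℂ) : 0 ≤ Xq b r z := by unfold Xq; positivity

lemma Xq_le (hb0 : 0 < b) (hb1 : b < 1) (hr0 : 0 < r) (hr1 : r ≤ 1 / 4) {z : ℂ}
    (hz : z ∈ sphere (cc b r : ℂ) (RR b r)) : Xq b r z ≤ 4 * r := by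
  have h1 := half_le_norm hb0 hb1 hr0 hr1 hz
  have h2 := norm_sub_le_two hb0 hb1
    (norm_le_of_closedBall hb0 hb1 hr0 hr1 (sphere_subset_closedBall hz))
  rw [Xq, div_le_iff₀ (by linarith)]
  nlinarith

lemma wgt_Xq {z : ℂ} (hz : z ≠ 0) (h : ‖z‖ ^ 2 + r ^ 2 * ‖z - b‖ ^ 2 = 1) :
    wgt (Xq b r z) = ‖z‖⁻¹ := by
  have hz' : 0 < ‖z‖ := norm_pos_iff.2 hz
  rw [wgt, Real.sqrt_eq_iff_mul_self_eq_of_pos (by positivity), Xq]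
  field_simp
  linarith

lemma norm_Uq {z : ℂ} (hz : z ≠ 0) (hzb : z - b ≠ 0) : ‖Uq b z‖ = 1 := by
  have h1 : 0 < ‖z‖ := norm_pos_iff.2 hz
  have h2 : 0 < ‖z - b‖ := norm_pos_iff.2 hzb
  rw [Uq, norm_mul, norm_div, norm_real, norm_div, norm_norm, norm_norm]
  field_simp

lemma Uq_mul_Xq {z : ℂ} (hz : z ≠ 0) (hzb : z - b ≠ 0) : Uq b z * Xq b r z = r * (z - b) / z := by
  have h1 : (‖z‖ : ℂ) ≠ 0 := by simpa using hz
  have h2 : (‖z - b‖ : ℂ) ≠ 0 := by simpa using hzb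
  rw [Uq, Xq]; push_cast
  field_simp

lemma den_ne (hb0 : 0 < b) (hb1 : b < 1) (hr0 : 0 < r) (hr1 : r ≤ 1 / 4) {z : ℂ} (hz : ‖z‖ ≤ 1) :
    (1 + r ^ 2 * b * (z - b) : ℂ) ≠ 0 := by
  intro h
  have h1 : ‖(r ^ 2 * b * (z - b) : ℂ)‖ = 1 := by
    rw [eq_neg_of_add_eq_zero_right h]; simp
  rw [norm_mul, norm_mul, norm_pow, norm_real, norm_real, Real.norm_of_nonneg hb0.le,
    Real.norm_of_nonneg hr0.le] at h1
  have h2 := norm_sub_le_two hb0 hb1 hz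
  have h3 : r ^ 2 ≤ (1 / 4) ^ 2 := by gcongr
  have h4 : r ^ 2 * b * ‖z - b‖ ≤ (1 / 4) ^ 2 * 1 * 2 := by gcongr
  linarith

/-- Solving the equation of the circle for `conj z` gives the conjugate of `r (z - b) / z`. -/
lemma conj_xi (hb0 : 0 < b) (hb1 : b < 1) (hr0 : 0 < r) (hr1 : r ≤ 1 / 4) {z : ℂ}
    (hz : z ∈ sphere (cc b r : ℂ) (RR b r)) :
    (starRingEnd ℂ) (r * (z - b) / z) = xib b r z := by
  have h0 := ne_zero_of_sphere hb0 hb1 hr0 hr1 hz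
  have h1 := quad_sphere hb0 hb1 hr0 hr1 hz
  have h2 := den_ne hb0 hb1 hr0 hr1
    (norm_le_of_closedBall hb0 hb1 hr0 hr1 (sphere_subset_closedBall hz))
  have h3 : (starRingEnd ℂ) z ≠ 0 := by simpa using h0
  have h4 : z * (starRingEnd ℂ) z + r ^ 2 * ((z - b) * ((starRingEnd ℂ) z - b)) = 1 := by
    have e1 := Complex.mul_conj z
    have e2 := Complex.mul_conj (z - b)
    rw [map_sub, conj_ofReal] at e2
    rw [e1, e2, Complex.normSq_eq_norm_sq, Complex.normSq_eq_norm_sq]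
    exact_mod_cast h1
  rw [xib, map_div₀, map_mul, map_sub, conj_ofReal, conj_ofReal, div_eq_div_iff h3 h2]
  linear_combination ((r:ℂ) * b) * h4

lemma Uq_pow_Xq_pow (hb0 : 0 < b) (hb1 : b < 1) (hr0 : 0 < r) (hr1 : r ≤ 1 / 4) {z : ℂ}
    (hz : z ∈ sphere (cc b r : ℂ) (RR b r)) {m : ℤ} {α β : ℕ} (hm : (α : ℤ) - β = m) :
    Uq b z ^ m * (Xq b r z : ℂ) ^ (α + β) = (r * (z - b) / z) ^ α * xib b r z ^ β := by
  have h0 := ne_zero_of_sphere hb0 hb1 hr0 hr1 hz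
  have h1 := ne_b_of_sphere hb0 hb1 hr0 hr1 hz
  have hU := norm_Uq h0 h1
  have hU0 : Uq b z ≠ 0 := by rw [← norm_ne_zero_iff, hU]; simp
  have hc : (starRingEnd ℂ) (Uq b z) = (Uq b z)⁻¹ := by
    rw [Complex.inv_def, Complex.normSq_eq_norm_sq, hU]; simp
  rw [← conj_xi hb0 hb1 hr0 hr1 hz, ← Uq_mul_Xq h0 h1, map_mul, conj_ofReal, hc, ← hm,
    zpow_sub₀ hU0, zpow_natCast, zpow_natCast, mul_pow, mul_pow, inv_pow, pow_add]
  field_simp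

end

/-! ### Contour moments on the circles -/

lemma summable_int_sq (C : ℝ) : Summable fun j : ℤ => C / (1 + (j : ℝ) ^ 2) := by
  have h : Summable fun j : ℤ => 1 / (j : ℝ) ^ 2 :=
    (Real.summable_one_div_int_pow (p := 2)).2 one_lt_two
  have h2 : Summable fun j : ℤ => 1 / (1 + (j : ℝ) ^ 2) := by
    refine Summable.of_norm_bounded_eventually h ?_
    have : ({0} : Set ℤ)ᶜ ∈ Filter.cofinite := (Set.finite_singleton 0).compl_mem_cofinite
    filter_upwards [this] with j hj
    have hj : (j : ℝ) ≠ 0 := by simpa using hj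
    have : 0 < (j : ℝ) ^ 2 := by positivity
    rw [Real.norm_of_nonneg (by positivity)]
    gcongr; linarith
  simpa [div_eq_mul_inv] using h2.mul_left C

lemma summable_nat_sq (C : ℝ) : Summable fun j : ℕ => C / (1 + (j : ℝ) ^ 2) := by
  simpa [Function.comp_def] using (summable_int_sq C).comp_injective Nat.cast_injective

/-- Fourier expansion of a periodic function with quadratically decaying coefficients and no
negative frequencies. -/
lemma hasSum_fc_nat {g : ℝ → ℂ} (hg : Function.Periodic g (2 * π)) (hc : Continuous g) {C : ℝ}
    (hb : ∀ j : ℤ, ‖fc j g‖ ≤ C / (1 + (j : ℝ) ^ 2)) (hneg : ∀ j : ℤ, j < 0 → fc j g = 0) (θ : ℝ) :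
    HasSum (fun j : ℕ => fc j g * chr j θ) (g θ) := by
  have h := hasSum_fc hg hc (Summable.of_norm_bounded (summable_int_sq C) hb) θ
  refine (Function.Injective.hasSum_iff (g := ((↑) : ℕ → ℤ)) Nat.cast_injective ?_).2 h
  intro j hj
  have : j < 0 := by
    by_contra hn
    exact hj ⟨j.toNat, by simpa using hn⟩
  rw [hneg j this, zero_mul]

section
variable {h : ℂ × ℂ → ℂ} {b r : ℝ}

/-- The points of the sphere over the circle, in the coordinates of `GG`. -/
lemma circle_coord (hr0 : 0 < r) {z : ℂ} (hz : z ≠ 0) (hzb : z - b ≠ 0)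
    (hq : ‖z‖ ^ 2 + r ^ 2 * ‖z - b‖ ^ 2 = 1) (φ : ℝ) :
    h (z, r * chr 1 φ * (z - b)) =
      GG h (arg z, Xq b r z * chr 1 (φ + arg (Uq b z))) := by
  have hX := Xq_nonneg (b := b) hr0 z
  have e1 : chr 1 (arg z) = z / ‖z‖ := by
    rw [chr_one, eq_div_iff (by simpa using hz), mul_comm, Complex.norm_mul_exp_arg_mul_I]
  have e2 : chr 1 (arg (Uq b z)) = Uq b z := by
    have := Complex.norm_mul_exp_arg_mul_I (Uq b z)
    rwa [norm_Uq hz hzb, ofReal_one, one_mul, ← chr_one] at this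
  have hn : (‖z‖ : ℂ) ≠ 0 := by simpa using hz
  have e3 := Uq_mul_Xq (r := r) hz hzb
  rw [GG, norm_mul, norm_chr, norm_real, Real.norm_of_nonneg hX, mul_one, wgt_Xq hz hq, e1,
    chr_add_right, e2]
  congr 1
  push_cast
  refine Prod.ext ?_ ?_
  · simp only; field_simp
  · simp only
    rw [show z / ‖z‖ * (Xq b r z * (chr 1 φ * Uq b z)) / (‖z‖ : ℂ)⁻¹ =
      (Uq b z * Xq b r z) * chr 1 φ * z by field_simp, e3]
    field_simp

lemma fc_circle_coord (hr0 : 0 < r) {z : ℂ} (hz : z ≠ 0) (hzb : z - b ≠ 0)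
    (hq : ‖z‖ ^ 2 + r ^ 2 * ‖z - b‖ ^ 2 = 1) (m : ℤ) :
    fc m (fun φ => h (z, r * chr 1 φ * (z - b))) = Uq b z ^ m * Om h m (arg z, Xq b r z) := by
  have e2 : chr m (arg (Uq b z)) = Uq b z ^ m := by
    have := Complex.norm_mul_exp_arg_mul_I (Uq b z)
    rw [norm_Uq hz hzb, ofReal_one, one_mul, ← chr_one] at this
    rw [chr_eq_zpow, this]
  have hp : Function.Periodic (fun φ => GG h (arg z, Xq b r z * chr 1 φ)) (2 * π) := fun φ => by
    simp only [chr_periodic 1 φ]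
  simp only [circle_coord (h := h) hr0 hz hzb hq]
  rw [Om, ← e2]
  exact fc_shift hp m _

lemma fc_Om_neg (hh : SphAn h) (hA : ∀ j : ℤ, j < 0 → ∀ ξ, fc j (fun θ => GG h (θ, ξ)) = 0)
    (m : ℤ) (x : ℝ) {j : ℤ} (hj : j < 0) : fc j (fun θ => Om h m (θ, x)) = 0 := by
  rw [fc_Om_eq hh]; simp only [hA j hj, fc_zero_fun]

/-- On the circle `√(1 + X²) = 1 / |z|`, so the weight combines with `e^{ij arg z}` to `z^j`. -/
lemma pow_mul_wc {z : ℂ} {G : ℝ × ℝ → ℂ} (hz : z ≠ 0) (hq : ‖z‖ ^ 2 + r ^ 2 * ‖z - b‖ ^ 2 = 1)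
    (j : ℕ) : z ^ j * wc j G (Xq b r z) =
      fc j (fun θ => G (θ, Xq b r z)) * chr j (arg z) := by
  have e1 : chr 1 (arg z) = z / ‖z‖ := by
    rw [chr_one, eq_div_iff (by simpa using hz), mul_comm, Complex.norm_mul_exp_arg_mul_I]
  rw [wc, chr_natCast, e1, wgt_Xq hz hq]
  push_cast
  rw [div_pow, inv_pow]; ring

/-- The averaged values of `h` over the circle, expanded in the weighted coefficients. -/
lemma hasSum_circle (hh : SphAn h) (hA : ∀ j : ℤ, j < 0 → ∀ ξ, fc j (fun θ => GG h (θ, ξ)) = 0)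
    (hr0 : 0 < r) {z : ℂ} (hz : z ≠ 0) (hzb : z - b ≠ 0)
    (hq : ‖z‖ ^ 2 + r ^ 2 * ‖z - b‖ ^ 2 = 1) (hX : Xq b r z ≤ 1) (m : ℤ) :
    HasSum (fun j : ℕ => z ^ j * (Uq b z ^ m * wc j (Om h m) (Xq b r z)))
      (fc m (fun φ => h (z, r * chr 1 φ * (z - b)))) := by
  obtain ⟨C, hC, hb⟩ := fc_decay_Icc (contDiff_Om hh m) (Om_periodic h m)
  have hc := (contDiff_Om hh m).continuous
  have h1 := hasSum_fc_nat (g := fun θ => Om h m (θ, Xq b r z)) (fun θ => Om_periodic h m θ _)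
    (by fun_prop) (fun j => hb j _ ⟨Xq_nonneg hr0 z, hX⟩) (fun j hj => fc_Om_neg hh hA m _ hj) (arg z)
  rw [fc_circle_coord hr0 hz hzb hq]
  convert! h1.mul_left (Uq b z ^ m) using 2 with j
  rw [← pow_mul_wc hz hq]; ring

/-- Normalised contour integral over the circle `{z : |z|² + r²|z - b|² = 1}`. -/
noncomputable def cint (b r : ℝ) (g : ℂ → ℂ) : ℂ :=
  fc 0 (fun t => circleMap 0 (RR b r) t * I * g (circleMap (cc b r) (RR b r) t))

lemma cint_eq (b r : ℝ) (g : ℂ → ℂ) :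
    cint b r g = (2 * π : ℂ)⁻¹ * ∮ z in C(cc b r, RR b r), g z := by
  simp [cint, fc, circleIntegral]

lemma cint_congr {g g' : ℂ → ℂ} (hg : ∀ z ∈ sphere (cc b r : ℂ) (RR b r), g z = g' z) :
    cint b r g = cint b r g' := by
  rw [cint, cint]; congr 1; funext t
  rw [hg _ (circleMap_mem_sphere _ (RR_nonneg b r) t)]

lemma cint_norm_le (hb0 : 0 < b) (hb1 : b < 1) (hr0 : 0 < r) (hr1 : r ≤ 1 / 4) {g : ℂ → ℂ} {C : ℝ}
    (hg : ∀ z ∈ sphere (cc b r : ℂ) (RR b r), ‖g z‖ ≤ C) : ‖cint b r g‖ ≤ C := by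
  refine fc_norm_le _ fun t => ?_
  have h1 := hg _ (circleMap_mem_sphere _ (RR_nonneg b r) t)
  have h2 := RR_le_one hb0 hb1 hr0 hr1
  rw [norm_mul, norm_mul, norm_I, norm_circleMap_zero, abs_of_nonneg (RR_nonneg b r), mul_one]
  have := norm_nonneg (g (circleMap (cc b r) (RR b r) t))
  have := RR_nonneg b r
  nlinarith

lemma continuous_circle {g : ℂ → ℂ} (hg : ContinuousOn g (sphere (cc b r : ℂ) (RR b r))) :
    Continuous fun t => circleMap 0 (RR b r) t * I * g (circleMap (cc b r) (RR b r) t) := by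
  have h1 : Continuous fun t => g (circleMap (cc b r) (RR b r) t) :=
    hg.comp_continuous (continuous_circleMap _ _)
      fun t => circleMap_mem_sphere _ (RR_nonneg b r) t
  exact ((continuous_circleMap 0 (RR b r)).mul continuous_const).mul h1

lemma cint_add {g g' : ℂ → ℂ} (hg : ContinuousOn g (sphere (cc b r : ℂ) (RR b r)))
    (hg' : ContinuousOn g' (sphere (cc b r : ℂ) (RR b r))) :
    cint b r (fun z => g z + g' z) = cint b r g + cint b r g' := by
  rw [cint, cint, cint, ← fc_add 0 (continuous_circle hg) (continuous_circle hg')]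
  congr 1; funext t; ring

lemma cint_const_mul (c : ℂ) (g : ℂ → ℂ) : cint b r (fun z => c * g z) = c * cint b r g := by
  rw [cint, cint, ← fc_const_mul]
  congr 1; funext t; ring

lemma cint_sum {ι : Type*} (s : Finset ι) {g : ι → ℂ → ℂ}
    (hg : ∀ i, ContinuousOn (g i) (sphere (cc b r : ℂ) (RR b r))) :
    cint b r (fun z => ∑ i ∈ s, g i z) = ∑ i ∈ s, cint b r (g i) := by
  classical
  induction s using Finset.induction_on with
  | empty => simp [cint]
  | insert i s hi ih =>
    simp only [Finset.sum_insert hi]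
    rw [cint_add (hg i) (continuousOn_finsetSum _ fun i _ => hg i), ih]

lemma differentiableAt_xib (hb0 : 0 < b) (hb1 : b < 1) (hr0 : 0 < r) (hr1 : r ≤ 1 / 4) {z : ℂ}
    (hz : ‖z‖ ≤ 1) : DifferentiableAt ℂ (xib b r) z := by
  have := den_ne hb0 hb1 hr0 hr1 hz
  unfold xib
  fun_prop (disch := assumption)

/-- For `α ≤ n` the integrand agrees on the circle with a function holomorphic in the disc. -/
lemma cint_moment_zero (hb0 : 0 < b) (hb1 : b < 1) (hr0 : 0 < r) (hr1 : r ≤ 1 / 4) {m : ℤ}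
    {α β n : ℕ} (hm : (α : ℤ) - β = m) (hn : α ≤ n) :
    cint b r (fun z => z ^ n * (Uq b z ^ m * (Xq b r z : ℂ) ^ (α + β))) = 0 := by
  have h1 : ∀ z ∈ sphere (cc b r : ℂ) (RR b r),
      z ^ n * (Uq b z ^ m * (Xq b r z : ℂ) ^ (α + β)) =
        z ^ (n - α) * (r * (z - b)) ^ α * xib b r z ^ β := by
    intro z hz
    have h0 := ne_zero_of_sphere hb0 hb1 hr0 hr1 hz
    rw [Uq_pow_Xq_pow hb0 hb1 hr0 hr1 hz hm, div_pow]
    have : z ^ n = z ^ (n - α) * z ^ α := by rw [← pow_add]; congr 1; omega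
    rw [this]; field_simp
  have hd : ∀ z ∈ closedBall (cc b r : ℂ) (RR b r), DifferentiableAt ℂ
      (fun z => z ^ (n - α) * (r * (z - b)) ^ α * xib b r z ^ β) z := fun z hz => by
    have := differentiableAt_xib hb0 hb1 hr0 hr1 (norm_le_of_closedBall hb0 hb1 hr0 hr1 hz)
    fun_prop
  rw [cint_congr h1, cint_eq, Complex.circleIntegral_eq_zero_of_differentiable_on_off_countable
    (RR_nonneg b r) countable_empty (fun z hz => (hd z hz).continuousAt.continuousWithinAt)
    (fun z hz => hd z (ball_subset_closedBall hz.1)), mul_zero]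

/-- For `α = n + 1` the integrand agrees on the circle with a function having a simple pole at `0`. -/
lemma cint_moment (hb0 : 0 < b) (hb1 : b < 1) (hr0 : 0 < r) (hr1 : r ≤ 1 / 4) {m : ℤ}
    {α β n : ℕ} (hm : (α : ℤ) - β = m) (hn : α = n + 1) :
    cint b r (fun z => z ^ n * (Uq b z ^ m * (Xq b r z : ℂ) ^ (α + β))) =
      I * ((r * -b) ^ α * (r / (1 - r ^ 2 * b ^ 2)) ^ β) := by
  have h1 : ∀ z ∈ sphere (cc b r : ℂ) (RR b r),
      z ^ n * (Uq b z ^ m * (Xq b r z : ℂ) ^ (α + β)) =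
        (z - 0)⁻¹ • ((r * (z - b)) ^ α * xib b r z ^ β) := by
    intro z hz
    have h0 := ne_zero_of_sphere hb0 hb1 hr0 hr1 hz
    rw [Uq_pow_Xq_pow hb0 hb1 hr0 hr1 hz hm, div_pow, smul_eq_mul, sub_zero]
    have : z ^ α = z ^ n * z := by rw [hn, pow_succ]
    rw [this]; field_simp
  have hd : ∀ z ∈ closedBall (cc b r : ℂ) (RR b r), DifferentiableAt ℂ
      (fun z => (r * (z - b)) ^ α * xib b r z ^ β) z := fun z hz => by
    have := differentiableAt_xib hb0 hb1 hr0 hr1 (norm_le_of_closedBall hb0 hb1 hr0 hr1 hz)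
    fun_prop
  rw [cint_congr h1, cint_eq, Complex.circleIntegral_sub_inv_smul_of_differentiable_on_off_countable
    countable_empty (zero_mem_ball hb0 hb1 hr0 hr1)
    (fun z hz => (hd z hz).continuousAt.continuousWithinAt)
    (fun z hz => hd z (ball_subset_closedBall hz.1))]
  have hπ : (π : ℂ) ≠ 0 := by exact_mod_cast Real.pi_ne_zero
  have e : xib b r 0 = r / (1 - r ^ 2 * b ^ 2) := by
    rw [xib]; congr 1
    · ring
    · ring
  rw [e, smul_eq_mul, zero_sub]
  field_simp

lemma continuousOn_Uq_Xq (hb0 : 0 < b) (hb1 : b < 1) (hr0 : 0 < r) (hr1 : r ≤ 1 / 4) (m : ℤ) :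
    ContinuousOn (fun z => Uq b z ^ m) (sphere (cc b r : ℂ) (RR b r)) ∧
    ContinuousOn (fun z => Xq b r z) (sphere (cc b r : ℂ) (RR b r)) := by
  have h0 : ∀ z ∈ sphere (cc b r : ℂ) (RR b r), z ≠ 0 := fun z hz =>
    ne_zero_of_sphere hb0 hb1 hr0 hr1 hz
  have h1 : ∀ z ∈ sphere (cc b r : ℂ) (RR b r), z - b ≠ 0 := fun z hz =>
    ne_b_of_sphere hb0 hb1 hr0 hr1 hz
  constructor
  · refine ContinuousOn.zpow₀ ?_ m fun z hz => Or.inl ?_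
    · unfold Uq
      refine ContinuousOn.mul (ContinuousOn.div (by fun_prop) (by fun_prop) h0) ?_
      exact continuous_ofReal.comp_continuousOn (ContinuousOn.div (by fun_prop) (by fun_prop)
        fun z hz => by simpa using h1 z hz)
    · rw [← norm_ne_zero_iff, norm_Uq (h0 z hz) (h1 z hz)]; simp
  · unfold Xq
    exact ContinuousOn.div (by fun_prop) (by fun_prop) fun z hz => by simpa using h0 z hz

end

/-! ### Vanishing of Taylor coefficients -/

section
variable {h : ℂ × ℂ → ℂ} {b r : ℝ}

/-- `nab^[d] (Om h m)` computes the `d`-th derivative of `wc J (Om h m)`; it vanishes below order `|m|`. -/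
lemma Om_iter_zero_of_lt (hh : SphAn h) (m : ℤ) (J d : ℕ) (hd : d < m.natAbs) :
    wc J (nab^[d] (Om h m)) 0 = 0 := by
  obtain ⟨C, hC, hb⟩ := fc_Om_le hh J m
  refine chain_vanish (F := fun d => wc J (nab^[d] (Om h m))) (n := m.natAbs) (C := √2 ^ J * C)
    (hasDerivAt_wc_iter (contDiff_Om hh m) (Om_periodic h m) J) (fun x hx => ?_) d hd
  have h1 := hb x ⟨hx.1.le, hx.2⟩
  have h2 : wgt x ≤ √2 := by
    refine (wgt_mono hx.1.le hx.2).trans (le_of_eq ?_)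
    rw [wgt]; norm_num
  simp only [Function.iterate_zero, id_eq, wc]
  rw [norm_mul, norm_pow, norm_real, Real.norm_of_nonneg (wgt_pos x).le, mul_assoc]
  have := (wgt_pos x).le
  gcongr

lemma Om_iter_zero_of_parity (hh : SphAn h) (m : ℤ) (J d : ℕ) (hd : ¬ Even (m + d)) :
    wc J (nab^[d] (Om h m)) 0 = 0 := by
  have h1 := chain_parity (F := fun d => wc J (nab^[d] (Om h m)))
    (hasDerivAt_wc_iter (contDiff_Om hh m) (Om_periodic h m) J) (ε := (-1) ^ m)
    (fun x => by simpa using wc_Om_neg h m J x) d 0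
  rw [← zpow_natCast, ← zpow_add₀ (by simp), (Int.not_even_iff_odd.1 hd).neg_one_zpow] at h1
  simp only [neg_zero] at h1
  have : 2 * wc J (nab^[d] (Om h m)) 0 = 0 := by linear_combination h1
  simpa using this

/-- The Taylor coefficient of order `d` can be nonzero only if `d = α + β` with `α - β = m`. -/
lemma Om_iter_zero (hh : SphAn h) (m : ℤ) (J d : ℕ)
    (hd : ∀ α β : ℕ, (α : ℤ) - β = m → α + β ≠ d) : wc J (nab^[d] (Om h m)) 0 = 0 := by
  by_cases h1 : d < m.natAbs
  · exact Om_iter_zero_of_lt hh m J d h1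
  · by_cases h2 : Even (m + d)
    · obtain ⟨k, hk⟩ := h2
      exact absurd (show k.toNat + (k - m).toNat = d by omega) (hd _ _ (by omega))
    · exact Om_iter_zero_of_parity hh m J d h2

/-- The averaged moment condition on the circle. -/
lemma cint_average (hh : SphAn h) (hb0 : 0 < b) (hb1 : b < 1) (hr0 : 0 < r) (hr1 : r ≤ 1 / 4)
    (hB : ∀ η : ℂ, ‖η‖ = r → ∀ k : ℕ, ∮ z in C(cc b r, RR b r), h (z, η * (z - b)) * z ^ k = 0)
    (m : ℤ) (k : ℕ) :
    cint b r (fun z => z ^ k * fc m (fun φ => h (z, r * chr 1 φ * (z - b)))) = 0 := by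
  let Z : ℝ → ℂ := circleMap (cc b r) (RR b r)
  have hZ : Continuous Z := continuous_circleMap _ _
  have hZ0 := continuous_circleMap 0 (RR b r)
  have hc := continuous_chr 1
  have hH : Continuous (Function.uncurry fun (t φ : ℝ) =>
      circleMap 0 (RR b r) t * I * (Z t ^ k * h (Z t, r * chr 1 φ * (Z t - b)))) := by
    have h1 : Continuous fun p : ℝ × ℝ => h (Z p.1, r * chr 1 p.2 * (Z p.1 - b)) := by
      refine continuous_iff_continuousAt.2 fun p => ?_
      refine ContinuousAt.comp (f := fun p : ℝ × ℝ => (Z p.1, r * chr 1 p.2 * (Z p.1 - b))) (g := h)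
        (hh _ ?_).continuousAt (by fun_prop)
      have := quad_sphere hb0 hb1 hr0 hr1 (circleMap_mem_sphere _ (RR_nonneg b r) p.1)
      simp only [norm_mul, norm_chr, norm_real, Real.norm_of_nonneg hr0.le, mul_one, mul_pow]
      exact this
    have h2 : Continuous fun p : ℝ × ℝ => circleMap 0 (RR b r) p.1 := hZ0.comp continuous_fst
    unfold Function.uncurry
    exact (h2.mul continuous_const).mul (((hZ.comp continuous_fst).pow k).mul h1)
  have h2 := fc_swap hH 0 m
  have h3 : ∀ φ : ℝ, fc 0 (fun t => circleMap 0 (RR b r) t * I *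
      (Z t ^ k * h (Z t, r * chr 1 φ * (Z t - b)))) = 0 := fun φ => by
    have h4 := hB (r * chr 1 φ) (by simp [abs_of_pos hr0]) k
    have h5 := cint_eq b r (fun z => h (z, r * chr 1 φ * (z - b)) * z ^ k)
    rw [h4, mul_zero] at h5
    refine Eq.trans ?_ h5
    unfold cint
    congr 1; funext t; simp only [Z]; ring
  simp only [h3, fc_zero_fun] at h2
  rw [← h2, cint]
  congr 1; funext t
  rw [fc_const_mul, fc_const_mul]

/-- Statement that the `j`-th weighted coefficient is a monomial of degree `m ∈ [0, j]`. -/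
def IsMon (h : ℂ × ℂ → ℂ) (m : ℤ) (j : ℕ) : Prop :=
  ∃ γ : ℂ, ∀ x : ℝ, wc j (Om h m) x = if 0 ≤ m ∧ m ≤ j then γ * (x : ℂ) ^ m.toNat else 0

/-- Bound, uniform in `j` up to the weight, for the `d`-th derivatives of the weighted coefficients. -/
lemma wc_iter_bound (hh : SphAn h) (m : ℤ) (d : ℕ) : ∃ C, 0 ≤ C ∧ ∀ j : ℕ, ∀ X ∈ Icc (0:ℝ) 1,
    ∀ x ∈ Icc 0 X, ‖wc j (nab^[d] (Om h m)) x‖ ≤ wgt X ^ j * (C / (1 + (j : ℝ) ^ 2)) := by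
  have hi := iter_nab (contDiff_Om hh m) (Om_periodic h m) d
  obtain ⟨C, hC, hb⟩ := fc_decay_Icc hi.1 hi.2
  refine ⟨C, hC, fun j X hX x hx => ?_⟩
  have h1 := hb j x ⟨hx.1, hx.2.trans hX.2⟩
  have h2 := wgt_mono hx.1 hx.2
  have h3 := (wgt_pos x).le
  have h4 := (wgt_pos X).le
  rw [wc, norm_mul, norm_pow, norm_real, Real.norm_of_nonneg h3]
  rw [Int.cast_natCast] at h1
  gcongr

/-- Taylor remainder of the `j`-th weighted coefficient on the circle. -/
lemma remainder_le (hh : SphAn h) (m : ℤ) (N : ℕ) : ∃ C, 0 ≤ C ∧ ∀ j : ℕ, ∀ {b r : ℝ},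
    0 < b → b < 1 → 0 < r → r ≤ 1 / 4 → ∀ z ∈ sphere (cc b r : ℂ) (RR b r), ∀ k : ℕ,
    ‖z ^ (k + j) * (Uq b z ^ m * (wc j (Om h m) (Xq b r z) -
      ∑ d ∈ Finset.range N, wc j (nab^[d] (Om h m)) 0 / (d.factorial : ℂ) * (Xq b r z : ℂ) ^ d))‖ ≤
      C * r ^ N / (1 + (j : ℝ) ^ 2) := by
  obtain ⟨C, hC, hb⟩ := wc_iter_bound hh m N
  refine ⟨C * 4 ^ N, by positivity, fun j b r hb0 hb1 hr0 hr1 z hz k => ?_⟩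
  have hX0 := Xq_nonneg (b := b) hr0 z
  have hX := Xq_le hb0 hb1 hr0 hr1 hz
  have h0 := ne_zero_of_sphere hb0 hb1 hr0 hr1 hz
  have h1 := ne_b_of_sphere hb0 hb1 hr0 hr1 hz
  have hq := quad_sphere hb0 hb1 hr0 hr1 hz
  have hz1 := norm_le_of_closedBall hb0 hb1 hr0 hr1 (sphere_subset_closedBall hz)
  have hw := (wgt_pos (Xq b r z)).le
  have ht := taylor_chain N (X := Xq b r z) (by positivity)
    (fun d => wc j (nab^[d] (Om h m)))
    (hasDerivAt_wc_iter (contDiff_Om hh m) (Om_periodic h m) j)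
    (hb j (Xq b r z) ⟨hX0, by linarith⟩) (Xq b r z) ⟨hX0, le_rfl⟩
  simp only [Function.iterate_zero, id_eq] at ht
  rw [norm_mul, norm_mul, norm_zpow, norm_Uq h0 h1, one_zpow, one_mul, norm_pow, pow_add]
  have hk : ‖z‖ ^ k ≤ 1 := pow_le_one₀ (norm_nonneg _) hz1
  have e : ‖z‖ ^ j * wgt (Xq b r z) ^ j = 1 := by
    rw [wgt_Xq h0 hq, ← mul_pow, mul_inv_cancel₀ (norm_ne_zero_iff.2 h0), one_pow]
  calc _ ≤ 1 * ‖z‖ ^ j * (wgt (Xq b r z) ^ j * (C / (1 + (j : ℝ) ^ 2)) * Xq b r z ^ N) := by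
        gcongr
    _ = (‖z‖ ^ j * wgt (Xq b r z) ^ j) * (C / (1 + (j : ℝ) ^ 2)) * Xq b r z ^ N := by ring
    _ ≤ (C / (1 + (j : ℝ) ^ 2)) * (4 * r) ^ N := by
        rw [e, one_mul]; gcongr
    _ = _ := by rw [mul_pow]; ring

/-- If the coefficients of index `j < J` are monomials, the Taylor coefficients of order `α + β` of the
`J`-th one vanish for `α - β = m`, `α > J`: in the moment of order `k = α - 1 - J` this coefficient is
multiplied by a quantity of exact order `r^{α+β}`, all other contributions being `O(r^{α+β+1})`. -/
lemma taylor_coeff_zero (hh : SphAn h)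
    (hA : ∀ j : ℤ, j < 0 → ∀ ξ, fc j (fun θ => GG h (θ, ξ)) = 0) (hb0 : 0 < b) (hb1 : b < 1)
    (hB : ∀ r : ℝ, 0 < r → r ≤ 1 / 4 → ∀ η : ℂ, ‖η‖ = r → ∀ k : ℕ,
      ∮ z in C(cc b r, RR b r), h (z, η * (z - b)) * z ^ k = 0)
    (m : ℤ) (J : ℕ) (ih : ∀ j < J, IsMon h m j) {α β : ℕ} (hm : (α : ℤ) - β = m) (hα : J < α) :
    wc J (nab^[α + β] (Om h m)) 0 = 0 := by
  obtain ⟨C, hC, hrem⟩ := remainder_le hh m (α + β + 1)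
  -- the case `N = 0` dominates the terms of the series themselves
  obtain ⟨C₀, hC₀, hbd⟩ := remainder_le hh m 0
  obtain ⟨k, hk⟩ := Nat.exists_eq_add_of_lt hα
  let A : ℂ := wc J (nab^[α + β] (Om h m)) 0 / ((α + β).factorial : ℂ)
  let S : ℝ := ∑' j : ℕ, 1 / (1 + (j : ℝ) ^ 2)
  have key : ∀ r ∈ Ioc (0:ℝ) (1 / 4), ‖A‖ * b ^ α ≤ C * S * r := by
    intro r ⟨hr0, hr1⟩
    let T : ℂ := I * ((r * -b) ^ α * (r / (1 - r ^ 2 * b ^ 2)) ^ β)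
    let g : ℕ → ℂ → ℂ := fun j z => z ^ (k + j) * (Uq b z ^ m * wc j (Om h m) (Xq b r z))
    obtain ⟨hU, hXc⟩ := continuousOn_Uq_Xq hb0 hb1 hr0 hr1 m
    have hXc' : ContinuousOn (fun z => (Xq b r z : ℂ)) (sphere (cc b r : ℂ) (RR b r)) :=
      continuous_ofReal.comp_continuousOn hXc
    have hwc : ∀ j, Continuous (wc j (Om h m)) := fun j => continuous_iff_continuousAt.2 fun x =>
      (hasDerivAt_wc_iter (contDiff_Om hh m) (Om_periodic h m) j 0 x).continuousAt
    have hgc : ∀ j, ContinuousOn (g j) (sphere (cc b r : ℂ) (RR b r)) := fun j =>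
      (by fun_prop : Continuous fun z : ℂ => z ^ (k + j)).continuousOn.mul
        (hU.mul ((hwc j).comp_continuousOn hXc))
    -- the contour integrals of the terms sum up to zero
    have hsum : HasSum (fun j => cint b r (g j)) 0 := by
      suffices H : HasSum (fun j => cint b r (g j))
          (cint b r (fun z => z ^ k * fc m (fun φ => h (z, r * chr 1 φ * (z - b))))) by
        rwa [cint_average hh hb0 hb1 hr0 hr1 (hB r hr0 hr1) m k] at H
      unfold cint fc
      refine HasSum.mul_left _ (hasSum_intervalIntegral_of_bound
        (summable_nat_sq C₀) (fun j => ?_) (fun j t _ => ?_) (fun t _ => ?_))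
      · exact (continuous_circle (hgc j)).mul (continuous_chr _)
      · have hz := circleMap_mem_sphere (cc b r : ℂ) (RR_nonneg b r) t
        have h1 := hbd j hb0 hb1 hr0 hr1 _ hz k
        simp only [Finset.range_zero, Finset.sum_empty, sub_zero, pow_zero, mul_one] at h1
        rw [norm_mul, norm_chr, mul_one, norm_mul, norm_mul, norm_I, norm_circleMap_zero,
          abs_of_nonneg (RR_nonneg b r), mul_one]
        exact (mul_le_of_le_one_left (norm_nonneg _) (RR_le_one hb0 hb1 hr0 hr1)).trans h1
      · have hz := circleMap_mem_sphere (cc b r : ℂ) (RR_nonneg b r) t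
        refine HasSum.mul_right _ (HasSum.mul_left _ ?_)
        have hX := Xq_le hb0 hb1 hr0 hr1 hz
        have h1 := hasSum_circle hh hA hr0 (ne_zero_of_sphere hb0 hb1 hr0 hr1 hz)
          (ne_b_of_sphere hb0 hb1 hr0 hr1 hz) (quad_sphere hb0 hb1 hr0 hr1 hz) (by linarith) m
        have h2 := h1.mul_left (circleMap (cc b r) (RR b r) t ^ k)
        have e : (fun j => g j (circleMap (cc b r) (RR b r) t)) = fun j =>
            circleMap (cc b r) (RR b r) t ^ k * (circleMap (cc b r) (RR b r) t ^ j *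
              (Uq b (circleMap (cc b r) (RR b r) t) ^ m *
                wc j (Om h m) (Xq b r (circleMap (cc b r) (RR b r) t)))) := by
          funext j; simp only [g]; ring
        rw [← e] at h2
        exact h2
    -- each integral is, up to order `r ^ (α + β + 1)`, given by the moment of order `α + β`
    have hterm : ∀ j, ‖cint b r (g j) - (if j = J then A * T else 0)‖ ≤
        C * r ^ (α + β + 1) * (1 / (1 + (j : ℝ) ^ 2)) := by
      intro j
      rw [mul_one_div]
      rcases lt_or_ge j J with hj | hj
      · rw [if_neg hj.ne, sub_zero]
        have : cint b r (g j) = 0 := by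
          obtain ⟨γ, hγ⟩ := ih j hj
          by_cases hmj : 0 ≤ m ∧ m ≤ j
          · have := cint_moment_zero hb0 hb1 hr0 hr1 (m := m) (α := m.toNat) (β := 0) (n := k + j)
              (by omega) (by omega)
            rw [← mul_zero γ, ← this, ← cint_const_mul]
            congr 1; funext z
            simp only [g, hγ, if_pos hmj, add_zero]; ring
          · simp [g, hγ, if_neg hmj, cint]
        rw [this, norm_zero]; positivity
      · let a : ℕ → ℂ := fun d => wc j (nab^[d] (Om h m)) 0 / (d.factorial : ℂ)
        let M : ℕ → ℂ → ℂ := fun d z => z ^ (k + j) * (Uq b z ^ m * (Xq b r z : ℂ) ^ d)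
        have hMc : ∀ d, ContinuousOn (M d) (sphere (cc b r : ℂ) (RR b r)) := fun d =>
          (by fun_prop : Continuous fun z : ℂ => z ^ (k + j)).continuousOn.mul (hU.mul (hXc'.pow d))
        have hMz : ∑ d ∈ Finset.range (α + β + 1), a d * cint b r (M d) =
            if j = J then A * T else 0 := by
          rw [Finset.sum_range_succ, Finset.sum_eq_zero, zero_add]
          · split_ifs with hjJ
            · simp only [M, a, T, A]
              rw [cint_moment hb0 hb1 hr0 hr1 hm (by omega), hjJ]
            · simp only [M]
              rw [cint_moment_zero hb0 hb1 hr0 hr1 hm (by omega), mul_zero]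
          · intro d hd
            by_cases hex : ∃ α' β' : ℕ, (α' : ℤ) - β' = m ∧ α' + β' = d
            · obtain ⟨α', β', hm', rfl⟩ := hex
              have := Finset.mem_range.1 hd
              simp only [M]
              rw [cint_moment_zero hb0 hb1 hr0 hr1 hm' (by omega), mul_zero]
            · push Not at hex
              simp only [a]
              rw [Om_iter_zero hh m j d hex, zero_div, zero_mul]
        have hsplit : cint b r (g j) = cint b r (fun z => z ^ (k + j) * (Uq b z ^ m *
            (wc j (Om h m) (Xq b r z) - ∑ d ∈ Finset.range (α + β + 1), a d * (Xq b r z : ℂ) ^ d)))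
            + ∑ d ∈ Finset.range (α + β + 1), a d * cint b r (M d) := by
          simp only [← cint_const_mul]
          rw [← cint_sum (g := fun d z => a d * M d z) _ fun d => continuousOn_const.mul (hMc d), ← cint_add]
          · congr 1; funext z
            simp only [g, M, mul_sub, Finset.mul_sum]
            rw [sub_add, sub_eq_self.2]
            rw [← Finset.sum_sub_distrib]
            exact Finset.sum_eq_zero fun d _ => by ring
          · refine (by fun_prop : Continuous fun z : ℂ => z ^ (k + j)).continuousOn.mul
              (hU.mul (((hwc j).comp_continuousOn hXc).sub ?_))
            exact continuousOn_finsetSum _ fun d _ => continuousOn_const.mul (hXc'.pow d)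
          · exact continuousOn_finsetSum _ fun d _ => continuousOn_const.mul (hMc d)
        rw [hsplit, hMz, add_sub_cancel_right]
        exact cint_norm_le hb0 hb1 hr0 hr1 fun z hz => hrem j hb0 hb1 hr0 hr1 z hz k
    have hS : Summable fun j : ℕ => 1 / (1 + (j : ℝ) ^ 2) := summable_nat_sq 1
    have h1 := hsum.sub (hasSum_ite_eq J (A * T))
    have h2 : ‖A * T‖ ≤ C * r ^ (α + β + 1) * S := by
      have := h1.norm_le_of_bounded (hS.hasSum.mul_left (C * r ^ (α + β + 1))) hterm
      simpa only [zero_sub, norm_neg] using this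
    have hrb : r ^ 2 * b ^ 2 < 1 := by
      have : r * b < 1 := by nlinarith
      rw [← mul_pow]; exact pow_lt_one₀ (by positivity) this (by norm_num)
    have hT : b ^ α * r ^ (α + β) ≤ ‖T‖ := by
      have e : (r : ℂ) / (1 - r ^ 2 * b ^ 2) = ((r / (1 - r ^ 2 * b ^ 2) : ℝ) : ℂ) := by push_cast; rfl
      simp only [T]
      rw [e, norm_mul, norm_I, one_mul, norm_mul, norm_pow, norm_pow, norm_mul, norm_neg, norm_real,
        norm_real, norm_real, Real.norm_of_nonneg hr0.le, Real.norm_of_nonneg hb0.le,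
        Real.norm_of_nonneg (div_nonneg hr0.le (by linarith)), mul_pow, pow_add]
      have : r ≤ r / (1 - r ^ 2 * b ^ 2) := by
        rw [le_div_iff₀ (by linarith)]; nlinarith [sq_nonneg (r * b)]
      calc b ^ α * (r ^ α * r ^ β) = r ^ α * b ^ α * r ^ β := by ring
        _ ≤ _ := by gcongr
    rw [norm_mul] at h2
    have hp : 0 < r ^ (α + β) := by positivity
    have h3 : ‖A‖ * (b ^ α * r ^ (α + β)) ≤ C * r ^ (α + β + 1) * S :=
      (mul_le_mul_of_nonneg_left hT (norm_nonneg _)).trans h2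
    rw [pow_succ] at h3
    exact le_of_mul_le_mul_right (by linarith) hp
  have h4 := le_zero_of_le_mul (by norm_num) key
  have h5 : ‖A‖ = 0 := by
    have : 0 < b ^ α := by positivity
    nlinarith [norm_nonneg A]
  have h6 : A = 0 := norm_eq_zero.1 h5
  simp only [A, div_eq_zero_iff] at h6
  exact h6.resolve_right (by exact_mod_cast Nat.factorial_ne_zero _)

end

/-! ### The weighted coefficients are monomials -/

/-- A polynomial which is `O(yⁿ)` at `0⁺` has no coefficients below order `n`. -/
lemma poly_coeff_zero (Q : Polynomial ℂ) {n : ℕ} {C : ℝ}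
    (hb : ∀ y ∈ Ioc (0:ℝ) 1, ‖Q.eval (y : ℂ)‖ ≤ C * y ^ n) : ∀ d < n, Q.coeff d = 0 := by
  intro d hd
  have h := chain_vanish (F := fun d (y : ℝ) => (Polynomial.derivative^[d] Q).eval (y : ℂ))
    (n := n) (C := C) (fun d y => by
      rw [Function.iterate_succ_apply']
      exact (Polynomial.hasDerivAt _ _).comp_ofReal) (by simpa using hb) d hd
  simp only [ofReal_zero, ← Polynomial.coeff_zero_eq_eval_zero,
    Polynomial.coeff_iterate_derivative] at h
  rw [zero_add, Nat.descFactorial_self, nsmul_eq_mul, mul_eq_zero] at h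
  exact h.resolve_left (by exact_mod_cast Nat.factorial_ne_zero _)

section
variable {h : ℂ × ℂ → ℂ} {b : ℝ}

lemma analyticAt_wc_Om (hh : SphAn h) (m : ℤ) (J : ℕ) (x : ℝ) :
    AnalyticAt ℝ (wc J (Om h m)) x := by
  have h1 := (ofRealCLM.analyticAt (wgt x)).comp (analyticAt_wgt x)
  exact (h1.pow J).mul (analyticAt_fc (analyticAt_Om hh m) J x)

/-- If almost all Taylor coefficients vanish, the coefficient is a polynomial. -/
lemma wc_eq_poly (hh : SphAn h) (m : ℤ) (J D : ℕ)
    (hD : ∀ d, D ≤ d → wc J (nab^[d] (Om h m)) 0 = 0) (x : ℝ) :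
    wc J (Om h m) x =
      ∑ d ∈ Finset.range D, wc J (nab^[d] (Om h m)) 0 / (d.factorial : ℂ) * (x : ℂ) ^ d := by
  rw [← sub_eq_zero]
  refine analytic_flat_eq_zero (h := fun x : ℝ => wc J (Om h m) x -
    ∑ d ∈ Finset.range D, wc J (nab^[d] (Om h m)) 0 / (d.factorial : ℂ) * (x : ℂ) ^ d)
    (fun x => (analyticAt_wc_Om hh m J x).sub ?_) (fun N => ?_) x
  · exact Finset.analyticAt_fun_sum _ fun d _ =>
      analyticAt_const.mul ((ofRealCLM.analyticAt x).pow d)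
  · have hF := hasDerivAt_wc_iter (contDiff_Om hh m) (Om_periodic h m) J
    obtain ⟨C, hC, hb⟩ := exists_bound_Icc (F := wc J (nab^[max N D] (Om h m)))
      (continuous_iff_continuousAt.2 fun x => (hF _ x).continuousAt) 0 1
    refine ⟨C, fun x hx => ?_⟩
    have ht := taylor_chain (max N D) hC (fun d => wc J (nab^[d] (Om h m))) hF hb x hx
    have e : ∑ d ∈ Finset.range D, wc J (nab^[d] (Om h m)) 0 / (d.factorial : ℂ) * (x : ℂ) ^ d =
        ∑ d ∈ Finset.range (max N D),
          wc J (nab^[d] (Om h m)) 0 / (d.factorial : ℂ) * (x : ℂ) ^ d := by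
      refine Finset.sum_subset (Finset.range_mono (le_max_right _ _)) fun d _ hd => ?_
      rw [hD d (by simpa using hd)]; simp
    rw [e]
    refine ht.trans ?_
    have : x ^ (max N D) ≤ x ^ N := pow_le_pow_of_le_one hx.1 hx.2 (le_max_left _ _)
    gcongr

/-- Growth of the weighted coefficient at infinity, in terms of `y = 1/x`. -/
lemma wc_growth (hh : SphAn h) (m : ℤ) (J : ℕ) (hm : m ≤ J) : ∃ C, 0 ≤ C ∧
    ∀ y ∈ Ioc (0:ℝ) 1, ‖wc J (Om h m) y⁻¹‖ ≤ C * (y⁻¹) ^ J * y ^ (J - m).toNat := by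
  obtain ⟨C, hC, hb⟩ := fc_Om_le hh.swap J (J - m)
  refine ⟨√2 ^ J * C, by positivity, fun y hy => ?_⟩
  have h1 := hb y ⟨hy.1.le, hy.2⟩
  have e : (J - m : ℤ).natAbs = (J - m).toNat := by omega
  have h2 : wgt y⁻¹ ≤ √2 * y⁻¹ := by
    rw [wgt_inv hy.1, div_eq_mul_inv]
    have := (wgt_mono hy.1.le hy.2)
    have h3 : wgt 1 = √2 := by rw [wgt]; norm_num
    rw [h3] at this
    have := hy.1
    gcongr
  have h4 := (wgt_pos y⁻¹).le
  have hp : 0 ≤ √2 * y⁻¹ := by have := hy.1; positivity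
  rw [wc, fc_Om_swap hh _ _ (inv_pos.2 hy.1), inv_inv, norm_mul, norm_pow, norm_real,
    Real.norm_of_nonneg h4]
  rw [e] at h1
  calc _ ≤ (√2 * y⁻¹) ^ J * (C * y ^ (J - m).toNat) := by gcongr
    _ = _ := by rw [mul_pow]; ring

/-- Every weighted coefficient is a monomial of degree `m ∈ [0, J]`: it is a polynomial because its
Taylor coefficients vanish from some order on, it vanishes to order `|m|` at `0`, and its growth at
infinity excludes degrees above `m`. -/
theorem isMon (hh : SphAn h)
    (hA : ∀ j : ℤ, j < 0 → ∀ ξ, fc j (fun θ => GG h (θ, ξ)) = 0) (hb0 : 0 < b) (hb1 : b < 1)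
    (hB : ∀ r : ℝ, 0 < r → r ≤ 1 / 4 → ∀ η : ℂ, ‖η‖ = r → ∀ k : ℕ,
      ∮ z in C(cc b r, RR b r), h (z, η * (z - b)) * z ^ k = 0)
    (m : ℤ) (J : ℕ) : IsMon h m J := by
  induction J using Nat.strong_induction_on with
  | _ J ih =>
  let a : ℕ → ℂ := fun d => wc J (nab^[d] (Om h m)) 0 / (d.factorial : ℂ)
  have h1 : ∀ d, (∀ α β : ℕ, (α : ℤ) - β = m → α ≤ J → α + β ≠ d) →
      wc J (nab^[d] (Om h m)) 0 = 0 := by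
    intro d hd
    by_cases hex : ∃ α β : ℕ, (α : ℤ) - β = m ∧ α + β = d
    · obtain ⟨α, β, hm, rfl⟩ := hex
      refine taylor_coeff_zero hh hA hb0 hb1 hB m J ih hm ?_
      by_contra hle
      exact hd α β hm (not_lt.1 hle) rfl
    · push Not at hex
      exact Om_iter_zero hh m J d hex
  -- `α + β = 2 α - m ≤ 2 J + |m|` when `α ≤ J`
  let D : ℕ := 2 * J + m.natAbs + 1
  have hpoly := wc_eq_poly hh m J D fun d hd => h1 d fun α β hm hα => by omega
  have h2 : ∀ d : ℕ, (d : ℤ) ≠ m → a d = 0 := by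
    intro d hd
    rcases lt_trichotomy (d : ℤ) m with hlt | heq | hgt
    · simp only [a]; rw [Om_iter_zero_of_lt hh m J d (by omega), zero_div]
    · exact absurd heq hd
    · by_cases hdD : d < D
      swap
      · simp only [a]; rw [h1 d fun α β hm hα => by omega, zero_div]
      by_cases hmJ : (J : ℤ) < m
      · simp only [a]; rw [h1 d fun α β hm hα => by omega, zero_div]
      · -- the reversed polynomial `y ^ (D - 1) P(1 / y)` is small at `0`
        obtain ⟨C, hC, hg⟩ := wc_growth hh m J (not_lt.1 hmJ)
        let Q : Polynomial ℂ := ∑ d ∈ Finset.range D, Polynomial.monomial (D - 1 - d) (a d)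
        have hcoef : Q.coeff (D - 1 - d) = a d := by
          simp only [Q, Polynomial.finsetSum_coeff, Polynomial.coeff_monomial]
          rw [Finset.sum_eq_single d]
          · simp
          · intro d' hd' hne
            have := Finset.mem_range.1 hd'
            exact if_neg (by omega)
          · intro hn; exact absurd (Finset.mem_range.2 hdD) hn
        rw [← hcoef]
        refine poly_coeff_zero Q (n := ((D : ℤ) - 1 - m).toNat) (C := C) (fun y hy => ?_) _ (by omega)
        have hy0 : (y : ℂ) ≠ 0 := by exact_mod_cast hy.1.ne'
        have hQ : Q.eval (y : ℂ) = y ^ (D - 1) * wc J (Om h m) y⁻¹ := by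
          rw [hpoly, Finset.mul_sum]
          simp only [Q, Polynomial.eval_finsetSum, Polynomial.eval_monomial]
          refine Finset.sum_congr rfl fun d hd => ?_
          have := Finset.mem_range.1 hd
          have e : (y : ℂ) ^ (D - 1) = y ^ (D - 1 - d) * y ^ d := by
            rw [← pow_add]; congr 1; omega
          rw [e]; push_cast; simp only [a]; rw [inv_pow]; field_simp
        rw [hQ, norm_mul, norm_pow, norm_real, Real.norm_of_nonneg hy.1.le]
        have hyp := hy.1
        calc _ ≤ y ^ (D - 1) * (C * (y⁻¹) ^ J * y ^ (J - m).toNat) := by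
              gcongr; exact hg y hy
          _ = C * y ^ ((D : ℤ) - 1 - m).toNat := by
              have e1 : y ^ (D - 1) = y ^ (D - 1 - J) * y ^ J := by
                rw [← pow_add]; congr 1; omega
              have e2 : y ^ ((D : ℤ) - 1 - m).toNat = y ^ (D - 1 - J) * y ^ (J - m).toNat := by
                rw [← pow_add]; congr 1; omega
              rw [e1, e2, inv_pow]; field_simp
  refine ⟨a m.toNat, fun x => ?_⟩
  rw [hpoly]
  split_ifs with hc
  · rw [Finset.sum_eq_single m.toNat]
    · intro d _ hne
      have := h2 d (by omega)
      simp only [a] at this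
      rw [this, zero_mul]
    · intro hn
      exact absurd (Finset.mem_range.2 (by omega)) hn
  · refine Finset.sum_eq_zero fun d _ => ?_
    have : wc J (nab^[d] (Om h m)) 0 / (d.factorial : ℂ) = 0 := by
      by_cases hdm : (d : ℤ) = m
      · rw [h1 d fun α β hm hα => by omega, zero_div]
      · exact h2 d hdm
    rw [this, zero_mul]

end

/-! ### Slices of a function on the sphere -/

section
variable {E : Type*} [NormedAddCommGroup E] [InnerProductSpace ℂ E]

/-- Holomorphic extension along the line through `q` with direction `v`, in an arbitrary
complex inner product space. -/
def ExtLine (f : E → ℂ) (q v : E) : Prop :=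
  ∃ g : ℂ → ℂ, ContinuousOn g (closure {ζ : ℂ | q + ζ • v ∈ ball (0 : E) 1}) ∧
    DifferentiableOn ℂ g {ζ : ℂ | q + ζ • v ∈ ball (0 : E) 1} ∧
    ∀ ζ : ℂ, q + ζ • v ∈ sphere (0 : E) 1 → g ζ = f (q + ζ • v)

lemma norm_sq_pair {e u : E} (he : ‖e‖ = 1) (hu : ‖u‖ = 1) (heu : inner ℂ e u = 0) (a c : ℂ) :
    ‖a • e + c • u‖ ^ 2 = ‖a‖ ^ 2 + ‖c‖ ^ 2 := by
  have h : inner ℂ (a • e) (c • u) = 0 := by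
    rw [inner_smul_left, inner_smul_right, heu]; simp
  have := norm_add_sq_eq_norm_sq_add_norm_sq_of_inner_eq_zero (𝕜 := ℂ) _ _ h
  rw [norm_smul, norm_smul, he, hu] at this
  nlinarith [this]

/-- Holomorphy along a line through the centre kills the negative Fourier coefficients. -/
lemma fc_neg_of_ext {f : E → ℂ} {v : E} (hv : ‖v‖ = 1) (h : ExtLine f 0 v) {j : ℤ} (hj : j < 0) :
    fc j (fun θ => f (chr 1 θ • v)) = 0 := by
  obtain ⟨g, hc, hd, hs⟩ := h
  have hS : {ζ : ℂ | (0 : E) + ζ • v ∈ ball (0 : E) 1} = ball 0 1 := by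
    ext ζ; simp [norm_smul, hv]
  rw [hS] at hc hd
  rw [closure_ball _ one_ne_zero] at hc
  obtain ⟨k, rfl⟩ : ∃ k : ℕ, j = -(k + 1 : ℕ) := ⟨(-j - 1).toNat, by omega⟩
  have hvan : ∮ z in C(0, 1), g z * z ^ k = 0 :=
    circleIntegral_eq_zero_of_differentiable_on_off_countable zero_le_one countable_empty
      (hc.mul (by fun_prop)) fun z hz => by
        have := (hd.differentiableAt (isOpen_ball.mem_nhds hz.1))
        fun_prop
  rw [circleIntegral] at hvan
  have : ∀ θ : ℝ, deriv (circleMap 0 1) θ • (g (circleMap 0 1 θ) * circleMap 0 1 θ ^ k)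
      = I * (f (chr 1 θ • v) * chr (-(-(k + 1 : ℕ) : ℤ)) θ) := by
    intro θ
    have e : circleMap 0 1 θ = chr 1 θ := by simp [circleMap, chr_one]
    have e2 := hs (chr 1 θ) (by simp [norm_smul, hv])
    rw [zero_add] at e2
    rw [deriv_circleMap, e, e2, neg_neg, chr_natCast, smul_eq_mul]; ring
  simp only [this, intervalIntegral.integral_const_mul, mul_eq_zero, I_ne_zero, false_or] at hvan
  rw [fc, hvan, mul_zero]

/-- The restriction of `f` to the plane spanned by `e` and `u`, in coordinates. -/
def slice (f : E → ℂ) (e u : E) (p : ℂ × ℂ) : ℂ := f (p.1 • e + p.2 • u)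

lemma sphAn_slice {f : E → ℂ} (hf : ∀ z ∈ sphere (0 : E) 1, AnalyticAt ℝ f z) {e u : E}
    (he : ‖e‖ = 1) (hu : ‖u‖ = 1) (heu : inner ℂ e u = 0) : SphAn (slice f e u) := by
  intro p hp
  have h1 : ContDiff ℝ ω (fun p : ℂ × ℂ => p.1 • e + p.2 • u) := by fun_prop
  refine (hf (p.1 • e + p.2 • u) ?_).comp_of_eq h1.contDiffAt.analyticAt rfl
  rw [← norm_sq_pair he hu heu] at hp
  rw [mem_sphere_zero_iff_norm]
  nlinarith [norm_nonneg (p.1 • e + p.2 • u)]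

/-- Lines through the centre, for a slice. -/
lemma slice_neg {f : E → ℂ} (h0 : ∀ v ≠ 0, ExtLine f 0 v) {e u : E}
    (he : ‖e‖ = 1) (hu : ‖u‖ = 1) (heu : inner ℂ e u = 0) {j : ℤ} (hj : j < 0) (ξ : ℂ) :
    fc j (fun θ => GG (slice f e u) (θ, ξ)) = 0 := by
  let v : E := ((wgt ‖ξ‖ : ℂ)⁻¹) • e + (ξ / wgt ‖ξ‖) • u
  have hv : ‖v‖ = 1 := by
    have h1 := norm_sq_pair he hu heu (wgt ‖ξ‖ : ℂ)⁻¹ (ξ / wgt ‖ξ‖)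
    have h2 := sphere_coord 0 ξ
    simp only [chr_zero_right, one_mul, one_div] at h2
    rw [h2] at h1
    have : 0 ≤ ‖v‖ := norm_nonneg _
    simp only [v] at this ⊢
    nlinarith
  rw [← fc_neg_of_ext hv (h0 v (by rintro h; simp [h] at hv)) hj]
  congr 1; funext θ
  simp only [GG, slice, v, smul_add, smul_smul, div_eq_mul_inv, mul_assoc]

/-- The line through `b e` with direction `e + η u` meets the ball in the disc `|z|² + r²|z - b|² < 1`,
where `z` is the coordinate along `e`; Cauchy's theorem on it gives the moment conditions. -/
lemma slice_circle {f : E → ℂ} {e u : E} {b r : ℝ} (hb : ∀ v ≠ 0, ExtLine f ((b : ℂ) • e) v)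
    (he : ‖e‖ = 1) (hu : ‖u‖ = 1) (heu : inner ℂ e u = 0) (hb0 : 0 < b) (hb1 : b < 1)
    (hr0 : 0 < r) (hr1 : r ≤ 1 / 4) {η : ℂ} (hη : ‖η‖ = r) (k : ℕ) :
    ∮ z in C(cc b r, RR b r), slice f e u (z, η * (z - b)) * z ^ k = 0 := by
  have hv : e + η • u ≠ 0 := by
    intro h
    have := norm_sq_pair he hu heu 1 η
    rw [one_smul, h] at this
    simp at this
    nlinarith [sq_nonneg ‖η‖]
  obtain ⟨g, hc, hd, hs⟩ := hb _ hv
  have e1 : ∀ z : ℂ, (b : ℂ) • e + (z - b) • (e + η • u) = z • e + (η * (z - b)) • u := by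
    intro z; module
  have e2 : ∀ z : ℂ, ‖(b : ℂ) • e + (z - b) • (e + η • u)‖ ^ 2 = ‖z‖ ^ 2 + r ^ 2 * ‖z - b‖ ^ 2 := by
    intro z; rw [e1, norm_sq_pair he hu heu, norm_mul, hη]; ring
  have hR := RR_pos hb0 hb1 hr0 hr1
  have hS : {ζ : ℂ | (b : ℂ) • e + ζ • (e + η • u) ∈ ball (0 : E) 1}
      = ball ((cc b r : ℂ) - b) (RR b r) := by
    ext ζ
    have h1 := e2 (ζ + b)
    rw [add_sub_cancel_right] at h1
    rw [mem_ofPred_eq, mem_ball_zero_iff]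
    have h2 := quad_ball hb0 hb1 hr0 hr1 (z := ζ + b)
    rw [add_sub_cancel_right, ← h1] at h2
    rw [← sq_lt_one_iff₀ (norm_nonneg _), h2, mem_ball, mem_ball, dist_eq, dist_eq]
    ring_nf
  rw [hS] at hc hd
  rw [closure_ball _ hR.ne'] at hc
  have hvan : ∮ z in C(cc b r, RR b r), g (z - b) * z ^ k = 0 := by
    refine circleIntegral_eq_zero_of_differentiable_on_off_countable hR.le countable_empty
      ((hc.comp (by fun_prop) fun z hz => ?_).mul (by fun_prop)) fun z hz => ?_
    · rw [mem_closedBall, dist_eq] at hz ⊢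
      convert hz using 2; ring
    · have hz : z - b ∈ ball ((cc b r : ℂ) - b) (RR b r) := by
        have hz := hz.1
        rw [mem_ball, dist_eq] at hz ⊢
        convert hz using 2; ring
      have h1 : DifferentiableAt ℂ (fun z => g (z - b)) z :=
        DifferentiableAt.comp (g := g) z (hd.differentiableAt (isOpen_ball.mem_nhds hz)) (by fun_prop)
      exact h1.mul (by fun_prop)
  rw [← hvan]
  refine circleIntegral.integral_congr hR.le fun z hz => ?_
  have h1 := quad_sphere hb0 hb1 hr0 hr1 hz
  rw [← e2] at h1
  have h2 := hs (z - b) (by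
    rw [mem_sphere_zero_iff_norm]
    nlinarith [norm_nonneg ((b : ℂ) • e + (z - b) • (e + η • u))])
  simp only [h2, e1, slice]

/-- The one-variable analysis applied to the slice of `f` spanned by `e` and `u`. -/
lemma isMon_slice {f : E → ℂ} (hf : ∀ z ∈ sphere (0 : E) 1, AnalyticAt ℝ f z)
    {e u : E} {b : ℝ} (h0 : ∀ v ≠ 0, ExtLine f 0 v) (hb : ∀ v ≠ 0, ExtLine f ((b : ℂ) • e) v)
    (he : ‖e‖ = 1) (hu : ‖u‖ = 1) (heu : inner ℂ e u = 0) (hb0 : 0 < b) (hb1 : b < 1)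
    (m : ℤ) (J : ℕ) : IsMon (slice f e u) m J :=
  isMon (sphAn_slice hf he hu heu) (fun _ hj ξ => slice_neg h0 he hu heu hj ξ) hb0 hb1
    (fun _ hr0 hr1 _ hη k => slice_circle hb he hu heu hb0 hb1 hr0 hr1 hη k) m J

end

/-! ### Homogeneous components -/

section
variable {E : Type*} [NormedAddCommGroup E] [InnerProductSpace ℂ E]

/-- For `‖e‖ = 1`, the orthogonal projection onto the complement of `e`. -/
noncomputable def prj (e : E) : E →L[ℂ] E :=
  ContinuousLinearMap.id ℂ E - (innerSL ℂ e).smulRight e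

lemma prj_apply (e y : E) : prj e y = y - inner ℂ e y • e := rfl

lemma inner_prj {e : E} (he : ‖e‖ = 1) (y : E) : inner ℂ e (prj e y) = 0 := by
  rw [prj_apply, inner_sub_right, inner_smul_right, inner_self_eq_norm_sq_to_K, he]; simp

lemma prj_prj {e : E} (he : ‖e‖ = 1) (y : E) : prj e (prj e y) = prj e y := by
  rw [prj_apply e (prj e y), inner_prj he]; simp

/-- The `j`-th Fourier coefficient of `θ ↦ f (e^{iθ} (e + πy) / √(1 + ‖πy‖²))`, with the weight
`√(1 + ‖πy‖²) ^ j` that makes it a polynomial in `y` when `f` extends holomorphically. -/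
noncomputable def BB (f : E → ℂ) (e : E) (j : ℕ) (y : E) : ℂ :=
  (wgt ‖prj e y‖ : ℂ) ^ j *
    fc j (fun θ => f ((chr 1 θ * (wgt ‖prj e y‖ : ℂ)⁻¹) • (e + prj e y)))

/-- The component of `BB f e j` which is homogeneous of degree `m` under the circle action. -/
noncomputable def cm (f : E → ℂ) (e : E) (j : ℕ) (m : ℤ) (y : E) : ℂ :=
  fc m (fun φ => BB f e j (chr 1 φ • y))

lemma norm_e_add_prj {e : E} (he : ‖e‖ = 1) (y : E) :
    ‖e + prj e y‖ = wgt ‖prj e y‖ := by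
  have := norm_add_sq_eq_norm_sq_add_norm_sq_of_inner_eq_zero (𝕜 := ℂ) _ _ (inner_prj he y)
  rw [he] at this
  rw [wgt, ← Real.sqrt_sq (norm_nonneg (e + prj e y))]
  congr 1; nlinarith

lemma norm_wgt_smul {e : E} (he : ‖e‖ = 1) (θ : ℝ) (y : E) :
    ‖(chr 1 θ * (wgt ‖prj e y‖ : ℂ)⁻¹) • (e + prj e y)‖ = 1 := by
  have h := wgt_pos ‖prj e y‖
  rw [norm_smul, norm_e_add_prj he, norm_mul, norm_chr, norm_inv, norm_real,
    Real.norm_of_nonneg h.le, one_mul, inv_mul_cancel₀ h.ne']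

lemma analyticAt_wgt_prj (e y : E) : AnalyticAt ℝ (fun y => (wgt ‖prj e y‖ : ℂ)) y := by
  have h1 : ContDiff ℝ ω (fun y : E => 1 + ‖prj e y‖ ^ 2) :=
    contDiff_const.add ((contDiff_norm_sq ℂ).comp ((prj e).restrictScalars ℝ).contDiff)
  have h2 : AnalyticAt ℝ (fun y : E => √(1 + ‖prj e y‖ ^ 2)) y :=
    (analyticAt_sqrt (by positivity)).comp_of_eq h1.contDiffAt.analyticAt rfl
  exact (ofRealCLM.analyticAt _).comp h2

lemma analyticAt_BB {f : E → ℂ} (hf : ∀ z ∈ sphere (0 : E) 1, AnalyticAt ℝ f z) {e : E}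
    (he : ‖e‖ = 1) (j : ℕ) (y : E) : AnalyticAt ℝ (BB f e j) y := by
  refine ((analyticAt_wgt_prj e y).pow j).mul (analyticAt_fc
    (G := fun p : ℝ × E => f ((chr 1 p.1 * (wgt ‖prj e p.2‖ : ℂ)⁻¹) • (e + prj e p.2)))
    (fun p => ?_) j y)
  refine (hf _ (mem_sphere_zero_iff_norm.2 (norm_wgt_smul he p.1 p.2))).comp_of_eq ?_ rfl
  have h1 : AnalyticAt ℝ (fun p : ℝ × E => chr 1 p.1) p :=
    (analyticAt_chr 1 p.1).comp analyticAt_fst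
  have h2 : AnalyticAt ℝ (fun p : ℝ × E => (wgt ‖prj e p.2‖ : ℂ)) p :=
    (analyticAt_wgt_prj e p.2).comp analyticAt_snd
  have h3 : AnalyticAt ℝ (fun p : ℝ × E => e + prj e p.2) p :=
    analyticAt_const.add ((((prj e).restrictScalars ℝ).analyticAt _).comp analyticAt_snd)
  exact (h1.mul (h2.inv (wgt_ne _))).smul h3

lemma analyticAt_cm {f : E → ℂ} (hf : ∀ z ∈ sphere (0 : E) 1, AnalyticAt ℝ f z) {e : E}
    (he : ‖e‖ = 1) (j : ℕ) (m : ℤ) (y : E) : AnalyticAt ℝ (cm f e j m) y := by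
  refine analyticAt_fc (G := fun p : ℝ × E => BB f e j (chr 1 p.1 • p.2)) (fun p => ?_) m y
  have h1 : AnalyticAt ℝ (fun p : ℝ × E => chr 1 p.1) p :=
    (analyticAt_chr 1 p.1).comp analyticAt_fst
  exact (analyticAt_BB hf he j _).comp_of_eq (h1.smul analyticAt_snd) rfl

/-- If `πy = ρ u`, then `BB f e j` on the complex line through `y` is computed by the slice. -/
lemma BB_smul (f : E → ℂ) {e u y : E} {ρ : ℝ} (hρ : prj e y = (ρ : ℂ) • u) (hu : ‖u‖ = 1)
    (j : ℕ) (s : ℂ) :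
    BB f e j (s • y) = (wgt ‖s * ρ‖ : ℂ) ^ j * fc j (fun θ => GG (slice f e u) (θ, s * ρ)) := by
  have h1 : prj e (s • y) = (s * ρ) • u := by rw [map_smul, hρ, smul_smul]
  rw [BB, h1, norm_smul, hu, mul_one]
  congr 2; funext θ
  simp only [GG, slice, smul_add, smul_smul, div_eq_mul_inv]
  congr 3; ring

/-- On the real line through `y`, `cm` is a weighted coefficient of a slice. -/
lemma cm_eq_wc {f : E → ℂ} (hf : ∀ z ∈ sphere (0 : E) 1, AnalyticAt ℝ f z) {e u y : E}
    (he : ‖e‖ = 1) (heu : inner ℂ e u = 0) {ρ : ℝ} (hρ : prj e y = (ρ : ℂ) • u)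
    (hu : ‖u‖ = 1) (j : ℕ) (m : ℤ) (x : ℝ) :
    cm f e j m ((x : ℂ) • y) = wc j (Om (slice f e u) m) (x * ρ) := by
  have hh := sphAn_slice hf he hu heu
  rw [wc, fc_Om_eq hh, ← fc_const_mul, cm]
  congr 1; funext φ
  rw [smul_smul, BB_smul f hρ hu]
  have e1 : ‖chr 1 φ * x * ρ‖ = |x * ρ| := by
    rw [mul_assoc, norm_mul, norm_chr, one_mul, ← ofReal_mul, norm_real, Real.norm_eq_abs]
  rw [e1, wgt_abs]
  congr 2; funext θ; congr 2; push_cast; ring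

/-- `cm f e j m` is homogeneous of degree `m`, and vanishes unless `0 ≤ m ≤ j`. -/
lemma cm_homog {f : E → ℂ} (hf : ∀ z ∈ sphere (0 : E) 1, AnalyticAt ℝ f z)
    {e : E} {b : ℝ} (h0 : ∀ v ≠ 0, ExtLine f 0 v) (hb : ∀ v ≠ 0, ExtLine f ((b : ℂ) • e) v)
    (he : ‖e‖ = 1) (hb0 : 0 < b) (hb1 : b < 1) (j : ℕ) (m : ℤ) (y : E) :
    (¬ (0 ≤ m ∧ m ≤ j) → cm f e j m y = 0) ∧
    (0 ≤ m → ∀ l : ℂ, cm f e j m (l • y) = l ^ m.toNat * cm f e j m y) := by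
  -- homogeneity under the real dilations
  have key : (¬ (0 ≤ m ∧ m ≤ j) → cm f e j m y = 0) ∧
      (0 ≤ m → ∀ x : ℝ, cm f e j m ((x : ℂ) • y) = (x : ℂ) ^ m.toNat * cm f e j m y) := by
    by_cases hy : prj e y = 0
    · have h1 : ∀ s : ℂ, BB f e j (s • y) = BB f e j 0 := fun s => by
        simp only [BB, map_smul, hy, smul_zero, map_zero]
      have h2 : ∀ x : ℂ, cm f e j m (x • y) = if m = 0 then BB f e j 0 else 0 := fun x => by
        simp only [cm, smul_smul, h1]
        have h3 := fc_mul_const m (BB f e j 0) (chr 0)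
        have h4 := fc_chr m 0
        rw [h4] at h3
        simpa using h3
      have h3 := h2 1
      rw [one_smul] at h3
      refine ⟨fun hm => ?_, fun hm x => ?_⟩
      · rw [h3, if_neg (by omega)]
      · rw [h2, h3]
        split_ifs with hm0
        · simp [hm0]
        · simp
    · have hn : ‖prj e y‖ ≠ 0 := norm_ne_zero_iff.2 hy
      let u : E := (‖prj e y‖ : ℂ)⁻¹ • prj e y
      have hu : ‖u‖ = 1 := by
        simp only [u, norm_smul, norm_inv, norm_real, norm_norm, inv_mul_cancel₀ hn]
      have heu : inner ℂ e u = 0 := by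
        simp only [u, inner_smul_right, inner_prj he, mul_zero]
      have hρ : prj e y = (‖prj e y‖ : ℂ) • u := by
        simp only [u, smul_smul]
        rw [mul_inv_cancel₀ (by exact_mod_cast hn), one_smul]
      obtain ⟨γ, hγ⟩ := isMon_slice hf h0 hb he hu heu hb0 hb1 m j
      have h2 : ∀ x : ℝ, cm f e j m ((x : ℂ) • y) =
          if 0 ≤ m ∧ m ≤ j then γ * ((x * ‖prj e y‖ : ℝ) : ℂ) ^ m.toNat else 0 := fun x => by
        rw [cm_eq_wc hf he heu hρ hu, hγ]
      have h3 := h2 1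
      rw [ofReal_one, one_smul, one_mul] at h3
      refine ⟨fun hm => ?_, fun hm x => ?_⟩
      · rw [h3, if_neg hm]
      · rw [h2, h3]
        split_ifs
        · push_cast; ring
        · simp
  refine ⟨key.1, fun hm l => ?_⟩
  have hper : Function.Periodic (fun φ => BB f e j (chr 1 φ • ((‖l‖ : ℂ) • y))) (2 * π) := fun φ => by
    simp only [chr_periodic 1 φ]
  have h1 := fc_shift hper m l.arg
  have h2 : l = chr 1 l.arg * ‖l‖ := by
    rw [chr_one, mul_comm]; exact (norm_mul_exp_arg_mul_I l).symm
  have h3 : cm f e j m (l • y) = chr m l.arg * cm f e j m ((‖l‖ : ℂ) • y) := by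
    rw [cm, cm, ← h1]
    congr 1; funext φ
    rw [chr_add_right, smul_smul, smul_smul]
    congr 2
    conv_lhs => rw [h2]
    ring
  rw [h3, key.2 hm]
  obtain ⟨k, rfl⟩ := Int.eq_ofNat_of_zero_le hm
  rw [Int.toNat_natCast, chr_natCast]
  conv_rhs => rw [h2]
  ring

/-- The Fourier expansion of `φ ↦ BB f e j (e^{iφ} y)` at `φ = 0`, which is a finite sum. -/
lemma BB_eq_sum {f : E → ℂ} (hf : ∀ z ∈ sphere (0 : E) 1, AnalyticAt ℝ f z)
    {e : E} {b : ℝ} (h0 : ∀ v ≠ 0, ExtLine f 0 v) (hb : ∀ v ≠ 0, ExtLine f ((b : ℂ) • e) v)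
    (he : ‖e‖ = 1) (hb0 : 0 < b) (hb1 : b < 1) (j : ℕ) (y : E) :
    BB f e j y = ∑ m ∈ Finset.range (j + 1), cm f e j m y := by
  have hB : Continuous (BB f e j) :=
    continuous_iff_continuousAt.2 fun y => (analyticAt_BB hf he j y).continuousAt
  have hz : ∀ m : ℤ, m ∉ (Finset.range (j + 1)).map Nat.castEmbedding →
      fc m (fun φ => BB f e j (chr 1 φ • y)) = 0 := by
    intro m hm
    refine (cm_homog hf h0 hb he hb0 hb1 j m y).1 fun h => hm ?_
    rw [Finset.mem_map]
    exact ⟨m.toNat, Finset.mem_range.2 (by omega), by simp [h.1]⟩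
  have h1 := hasSum_fc (g := fun φ => BB f e j (chr 1 φ • y))
    (fun φ => by simp only [chr_periodic 1 φ])
    (hB.comp ((continuous_chr 1).smul continuous_const)) (summable_of_ne_finset_zero hz) 0
  have h2 : HasSum (fun m : ℤ => fc m (fun φ => BB f e j (chr 1 φ • y)) * chr m 0) _ :=
    hasSum_sum_of_ne_finset_zero (s := (Finset.range (j + 1)).map Nat.castEmbedding)
      fun m hm => by rw [hz m hm, zero_mul]
  have h3 := h1.unique h2
  rw [Finset.sum_map] at h3
  simpa [cm] using h3

end

/-! ### Smooth homogeneous functions are holomorphic -/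

section
variable {E : Type*} [NormedAddCommGroup E] [InnerProductSpace ℂ E]

/-- Forelli's phenomenon for a homogeneous function: a smooth function with
`c (λ y) = λ ^ m * c y` for all complex `λ` is holomorphic. -/
lemma differentiable_of_homog {c : E → ℂ} (hc : ContDiff ℝ (⊤ : ℕ∞) c) (m : ℕ)
    (hom : ∀ (l : ℂ) (y : E), c (l • y) = l ^ m * c y) : Differentiable ℂ c := by
  have hcd : Differentiable ℝ c := hc.differentiable (by simp)
  -- the differential inherits the homogeneity
  have hD : ∀ (l : ℂ) (y v : E), fderiv ℝ c (l • y) (l • v) = l ^ m * fderiv ℝ c y v := by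
    intro l y v
    have h1 : HasFDerivAt (fun y => c (l • y))
        ((fderiv ℝ c (l • y)).comp (l • ContinuousLinearMap.id ℝ E)) y :=
      (hcd (l • y)).hasFDerivAt.comp y ((hasFDerivAt_id y).const_smul l)
    have h2 : HasFDerivAt (fun y => l ^ m * c y) ((l ^ m) • fderiv ℝ c y) y :=
      (hcd y).hasFDerivAt.const_mul (l ^ m)
    simp only [hom] at h1
    have h3 := DFunLike.congr_fun (h1.unique h2) v
    simpa using h3
  -- the antilinear part of the differential in direction `v`
  have key : ∀ y v : E, fderiv ℝ c y v + I * fderiv ℝ c y (I • v) = 0 := by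
    intro y v
    let k : E → ℂ := fun y => fderiv ℝ c y v + I * fderiv ℝ c y (I • v)
    have hk : ContDiff ℝ (⊤ : ℕ∞) k := by
      have h1 : ContDiff ℝ (⊤ : ℕ∞) (fderiv ℝ c) := hc.fderiv_right (by simp)
      exact (h1.clm_apply contDiff_const).add
        (contDiff_const.mul (h1.clm_apply contDiff_const))
    -- the antilinearity of the map `v ↦ k` turns degree `m` into weight `m + 1`
    have hkl : ∀ (l : ℂ) (y : E), (starRingEnd ℂ l) * k (l • y) = l ^ m * k y := by
      intro l y
      have h1 := hD l y v
      have h2 := hD l y (I • v)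
      have e1 : l • v = l.re • v + l.im • (I • v) := by
        conv_lhs => rw [← re_add_im l]
        rw [add_smul, mul_smul, ← Complex.coe_smul, ← Complex.coe_smul]
      have e2 : l • (I • v) = l.re • (I • v) - l.im • v := by
        rw [smul_comm, e1, smul_add, smul_comm I l.im, smul_smul, I_mul_I, smul_comm I l.re,
          neg_smul, one_smul, smul_neg, sub_eq_add_neg]
      rw [e1, map_add, map_smul _ l.re, map_smul _ l.im] at h1
      rw [e2, map_sub, map_smul _ l.re, map_smul _ l.im] at h2
      have e3 : (starRingEnd ℂ) l = l.re - l.im * I := by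
        apply Complex.ext <;> simp
      simp only [k]
      rw [e3]
      simp only [Complex.real_smul] at h1 h2
      linear_combination h1 + I * h2 - (l.im : ℂ) * fderiv ℝ c (l • y) (I • v) * I_sq
    obtain ⟨C, hC, hb⟩ := fc_circle_le (m + 1) (m + 1) (by
      rw [abs_of_nonneg (by positivity)]; push_cast; rfl) (g := fun ξ : ℂ => k (ξ • y))
      (hk.comp (by fun_prop))
    refine norm_le_zero_iff.1 (le_zero_of_le_mul one_pos (C := C) fun r hr => ?_)
    have h1 := hb r ⟨hr.1.le, hr.2⟩
    have h2 : fc (m + 1) (fun φ => k ((r * chr 1 φ : ℂ) • y)) = k ((r : ℂ) • y) := by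
      have h3 : ∀ φ : ℝ, k ((r * chr 1 φ : ℂ) • y) = k ((r : ℂ) • y) * chr (m + 1) φ := by
        intro φ
        have h4 := hkl (chr 1 φ) ((r : ℂ) • y)
        rw [star_chr, smul_smul] at h4
        rw [mul_comm (r : ℂ), chr_add_left, chr_natCast]
        linear_combination chr 1 φ * h4 - k ((chr 1 φ * r : ℂ) • y) * chr_neg_mul 1 φ
      simp only [h3]
      have h4 := fc_const_mul (m + 1) (k ((r : ℂ) • y)) (chr (m + 1))
      rw [h4, fc_chr, if_pos rfl, mul_one]
    rw [h2] at h1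
    have h3 := congrArg norm (hkl r y)
    rw [conj_ofReal, norm_mul, norm_mul, norm_pow, norm_real, Real.norm_of_nonneg hr.1.le] at h3
    have hr0 := hr.1
    have h4 : r ^ m * ‖k y‖ ≤ r ^ m * (C * r ^ 2) := by
      rw [← h3]
      calc _ ≤ r * (C * r ^ (m + 1)) := by gcongr
        _ = _ := by ring
    have h5 := le_of_mul_le_mul_left h4 (by positivity)
    have h6 : r ^ 2 ≤ r := by nlinarith [hr.2]
    calc _ ≤ C * r ^ 2 := h5
      _ ≤ C * r := by gcongr
  intro y
  refine (differentiableAt_iff_restrictScalars ℝ (hcd y)).2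
    ⟨{ toFun := fderiv ℝ c y, map_add' := map_add _, map_smul' := fun l v => ?_,
       cont := (fderiv ℝ c y).continuous }, by ext; rfl⟩
  have e1 : l • v = l.re • v + l.im • (I • v) := by
    conv_lhs => rw [← re_add_im l]
    rw [add_smul, mul_smul, ← Complex.coe_smul, ← Complex.coe_smul]
  rw [e1, map_add, map_smul _ l.re, map_smul _ l.im, RingHom.id_apply, smul_eq_mul, real_smul, real_smul]
  have h := key y v
  conv_rhs => rw [← re_add_im l]
  linear_combination (-I * l.im) * h + (l.im : ℂ) * fderiv ℝ c y (I • v) * I_sq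
end

/-! ### The case where one point is the centre -/

section
variable {E : Type*} [NormedAddCommGroup E] [InnerProductSpace ℂ E]

/-- The homogeneous polynomial of degree `j` agreeing on the sphere with the `j`-th Fourier
coefficient of `f` along the circle action. -/
noncomputable def QQ (f : E → ℂ) (e : E) (j : ℕ) (z : E) : ℂ :=
  ∑ m ∈ Finset.range (j + 1), inner ℂ e z ^ (j - m) * cm f e j m (prj e z)

variable {f : E → ℂ} {e : E} {b : ℝ}

lemma cm_smul (hf : ∀ z ∈ sphere (0 : E) 1, AnalyticAt ℝ f z)
    (h0 : ∀ v ≠ 0, ExtLine f 0 v) (hb : ∀ v ≠ 0, ExtLine f ((b : ℂ) • e) v)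
    (he : ‖e‖ = 1) (hb0 : 0 < b) (hb1 : b < 1) (j m : ℕ) (l : ℂ) (y : E) :
    cm f e j m (l • y) = l ^ m * cm f e j m y := by
  simpa using (cm_homog hf h0 hb he hb0 hb1 j m y).2 (by positivity) l

lemma QQ_smul (hf : ∀ z ∈ sphere (0 : E) 1, AnalyticAt ℝ f z)
    (h0 : ∀ v ≠ 0, ExtLine f 0 v) (hb : ∀ v ≠ 0, ExtLine f ((b : ℂ) • e) v)
    (he : ‖e‖ = 1) (hb0 : 0 < b) (hb1 : b < 1) (j : ℕ) (l : ℂ) (z : E) :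
    QQ f e j (l • z) = l ^ j * QQ f e j z := by
  rw [QQ, QQ, Finset.mul_sum]
  refine Finset.sum_congr rfl fun m hm => ?_
  have hm := Finset.mem_range.1 hm
  rw [map_smul, cm_smul hf h0 hb he hb0 hb1, inner_smul_right, mul_pow]
  have : l ^ j = l ^ (j - m) * l ^ m := by rw [← pow_add]; congr 1; omega
  rw [this]; ring

lemma differentiable_QQ (hf : ∀ z ∈ sphere (0 : E) 1, AnalyticAt ℝ f z)
    (h0 : ∀ v ≠ 0, ExtLine f 0 v) (hb : ∀ v ≠ 0, ExtLine f ((b : ℂ) • e) v)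
    (he : ‖e‖ = 1) (hb0 : 0 < b) (hb1 : b < 1) (j : ℕ) : Differentiable ℂ (QQ f e j) := by
  have h1 : ∀ m : ℕ, Differentiable ℂ (cm f e j m) := fun m =>
    differentiable_of_homog (contDiff_iff_contDiffAt.2 fun y => (analyticAt_cm hf he j m y).contDiffAt)
      m (cm_smul hf h0 hb he hb0 hb1 j m)
  have h2 : Differentiable ℂ (fun z : E => inner ℂ e z) := (innerSL ℂ e).differentiable
  unfold QQ
  exact Differentiable.fun_sum fun m _ =>
    (h2.pow _).mul ((h1 m).comp (prj e).differentiable)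

/-- The value of `QQ` on the sphere, away from the hyperplane `⟨e, v⟩ = 0`. -/
lemma QQ_sphere_aux (hf : ∀ z ∈ sphere (0 : E) 1, AnalyticAt ℝ f z)
    (h0 : ∀ v ≠ 0, ExtLine f 0 v) (hb : ∀ v ≠ 0, ExtLine f ((b : ℂ) • e) v)
    (he : ‖e‖ = 1) (hb0 : 0 < b) (hb1 : b < 1) (j : ℕ) {v : E} (hv : ‖v‖ = 1)
    (hα : inner ℂ e v ≠ 0) : QQ f e j v = fc j (fun θ => f (chr 1 θ • v)) := by
  set α : ℂ := inner ℂ e v with hαd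
  let y : E := α⁻¹ • prj e v
  have hy : prj e y = y := by simp only [y, map_smul, prj_prj he]
  have hv' : prj e v = α • y := by simp only [y, smul_smul, mul_inv_cancel₀ hα, one_smul]
  have hey : e + y = α⁻¹ • v := by
    simp only [y, prj_apply, smul_sub, smul_smul, ← hαd, inv_mul_cancel₀ hα, one_smul]; abel
  have hw : wgt ‖prj e y‖ = ‖α‖⁻¹ := by
    rw [← norm_e_add_prj he, hy, hey, norm_smul, hv, norm_inv, mul_one]
  have hn : (‖α‖ : ℂ) ≠ 0 := by exact_mod_cast norm_ne_zero_iff.2 hα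
  have h1 : QQ f e j v = α ^ j * BB f e j y := by
    rw [BB_eq_sum hf h0 hb he hb0 hb1, QQ, Finset.mul_sum]
    refine Finset.sum_congr rfl fun m hm => ?_
    have hm := Finset.mem_range.1 hm
    rw [hv', cm_smul hf h0 hb he hb0 hb1]
    have : α ^ j = α ^ (j - m) * α ^ m := by rw [← pow_add]; congr 1; omega
    rw [this]; ring
  have h2 : α = chr 1 α.arg * ‖α‖ := by
    rw [chr_one, mul_comm]; exact (norm_mul_exp_arg_mul_I α).symm
  have hper : Function.Periodic (fun θ => f (chr 1 θ • v)) (2 * π) := fun θ => by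
    simp only [chr_periodic 1 θ]
  have h3 := fc_shift hper j (-α.arg)
  rw [h1, BB, hw]
  have h4 : (fun θ => f ((chr 1 θ * (((‖α‖⁻¹ : ℝ)) : ℂ)⁻¹) • (e + prj e y)))
      = fun θ => f (chr 1 (θ + -α.arg) • v) := by
    funext θ
    rw [hy, hey, smul_smul]
    congr 2
    rw [chr_add_right, chr_neg_right, chr_neg_left]
    have := chr_ne_zero 1 α.arg
    conv_lhs => rw [h2]
    simp only [norm_mul, norm_chr, norm_real, norm_norm, one_mul]
    push_cast
    field_simp
  rw [h4, h3, chr_neg_right, chr_neg_left, chr_natCast]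
  have := chr_ne_zero 1 α.arg
  have h5 : α ^ j = chr 1 α.arg ^ j * (‖α‖ : ℂ) ^ j := by
    conv_lhs => rw [h2]
    rw [mul_pow]
  rw [h5]
  push_cast
  rw [inv_pow]
  field_simp

/-- The exceptional hyperplane is reached by continuity. -/
lemma QQ_sphere (hf : ∀ z ∈ sphere (0 : E) 1, AnalyticAt ℝ f z)
    (h0 : ∀ v ≠ 0, ExtLine f 0 v) (hb : ∀ v ≠ 0, ExtLine f ((b : ℂ) • e) v)
    (he : ‖e‖ = 1) (hb0 : 0 < b) (hb1 : b < 1) (j : ℕ) {v : E} (hv : ‖v‖ = 1) :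
    QQ f e j v = fc j (fun θ => f (chr 1 θ • v)) := by
  by_cases hα : inner ℂ e v = 0
  swap
  · exact QQ_sphere_aux hf h0 hb he hb0 hb1 j hv hα
  -- approximate `v` by unit vectors off the hyperplane
  let V : ℝ → E := fun ε => ((wgt ε : ℂ)⁻¹) • (v + (ε : ℂ) • e)
  have hV : ∀ ε, ‖V ε‖ = 1 := by
    intro ε
    have h1 := norm_sq_pair he hv hα ε 1
    rw [one_smul, add_comm, norm_real, norm_one, Real.norm_eq_abs, sq_abs] at h1
    have hw := wgt_pos ε
    simp only [V]
    rw [norm_smul, norm_inv, norm_real, Real.norm_of_nonneg hw.le, inv_mul_eq_one₀ hw.ne']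
    have h2 := wgt_sq ε
    rw [← pow_left_inj₀ hw.le (norm_nonneg _) two_ne_zero]
    linarith
  have hVc : Continuous V := by
    have h1 : Continuous wgt := continuous_iff_continuousAt.2 fun x => (analyticAt_wgt x).continuousAt
    have h2 : Continuous fun ε => (wgt ε : ℂ)⁻¹ :=
      (continuous_ofReal.comp h1).inv₀ wgt_ne
    exact h2.smul (by fun_prop)
  have hin : ∀ ε : ℝ, ε ≠ 0 → inner ℂ e (V ε) ≠ 0 := by
    intro ε hε
    simp only [V, inner_smul_right, inner_add_right, hα, inner_self_eq_norm_sq_to_K, he]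
    simpa using ⟨(wgt_pos ε).ne', hε⟩
  have hc1 : Continuous fun ε => QQ f e j (V ε) :=
    (differentiable_QQ hf h0 hb he hb0 hb1 j).continuous.comp hVc
  have hc2 : Continuous fun ε => fc j (fun θ => f (chr 1 θ • V ε)) := by
    refine continuous_fc (G := fun ε θ => f (chr 1 θ • V ε)) ?_ j
    refine continuous_iff_continuousAt.2 fun p => ?_
    refine ContinuousAt.comp (g := f) (f := fun p : ℝ × ℝ => chr 1 p.2 • V p.1) (hf _ ?_).continuousAt ?_
    · rw [mem_sphere_zero_iff_norm, norm_smul, norm_chr, hV, one_mul]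
    · exact (((continuous_chr 1).comp continuous_snd).smul (hVc.comp continuous_fst)).continuousAt
  have h1 := Continuous.ext_on (dense_compl_singleton (0 : ℝ)) hc1 hc2 fun ε hε =>
    QQ_sphere_aux hf h0 hb he hb0 hb1 j (hV ε) (hin ε hε)
  have h2 := congrFun h1 0
  simpa [V] using h2

/-- Fourier coefficients of `f` along the circle action decay uniformly on the sphere. -/
lemma fc_sphere_decay [ProperSpace E] (hf : ∀ z ∈ sphere (0 : E) 1, AnalyticAt ℝ f z) :
    ∃ C, ∀ v : E, ‖v‖ = 1 → ∀ j : ℤ, ‖fc j (fun θ => f (chr 1 θ • v))‖ ≤ C / (1 + (j : ℝ) ^ 2) := by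
  let A : E →L[ℝ] E := (I • ContinuousLinearMap.id ℂ E).restrictScalars ℝ
  let f₁ : E → ℂ := fun z => fderiv ℝ f z (A z)
  let f₂ : E → ℂ := fun z => fderiv ℝ f₁ z (A z)
  have step : ∀ g : E → ℂ, (∀ z ∈ sphere (0 : E) 1, AnalyticAt ℝ g z) →
      ∀ z ∈ sphere (0 : E) 1, AnalyticAt ℝ (fun z => fderiv ℝ g z (A z)) z := fun g hg z hz =>
    ((ContinuousLinearMap.id ℝ (E →L[ℝ] ℂ)).analyticAt_bilinear _).comp_of_eq
      ((hg z hz).fderiv.prod (A.analyticAt z)) rfl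
  have hf₁ : ∀ z ∈ sphere (0 : E) 1, AnalyticAt ℝ f₁ z := step f hf
  have hf₂ : ∀ z ∈ sphere (0 : E) 1, AnalyticAt ℝ f₂ z := step f₁ hf₁
  have hder : ∀ g : E → ℂ, (∀ z ∈ sphere (0 : E) 1, AnalyticAt ℝ g z) → ∀ v : E, ‖v‖ = 1 → ∀ θ,
      HasDerivAt (fun θ => g (chr 1 θ • v)) (fderiv ℝ g (chr 1 θ • v) (A (chr 1 θ • v))) θ := by
    intro g hg v hv θ
    have h1 : HasDerivAt (fun θ => chr 1 θ • v) (A (chr 1 θ • v)) θ := by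
      convert (hasDerivAt_chr 1 θ).smul_const v using 1
      simp [A, smul_smul]
    exact (hg _ (by simp [norm_smul, hv])).differentiableAt.hasFDerivAt.comp_hasDerivAt θ h1
  have hbd : ∀ g : E → ℂ, (∀ z ∈ sphere (0 : E) 1, AnalyticAt ℝ g z) →
      ∃ C, ∀ z ∈ sphere (0 : E) 1, ‖g z‖ ≤ C := fun g hg =>
    (isCompact_sphere (0 : E) 1).exists_bound_of_continuousOn
      fun z hz => (hg z hz).continuousAt.continuousWithinAt
  obtain ⟨C, hC⟩ := hbd f hf
  obtain ⟨D, hD⟩ := hbd f₂ hf₂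
  have hs : ∀ v : E, ‖v‖ = 1 → ∀ θ, chr 1 θ • v ∈ sphere (0 : E) 1 := fun v hv θ => by
    simp [norm_smul, hv]
  refine ⟨C + D, fun v hv j => ?_⟩
  exact fc_decay (g₁ := fun θ => f₁ (chr 1 θ • v)) (g₂ := fun θ => f₂ (chr 1 θ • v))
    (fun θ => by simp only [chr_periodic 1 θ]) (fun θ => by simp only [chr_periodic 1 θ])
    (hder f hf v hv) (hder f₁ hf₁ v hv)
    (continuous_iff_continuousAt.2 fun θ => (hder f₂ hf₂ v hv θ).continuousAt)
    (fun θ _ => hC _ (hs v hv θ)) (fun θ _ => hD _ (hs v hv θ)) j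

/-- A series of entire functions dominated by a summable sequence on the closed unit ball is
holomorphic in the open ball. -/
lemma differentiableOn_tsum_ball {Q : ℕ → E → ℂ} {u : ℕ → ℝ} (hu : Summable u)
    (hQ : ∀ j, Differentiable ℂ (Q j)) (hb : ∀ j, ∀ z ∈ closedBall (0 : E) 1, ‖Q j z‖ ≤ u j) :
    DifferentiableOn ℂ (fun z => ∑' j, Q j z) (ball 0 1) := by
  intro z hz
  rw [mem_ball_zero_iff] at hz
  set δ := (1 - ‖z‖) / 2 with hδ
  have hδ0 : 0 < δ := by rw [hδ]; linarith
  have hsub : ∀ x ∈ ball z δ, ball x δ ⊆ closedBall (0 : E) 1 := by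
    intro x hx w hw
    rw [mem_ball] at hx hw
    rw [mem_closedBall]
    have h1 := dist_triangle w x 0
    have h2 := dist_triangle x z 0
    rw [dist_zero_right z] at h2
    linarith
  refine (hasFDerivAt_tsum_of_isPreconnected (f' := fun j x => fderiv ℂ (Q j) x)
    (u := fun j => 2 * u j / δ) ((hu.mul_left 2).div_const δ) (isOpen_ball (x := z) (ε := δ))
    (convex_ball z δ).isPreconnected (fun j x _ => (hQ j x).hasFDerivAt) (fun j x hx => ?_)
    (mem_ball_self hδ0) ?_ (mem_ball_self hδ0)).differentiableAt.differentiableWithinAt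
  · refine norm_fderiv_le_div_of_mapsTo_ball (hQ j).differentiableOn (fun w hw => ?_) hδ0
    rw [mem_closedBall, dist_eq_norm]
    have h1 := hb j w (hsub x hx hw)
    have h2 := hb j x (hsub x hx (mem_ball_self hδ0))
    have := norm_sub_le (Q j w) (Q j x)
    linarith
  · exact Summable.of_norm_bounded hu fun j => hb j z (mem_closedBall_zero_iff.2 hz.le)

/-- The result when the two points are the centre `0` and `b e`. -/
theorem ball_extension_centred [ProperSpace E] (hf : ∀ z ∈ sphere (0 : E) 1, AnalyticAt ℝ f z)
    (h0 : ∀ v ≠ 0, ExtLine f 0 v) (hb : ∀ v ≠ 0, ExtLine f ((b : ℂ) • e) v)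
    (he : ‖e‖ = 1) (hb0 : 0 < b) (hb1 : b < 1) :
    ∃ F : E → ℂ, ContinuousOn F (closedBall (0 : E) 1) ∧ DifferentiableOn ℂ F (ball (0 : E) 1) ∧
      ∀ z ∈ sphere (0 : E) 1, F z = f z := by
  obtain ⟨C, hC⟩ := fc_sphere_decay hf
  have hC0 : ∀ j : ℕ, 0 ≤ C / (1 + (j : ℝ) ^ 2) := fun j =>
    (norm_nonneg _).trans (hC e he j)
  have hQb : ∀ j : ℕ, ∀ z ∈ closedBall (0 : E) 1, ‖QQ f e j z‖ ≤ C / (1 + (j : ℝ) ^ 2) := by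
    intro j z hz
    rw [mem_closedBall_zero_iff] at hz
    obtain ⟨v, hv, hzv⟩ : ∃ v : E, ‖v‖ = 1 ∧ z = (‖z‖ : ℂ) • v := by
      by_cases h : z = 0
      · exact ⟨e, he, by simp [h]⟩
      · have hn := norm_ne_zero_iff.2 h
        refine ⟨(‖z‖ : ℂ)⁻¹ • z, ?_, ?_⟩
        · rw [norm_smul, norm_inv, norm_real, norm_norm, inv_mul_cancel₀ hn]
        · rw [smul_smul, mul_inv_cancel₀ (by exact_mod_cast hn), one_smul]
    have h1 := hC v hv j
    rw [← QQ_sphere hf h0 hb he hb0 hb1 j hv] at h1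
    have h2 : ‖z‖ ^ j ≤ 1 := pow_le_one₀ (norm_nonneg _) hz
    rw [hzv, QQ_smul hf h0 hb he hb0 hb1, norm_mul, norm_pow, norm_real, norm_norm]
    calc _ ≤ 1 * ‖QQ f e j v‖ := by gcongr
      _ ≤ _ := by rw [one_mul]; exact_mod_cast h1
  have hd := differentiable_QQ hf h0 hb he hb0 hb1
  refine ⟨fun z => ∑' j : ℕ, QQ f e j z, ?_, ?_, fun z hz => ?_⟩
  · exact continuousOn_tsum (fun j => (hd j).continuous.continuousOn) (summable_nat_sq C) hQb
  · exact differentiableOn_tsum_ball (summable_nat_sq C) hd hQb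
  · rw [mem_sphere_zero_iff_norm] at hz
    have hs : ∀ θ, chr 1 θ • z ∈ sphere (0 : E) 1 := fun θ => by simp [norm_smul, hz]
    have h1 := hasSum_fc_nat (g := fun θ => f (chr 1 θ • z)) (fun θ => by simp only [chr_periodic 1 θ])
      (continuous_iff_continuousAt.2 fun θ => ContinuousAt.comp (g := f) (hf _ (hs θ)).continuousAt
        ((continuous_chr 1).smul continuous_const).continuousAt)
      (hC z hz) (fun j hj => fc_neg_of_ext hz (h0 z (by rintro rfl; simp at hz)) hj) 0
    simp only [chr_zero_right, mul_one, one_smul] at h1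
    rw [← h1.tsum_eq]
    exact tsum_congr fun j => QQ_sphere hf h0 hb he hb0 hb1 j hz

end

/-! ### Automorphisms of the ball and the general case -/

section
variable {E : Type*} [NormedAddCommGroup E] [InnerProductSpace ℂ E]

/-- The constant `√(1 - |a|²)` of the automorphism `aut a`. -/
noncomputable def autS (a : E) : ℝ := √(1 - ‖a‖ ^ 2)

/-- The linear part of the numerator of `aut a`. -/
noncomputable def autL (a : E) : E →L[ℂ] E :=
  (autS a : ℂ) • ContinuousLinearMap.id ℂ E +
    ((1 + autS a : ℂ)⁻¹) • (innerSL ℂ a).smulRight a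

/-- The involutive automorphism of the unit ball exchanging `0` and `a`. -/
noncomputable def aut (a z : E) : E := (1 - inner ℂ a z)⁻¹ • (a - autL a z)

variable {a : E}

lemma autL_apply (a z : E) :
    autL a z = (autS a : ℂ) • z + ((1 + autS a : ℂ)⁻¹ * inner ℂ a z) • a := by
  simp [autL, smul_smul]

lemma autS_pos (ha : ‖a‖ < 1) : 0 < autS a :=
  Real.sqrt_pos.2 (by nlinarith [norm_nonneg a])

lemma autS_sq (ha : ‖a‖ < 1) : autS a ^ 2 = 1 - ‖a‖ ^ 2 :=
  Real.sq_sqrt (by nlinarith [norm_nonneg a])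

lemma autS_sq' (ha : ‖a‖ < 1) : (autS a : ℂ) ^ 2 = 1 - (‖a‖ : ℂ) ^ 2 := by
  exact_mod_cast autS_sq ha

lemma one_add_autS_ne (ha : ‖a‖ < 1) : (1 + autS a : ℂ) ≠ 0 := by
  have := autS_pos ha
  exact_mod_cast (by positivity : 1 + autS a ≠ 0)

lemma inner_autL (ha : ‖a‖ < 1) (z : E) : inner ℂ a (autL a z) = inner ℂ a z := by
  have h1 := one_add_autS_ne ha
  rw [autL_apply, inner_add_right, inner_smul_right, inner_smul_right,
    inner_self_eq_norm_sq_to_K]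
  have h2 := autS_sq' ha
  simp only [coe_algebraMap]
  field_simp
  linear_combination (inner ℂ a z) * h2

lemma autL_self (ha : ‖a‖ < 1) : autL a a = a := by
  have h1 := one_add_autS_ne ha
  have h2 := autS_sq' ha
  rw [autL_apply, inner_self_eq_norm_sq_to_K, ← add_smul]
  convert one_smul ℂ a using 2
  simp only [coe_algebraMap]
  field_simp
  linear_combination h2

lemma autL_autL (ha : ‖a‖ < 1) (z : E) :
    autL a (autL a z) = (autS a : ℂ) ^ 2 • z + inner ℂ a z • a := by
  have h1 := one_add_autS_ne ha
  rw [autL_apply a (autL a z), inner_autL ha, autL_apply a z, smul_add, smul_smul, smul_smul,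
    add_assoc, ← add_smul]
  congr 2
  · ring
  · field_simp; ring

lemma norm_autL_sq (ha : ‖a‖ < 1) (z : E) :
    ‖autL a z‖ ^ 2 = autS a ^ 2 * ‖z‖ ^ 2 + ‖inner ℂ a z‖ ^ 2 := by
  have h1 := one_add_autS_ne ha
  have h2 := autS_sq' ha
  have h : ((‖autL a z‖ ^ 2 : ℝ) : ℂ) = ((autS a ^ 2 * ‖z‖ ^ 2 + ‖inner ℂ a z‖ ^ 2 : ℝ) : ℂ) := by
    have e1 := inner_self_eq_norm_sq_to_K (𝕜 := ℂ) (autL a z)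
    have e2 := inner_self_eq_norm_sq_to_K (𝕜 := ℂ) z
    have e3 : inner ℂ (autL a z) a = inner ℂ z a := by
      rw [← inner_conj_symm, inner_autL ha, inner_conj_symm]
    have e4 : inner ℂ z a * inner ℂ a z = ((‖inner ℂ a z‖ : ℝ) : ℂ) ^ 2 := by
      rw [← inner_conj_symm, ← conj_mul']
    simp only [coe_algebraMap] at e1 e2
    push_cast
    rw [← e1, ← e2, ← e4]
    conv_lhs => rw [autL_apply a z, inner_add_right, inner_smul_right, inner_smul_right, ← autL_apply, e3]
    rw [autL_apply a z, inner_add_left, inner_smul_left, inner_smul_left]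
    simp only [map_mul, map_inv₀, map_add, map_one, conj_ofReal, inner_conj_symm]
    field_simp
    ring
  exact_mod_cast h

lemma norm_inner_lt (ha : ‖a‖ < 1) {z : E} (hz : ‖z‖ ≤ 1) : ‖inner ℂ a z‖ < 1 :=
  lt_of_le_of_lt ((norm_inner_le_norm a z).trans (mul_le_of_le_one_right (norm_nonneg a) hz)) ha

lemma aut_den_ne (ha : ‖a‖ < 1) {z : E} (hz : ‖z‖ ≤ 1) : 1 - inner ℂ a z ≠ 0 := by
  intro h
  have h1 := norm_inner_lt ha hz
  rw [← sub_eq_zero.1 h] at h1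
  simp at h1

/-- The usual identity `1 - |aut a z|² = (1 - |a|²)(1 - |z|²) / |1 - ⟨a, z⟩|²`. -/
lemma norm_aut (ha : ‖a‖ < 1) {z : E} (hz : ‖z‖ ≤ 1) :
    (1 - ‖aut a z‖ ^ 2) * ‖1 - inner ℂ a z‖ ^ 2 = autS a ^ 2 * (1 - ‖z‖ ^ 2) := by
  have hD := norm_ne_zero_iff.2 (aut_den_ne ha hz)
  have h1 : ‖a - autL a z‖ ^ 2 = ‖a‖ ^ 2 - 2 * (inner ℂ a z).re + ‖autL a z‖ ^ 2 := by
    have := @norm_sub_sq ℂ E _ _ _ a (autL a z)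
    rwa [inner_autL ha] at this
  have h2 : ‖1 - inner ℂ a z‖ ^ 2 = 1 - 2 * (inner ℂ a z).re + ‖inner ℂ a z‖ ^ 2 := by
    rw [norm_sq_re_im, norm_sq_re_im (inner ℂ a z)]; simp; ring
  have h3 : ‖aut a z‖ ^ 2 * ‖1 - inner ℂ a z‖ ^ 2 = ‖a - autL a z‖ ^ 2 := by
    rw [aut, norm_smul, norm_inv]; field_simp
  rw [sub_mul, h3, h1, h2, norm_autL_sq ha, autS_sq ha]; ring

lemma aut_mem_ball (ha : ‖a‖ < 1) {z : E} (hz : z ∈ ball (0 : E) 1) : aut a z ∈ ball (0 : E) 1 := by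
  rw [mem_ball_zero_iff] at hz ⊢
  have h := norm_aut ha hz.le
  have h1 : 0 < autS a ^ 2 * (1 - ‖z‖ ^ 2) :=
    mul_pos (pow_pos (autS_pos ha) 2) (by nlinarith [norm_nonneg z])
  rw [← h] at h1
  have := pos_of_mul_pos_left h1 (by positivity)
  nlinarith [norm_nonneg (aut a z)]

lemma aut_mem_sphere (ha : ‖a‖ < 1) {z : E} (hz : z ∈ sphere (0 : E) 1) :
    aut a z ∈ sphere (0 : E) 1 := by
  rw [mem_sphere_zero_iff_norm] at hz ⊢
  have h := norm_aut ha hz.le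
  have hD := norm_ne_zero_iff.2 (aut_den_ne ha hz.le)
  rw [hz, one_pow, sub_self, mul_zero, mul_eq_zero] at h
  have := h.resolve_right (pow_ne_zero 2 hD)
  nlinarith [norm_nonneg (aut a z)]

lemma aut_mem_closedBall (ha : ‖a‖ < 1) {z : E} (hz : z ∈ closedBall (0 : E) 1) :
    aut a z ∈ closedBall (0 : E) 1 := by
  rw [← ball_union_sphere] at hz ⊢
  exact hz.imp (aut_mem_ball ha) (aut_mem_sphere ha)

lemma aut_zero (a : E) : aut a 0 = a := by simp [aut]

lemma aut_aut (ha : ‖a‖ < 1) {z : E} (hz : ‖z‖ ≤ 1) : aut a (aut a z) = z := by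
  have hD := aut_den_ne ha hz
  have hs : (autS a : ℂ) ≠ 0 := by exact_mod_cast (autS_pos ha).ne'
  have h2 := autS_sq' ha
  have h1 : 1 - inner ℂ a (aut a z) = (autS a : ℂ) ^ 2 / (1 - inner ℂ a z) := by
    rw [aut, inner_smul_right, inner_sub_right, inner_autL ha, inner_self_eq_norm_sq_to_K]
    simp only [coe_algebraMap]
    field_simp
    rw [h2]; ring
  have h3 : a - autL a (aut a z) = ((autS a : ℂ) ^ 2 / (1 - inner ℂ a z)) • z := by
    rw [aut, map_smul, map_sub, autL_self ha, autL_autL ha]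
    have e : a = ((1 - inner ℂ a z)⁻¹ * (1 - inner ℂ a z)) • a := by
      rw [inv_mul_cancel₀ hD, one_smul]
    conv_lhs => enter [1]; rw [e]
    rw [div_eq_mul_inv]
    module
  rw [aut, h1, h3, smul_smul, inv_mul_cancel₀ (div_ne_zero (pow_ne_zero 2 hs) hD), one_smul]

lemma continuousOn_aut (ha : ‖a‖ < 1) : ContinuousOn (aut a) (closedBall (0 : E) 1) := by
  intro z hz
  have h1 : ContinuousAt (fun z : E => inner ℂ a z) z := (innerSL ℂ a).continuous.continuousAt
  have hD := aut_den_ne ha (mem_closedBall_zero_iff.1 hz)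
  exact (((continuousAt_const.sub h1).inv₀ hD).smul
    (continuousAt_const.sub (autL a).continuous.continuousAt)).continuousWithinAt

lemma differentiableAt_aut (ha : ‖a‖ < 1) {z : E} (hz : ‖z‖ ≤ 1) :
    DifferentiableAt ℂ (aut a) z := by
  have h1 : DifferentiableAt ℂ (fun z : E => inner ℂ a z) z := (innerSL ℂ a).differentiableAt
  exact (((differentiableAt_const _).sub h1).inv (aut_den_ne ha hz)).smul
    ((differentiableAt_const _).sub (autL a).differentiableAt)

lemma analyticAt_aut (ha : ‖a‖ < 1) {z : E} (hz : ‖z‖ ≤ 1) : AnalyticAt ℝ (aut a) z := by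
  have h1 : AnalyticAt ℝ (fun z : E => inner ℂ a z) z :=
    ((innerSL ℂ a).restrictScalars ℝ).analyticAt z
  exact ((analyticAt_const.sub h1).inv (aut_den_ne ha hz)).smul
    (analyticAt_const.sub (((autL a).restrictScalars ℝ).analyticAt z))

/-- The direction of the image under `aut a` of the line through `q` with direction `v`. -/
noncomputable def autDir (a q v : E) : E :=
  inner ℂ a v • (a - autL a q) - (1 - inner ℂ a q) • autL a v

lemma autDir_ne (ha : ‖a‖ < 1) {q v : E} (hq : ‖q‖ ≤ 1) (hv : v ≠ 0) : autDir a q v ≠ 0 := by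
  intro h
  have hD := aut_den_ne ha hq
  have hs : (autS a : ℂ) ≠ 0 := by exact_mod_cast (autS_pos ha).ne'
  have h1 : inner ℂ a (autDir a q v) = -(autS a : ℂ) ^ 2 * inner ℂ a v := by
    rw [autDir, inner_sub_right, inner_smul_right, inner_smul_right, inner_sub_right,
      inner_autL ha, inner_autL ha, inner_self_eq_norm_sq_to_K, autS_sq' ha]
    simp only [coe_algebraMap]; ring
  rw [h, inner_zero_right] at h1
  have h2 : inner ℂ a v = 0 :=
    (mul_eq_zero.1 h1.symm).resolve_left (neg_ne_zero.2 (pow_ne_zero 2 hs))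
  rw [autDir, h2, zero_smul, zero_sub, neg_eq_zero, autL_apply, h2, mul_zero, zero_smul, add_zero,
    smul_smul] at h
  exact hv ((smul_eq_zero.1 h).resolve_left (mul_ne_zero hD hs))

/-- `aut a` maps lines to lines, by a fractional linear change of parameter. -/
lemma aut_line (ha : ‖a‖ < 1) {q v : E} (hq : ‖q‖ ≤ 1) {ζ : ℂ} (hζ : ‖q + ζ • v‖ ≤ 1) :
    aut a (q + ζ • v) = aut a q +
      (ζ / ((1 - inner ℂ a (q + ζ • v)) * (1 - inner ℂ a q))) • autDir a q v := by
  have hD := aut_den_ne ha hq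
  have hD' := aut_den_ne ha hζ
  rw [← sub_eq_zero, ← smul_eq_zero_iff_right (mul_ne_zero hD' hD), smul_sub, smul_add, aut, aut,
    smul_smul, smul_smul, smul_smul, mul_div_cancel₀ _ (mul_ne_zero hD' hD), autDir,
    mul_inv_cancel_right₀ hD, mul_right_comm, mul_inv_cancel₀ hD', one_mul, map_add, map_smul,
    inner_add_right, inner_smul_right]
  module

/-- Extension along all lines through a point is invariant under `aut a`. -/
lemma extLine_aut (ha : ‖a‖ < 1) {f : E → ℂ} {q : E} (hq : ‖q‖ ≤ 1)
    (h : ∀ v ≠ 0, ExtLine f (aut a q) v) : ∀ v ≠ 0, ExtLine (fun z => f (aut a z)) q v := by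
  intro v hv
  obtain ⟨g, hc, hd, hs⟩ := h _ (autDir_ne ha hq hv)
  let m : ℂ → ℂ := fun ζ => ζ / ((1 - inner ℂ a (q + ζ • v)) * (1 - inner ℂ a q))
  have hm : ∀ ζ, ‖q + ζ • v‖ ≤ 1 → DifferentiableAt ℂ m ζ := by
    intro ζ hζ
    have h1 : DifferentiableAt ℂ (fun ζ : ℂ => inner ℂ a (q + ζ • v)) ζ :=
      (innerSL ℂ a).differentiableAt.comp ζ (f := fun ζ : ℂ => q + ζ • v) (by fun_prop)
    exact differentiableAt_id.div (((differentiableAt_const _).sub h1).mul (differentiableAt_const _))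
      (mul_ne_zero (aut_den_ne ha hζ) (aut_den_ne ha hq))
  have hmaps : MapsTo m {ζ : ℂ | q + ζ • v ∈ ball (0 : E) 1}
      {ζ : ℂ | aut a q + ζ • autDir a q v ∈ ball (0 : E) 1} := by
    intro ζ hζ
    have hζ' : ‖q + ζ • v‖ ≤ 1 := (mem_ball_zero_iff.1 hζ).le
    have := aut_mem_ball ha hζ
    rwa [aut_line ha hq hζ'] at this
  have hcl : closure {ζ : ℂ | q + ζ • v ∈ ball (0 : E) 1} ⊆ {ζ : ℂ | ‖q + ζ • v‖ ≤ 1} := by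
    refine closure_minimal (fun ζ hζ => (mem_ball_zero_iff.1 hζ).le) ?_
    exact isClosed_le (by fun_prop) continuous_const
  have hmc : ContinuousOn m (closure {ζ : ℂ | q + ζ • v ∈ ball (0 : E) 1}) := fun ζ hζ =>
    (hm ζ (hcl hζ)).continuousAt.continuousWithinAt
  refine ⟨fun ζ => g (m ζ), hc.comp hmc (hmaps.closure_of_continuousOn hmc), ?_, fun ζ hζ => ?_⟩
  · exact hd.comp (fun ζ hζ => (hm ζ (mem_ball_zero_iff.1 hζ).le).differentiableWithinAt) hmaps
  · have e := aut_line ha hq (mem_sphere_zero_iff_norm.1 hζ).le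
    have h1 := aut_mem_sphere ha hζ
    rw [e] at h1
    simp only [m, hs _ h1, e]

/-- The result for two arbitrary distinct points of the ball, by moving the first to `0`. -/
theorem ball_extension_general [ProperSpace E] {f : E → ℂ}
    (hf : ∀ z ∈ sphere (0 : E) 1, AnalyticAt ℝ f z) {z₀ w₀ : E} (hz₀ : ‖z₀‖ < 1) (hw₀ : ‖w₀‖ < 1)
    (hzw : z₀ ≠ w₀) (hz : ∀ v ≠ 0, ExtLine f z₀ v) (hw : ∀ v ≠ 0, ExtLine f w₀ v) :
    ∃ F : E → ℂ, ContinuousOn F (closedBall (0 : E) 1) ∧ DifferentiableOn ℂ F (ball (0 : E) 1) ∧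
      ∀ z ∈ sphere (0 : E) 1, F z = f z := by
  set w := aut z₀ w₀ with hwd
  have hw1 : ‖w‖ < 1 := mem_ball_zero_iff.1 (aut_mem_ball hz₀ (mem_ball_zero_iff.2 hw₀))
  have hww : aut z₀ w = w₀ := aut_aut hz₀ hw₀.le
  have hw0 : w ≠ 0 := by
    intro h
    rw [h, aut_zero] at hww
    exact hzw hww
  have hn : ‖w‖ ≠ 0 := norm_ne_zero_iff.2 hw0
  have hwe : (‖w‖ : ℂ) • ((‖w‖ : ℂ)⁻¹ • w) = w := by
    rw [smul_smul, mul_inv_cancel₀ (by exact_mod_cast hn), one_smul]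
  obtain ⟨F, hFc, hFd, hFs⟩ := ball_extension_centred (f := fun z => f (aut z₀ z))
    (e := (‖w‖ : ℂ)⁻¹ • w) (b := ‖w‖)
    (fun z hz => (hf _ (aut_mem_sphere hz₀ hz)).comp_of_eq
      (analyticAt_aut hz₀ (mem_sphere_zero_iff_norm.1 hz).le) rfl)
    (extLine_aut hz₀ (by simp) (by rwa [aut_zero]))
    (by rw [hwe]; exact extLine_aut hz₀ hw1.le (by rwa [hww]))
    (by rw [norm_smul, norm_inv, norm_real, norm_norm, inv_mul_cancel₀ hn])
    (norm_pos_iff.2 hw0) hw1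
  refine ⟨fun z => F (aut z₀ z), hFc.comp (continuousOn_aut hz₀) fun z => aut_mem_closedBall hz₀,
    hFd.comp (fun z hz => (differentiableAt_aut hz₀ (mem_ball_zero_iff.1 hz).le).differentiableWithinAt)
      fun z => aut_mem_ball hz₀, fun z hz => ?_⟩
  show F (aut z₀ z) = f z
  rw [hFs _ (aut_mem_sphere hz₀ hz), aut_aut hz₀ (mem_sphere_zero_iff_norm.1 hz).le]

end

/-- **Testing analyticity on the ball by the lines through two interior points.**
If a real-analytic function on the unit sphere extends holomorphically along every
complex affine line through either of two distinct points of the ball, then it extends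
holomorphically to the whole ball. -/
theorem ball_extension_lines_through_two_points
    {n : ℕ} (hn : 2 ≤ n)
    (f : EuclideanSpace ℂ (Fin n) → ℂ)
    (V : Set (EuclideanSpace ℂ (Fin n))) (hV : IsOpen V)
    (hsV : sphere (0 : EuclideanSpace ℂ (Fin n)) 1 ⊆ V) (hf : AnalyticOnNhd ℝ f V)
    (z₀ w₀ : EuclideanSpace ℂ (Fin n))
    (hz₀ : z₀ ∈ ball (0 : EuclideanSpace ℂ (Fin n)) 1)
    (hw₀ : w₀ ∈ ball (0 : EuclideanSpace ℂ (Fin n)) 1) (hzw : z₀ ≠ w₀)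
    (hext : ∀ q ∈ ({z₀, w₀} : Set (EuclideanSpace ℂ (Fin n))),
      ∀ v : EuclideanSpace ℂ (Fin n), v ≠ 0 → ExtendsAlongLine f q v) :
    ∃ F : EuclideanSpace ℂ (Fin n) → ℂ,
      ContinuousOn F (closedBall (0 : EuclideanSpace ℂ (Fin n)) 1) ∧
      DifferentiableOn ℂ F (ball (0 : EuclideanSpace ℂ (Fin n)) 1) ∧
      ∀ z ∈ sphere (0 : EuclideanSpace ℂ (Fin n)) 1, F z = f z := by
  exact ball_extension_general (fun z hz => hf z (hsV hz)) (mem_ball_zero_iff.1 hz₀)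
    (mem_ball_zero_iff.1 hw₀) hzw (hext z₀ (by simp)) (hext w₀ (by simp))
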